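/- Let G be a cubic graph. Then there exists a map f: E(G) → E(S) such that |V(f)| ≥ (4/5)·|V(G)|, and moreover for every vertex v ∈ V(G) \ V(f) there exist two distinct edges e, e' ∈ ∂_G(v) with f(e) = f(e'). -/

import Mathlib

open scoped Classical

/-- A finite undirected multigraph (possibly with loops and parallel edges),
given by a vertex type, an edge type, and an endpoints map. -/
structure Multigraph where
  V : Type
  E : Type
  [fintV : Fintype V]
  [fintE : Fintype E]
  [decV : DecidableEq V]
  [decE : DecidableEq E]
  ends : E → Sym2 V

namespace Multigraph

attribute [instance] Multigraph.fintV Multigraph.fintE Multigraph.decV Multigraph.decE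

variable (G : Multigraph)

/-- The number of times `v` occurs as an endpoint of `e` (2 for a loop at `v`). -/
def incCount (v : G.V) (e : G.E) : ℕ :=
  if G.ends e = Sym2.diag v then 2 else if v ∈ G.ends e then 1 else 0

/-- Degree of a vertex (a loop contributes 2). -/
def degree (v : G.V) : ℕ := ∑ e : G.E, G.incCount v e

/-- The set `∂_G(v)` of edges incident to `v`. -/
def star (v : G.V) : Finset G.E := Finset.univ.filter fun e => v ∈ G.ends e

/-- No loops. -/
def Loopless : Prop := ∀ e : G.E, ¬ (G.ends e).IsDiag

/-- A cubic graph: loopless and 3-regular (parallel edges allowed). -/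
def Cubic : Prop := G.Loopless ∧ ∀ v : G.V, G.degree v = 3

/-- A cubic pseudo-graph: 3-regular, loops and parallel edges allowed. -/
def CubicPseudo : Prop := ∀ v : G.V, G.degree v = 3

/-- A simple graph: no loops and no parallel edges. -/
def Simple : Prop := G.Loopless ∧ ∀ e e' : G.E, G.ends e = G.ends e' → e = e'

/-- Two edges are adjacent if they are distinct and share an endpoint. -/
def EdgeAdj (e e' : G.E) : Prop :=
  e ≠ e' ∧ ∃ v : G.V, v ∈ G.ends e ∧ v ∈ G.ends e'

/-- A matching: a set of pairwise non-adjacent edges. -/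
def IsMatching (M : Set G.E) : Prop :=
  ∀ e ∈ M, ∀ e' ∈ M, e ≠ e' → ¬ ∃ v : G.V, v ∈ G.ends e ∧ v ∈ G.ends e'

/-- A perfect matching: a matching covering every vertex. -/
def IsPerfectMatching (M : Set G.E) : Prop :=
  G.IsMatching M ∧ ∀ v : G.V, ∃ e ∈ M, v ∈ G.ends e

/-- Degree of `v` within the spanning subgraph with edge set `A`. -/
noncomputable def degIn (A : Set G.E) (v : G.V) : ℕ :=
  ∑ e : G.E, if e ∈ A then G.incCount v e else 0

/-- `A` is the edge set of a `k`-factor: a spanning `k`-regular subgraph. -/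
def IsKFactor (k : ℕ) (A : Set G.E) : Prop := ∀ v : G.V, G.degIn A v = k

/-- `A` is the edge set of an even subgraph. -/
def EvenSubgraph (A : Set G.E) : Prop := ∀ v : G.V, Even (G.degIn A v)

/-- Reachability using only edges from `A`. -/
def Reach (A : Set G.E) : G.V → G.V → Prop :=
  Relation.ReflTransGen fun a b => ∃ e ∈ A, G.ends e = s(a, b)

/-- Connectedness. -/
def Connected : Prop := ∀ u v : G.V, G.Reach Set.univ u v

/-- A bridge: an edge whose removal disconnects its endpoints. -/
def IsBridge (e : G.E) : Prop :=
  ∀ u w : G.V, G.ends e = s(u, w) → ¬ G.Reach {e' | e' ≠ e} u w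

/-- The chromatic index: least number of colors of a proper edge coloring. -/
noncomputable def chromaticIndex : ℕ :=
  sInf {n | ∃ c : G.E → Fin n, ∀ e e', G.EdgeAdj e e' → c e ≠ c e'}

/-- A triangle on distinct vertices `u, v, w` with edges `e₁, e₂, e₃`. -/
def IsTriangle (e₁ e₂ e₃ : G.E) (u v w : G.V) : Prop :=
  u ≠ v ∧ v ≠ w ∧ u ≠ w ∧
    G.ends e₁ = s(u, v) ∧ G.ends e₂ = s(v, w) ∧ G.ends e₃ = s(u, w)

/-- Triangle-freeness. -/
def TriangleFree : Prop :=
  ¬ ∃ (e₁ e₂ e₃ : G.E) (u v w : G.V), G.IsTriangle e₁ e₂ e₃ u v w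

/-- An isomorphism of multigraphs. -/
structure Iso (G H : Multigraph) where
  vEquiv : G.V ≃ H.V
  eEquiv : G.E ≃ H.E
  ends_map : ∀ e : G.E, H.ends (eEquiv e) = (G.ends e).map vEquiv

/-- `G` and `H` are isomorphic. -/
def IsIsomorphicTo (G H : Multigraph) : Prop := Nonempty (Iso G H)

/-- An `H`-coloring of `G`: `f(∂_G(x)) = ∂_H(y)` for every vertex `x` of `G`,
some vertex `y` of `H`. -/
def IsHColoring (G H : Multigraph) (f : G.E → H.E) : Prop :=
  ∀ x : G.V, ∃ y : H.V, (G.star x).image f = H.star y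

/-- The set `V(f)` of vertices of `G` satisfying the `H`-coloring condition under `f`. -/
def colVerts (G H : Multigraph) (f : G.E → H.E) : Set G.V :=
  {x : G.V | ∃ y : H.V, (G.star x).image f = H.star y}

/-- The incidence multiset of a vertex: each incident edge with its multiplicity
(a loop occurs twice). -/
noncomputable def incMultiset (v : G.V) : Multiset G.E :=
  ∑ e : G.E, (G.incCount v e) • ({e} : Multiset G.E)

end Multigraph

/-- The Petersen graph. -/
def Petersen : Multigraph where
  V := Fin 10
  E := {p : Sym2 (Fin 10) //
    p ∈ ({s(0,1), s(1,2), s(2,3), s(3,4), s(4,0),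
          s(0,5), s(1,6), s(2,7), s(3,8), s(4,9),
          s(5,7), s(7,9), s(9,6), s(6,8), s(8,5)} : Finset (Sym2 (Fin 10)))}
  ends := Subtype.val

/-- The Sylvester graph `S` on 10 vertices: a central vertex 0 joined by three
bridges to three end-blocks; each end-block is a 3-vertex multigraph whose two
non-root vertices are joined by a pair of parallel edges. -/
def SylvesterS : Multigraph where
  V := Fin 10
  E := Fin 15
  ends := ![s(0,1), s(1,2), s(1,3), s(2,3), s(2,3),
            s(0,4), s(4,5), s(4,6), s(5,6), s(5,6),
            s(0,7), s(7,8), s(7,9), s(8,9), s(8,9)]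

/-- The Sylvester simple graph `S₁₆` on 16 vertices: central vertex 0 joined by
bridges to three 5-vertex end-blocks with edges
(v1,v2),(v1,v3),(v1,v4),(v2,v3),(v2,v4),(v3,v5),(v4,v5). -/
def Sylvester16 : Multigraph where
  V := Fin 16
  E := {p : Sym2 (Fin 16) //
    p ∈ ({s(1,2), s(1,3), s(1,4), s(2,3), s(2,4), s(3,5), s(4,5), s(0,5),
          s(6,7), s(6,8), s(6,9), s(7,8), s(7,9), s(8,10), s(9,10), s(0,10),
          s(11,12), s(11,13), s(11,14), s(12,13), s(12,14), s(13,15), s(14,15),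
          s(0,15)} : Finset (Sym2 (Fin 16)))}
  ends := Subtype.val

/-- The graph `S'` on 10 vertices: two 5-vertex blocks, each consisting of a
triangle v1v2v3 together with edges (v1,v4),(v2,v4),(v3,v5),(v4,v5), joined by
a bridge between the two degree-2 vertices. -/
def Sprime : Multigraph where
  V := Fin 10
  E := {p : Sym2 (Fin 10) //
    p ∈ ({s(0,1), s(0,2), s(1,2), s(0,3), s(1,3), s(2,4), s(3,4),
          s(5,6), s(5,7), s(6,7), s(5,8), s(6,8), s(7,9), s(8,9),
          s(4,9)} : Finset (Sym2 (Fin 10)))}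
  ends := Subtype.val

/-- The Sylvester pseudo-graph `S₄` on 4 vertices: a central vertex 0 joined to
vertices 1, 2, 3 (edges `a = 0`, `b = 1`, `c = 2`), each of which carries a loop
(`a' = 3`, `b' = 4`, `c' = 5`). -/
def S4 : Multigraph where
  V := Fin 4
  E := Fin 6
  ends := ![s(0,1), s(0,2), s(0,3), s(1,1), s(2,2), s(3,3)]

/-!
A colouring extends over a triangle without parallel edges from the contracted graph, with at most
one bad vertex if the contracted vertex is bad and none if it is good; so assume that there are no
such triangles. Cutting `G` at its bridges leaves single vertices and bridgeless pieces. Replacing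
each vertex of a piece at a bridge by two vertices joined by parallel edges makes the piece cubic
and bridgeless, and Petersen's theorem yields an even subgraph `F` of the piece which covers every
vertex not at a bridge, and covers or misses a prescribed vertex at a bridge.

Number the colours as in `SylvesterS`: `0`, `5`, `10` are the bridges, `1`, `2` the edges at the
root of an end-block, `3`, `4` its double edge. Either `F` takes `3`, `4` alternately and the other
edges of the piece `1`, `2`, with bridges `1` at vertices of `F` and `0` at the vertices missed by
`F`, which become good; or `F` takes `5`, `10` alternately and all other edges `0`, except for a
bridge prescribed to have colour `1`, and the missed vertices become bad. Apart from this only one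
vertex on each odd cycle of `F` is bad, and without triangles such a cycle has at least five.

The exception is a piece which is a triangle with a double edge: one of its three vertices is bad
if its bridge has colour `1` or `2`, none if the colour is `0`. When so many of these pieces hang at
vertices of `F` that the first colouring exceeds the average of one fifth, the second one does not.
Finally, the symmetries of `S` extend what is shown for bridges of colours `0`, `1` to all colours.
-/

theorem ncard_add_two_le_ncard_oddComponents {V : Type*} [Fintype V] {H : SimpleGraph V}
    (heven : Even (Fintype.card V)) {A : Set V} (hA : H.IsTutteViolator A) :
    A.ncard + 2 ≤ ((⊤ : H.Subgraph).deleteVerts A).coe.oddComponents.ncard := by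
  have hparity := ((⊤ : H.Subgraph).deleteVerts A).coe.odd_ncard_oddComponents
  have hcard : Nat.card ((⊤ : H.Subgraph).deleteVerts A).verts + A.ncard = Fintype.card V := by
    have hverts : ((⊤ : H.Subgraph).deleteVerts A).verts = Aᶜ := by ext v; simp
    rw [Nat.card_coe_set_eq, hverts, add_comm, Set.ncard_add_ncard_compl,
      Nat.card_eq_fintype_card]
  rw [← hcard, Nat.even_iff] at heven
  rw [Nat.odd_iff, Nat.odd_iff] at hparity
  unfold SimpleGraph.IsTutteViolator at hA
  omega

theorem exists_isPerfectMatching_of_card_le {V : Type*} [Fintype V] (H : SimpleGraph V)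
    (heven : Even (Fintype.card V))
    (hK : ∀ (A : Finset V) (K : Finset (Finset V)), (K : Set (Finset V)).PairwiseDisjoint id →
      (∀ D ∈ K, Disjoint D A) →
      (∀ D ∈ K, ∀ x ∈ D, ∀ y ∉ A, H.Adj x y → y ∈ D) →
      (∀ D ∈ K, Odd D.card) → K.card ≤ A.card + 1) :
    ∃ M : H.Subgraph, M.IsPerfectMatching := by
  rw [SimpleGraph.tutte]
  intro A hA
  have hcard := ncard_add_two_le_ncard_oddComponents heven hA
  set W := ((⊤ : H.Subgraph).deleteVerts A) with hW
  have hverts : ∀ v, v ∈ W.verts ↔ v ∉ A := fun v => by simp [hW]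
  let support : W.coe.ConnectedComponent → Finset V := fun c =>
    (Subtype.val '' c.supp).toFinite.toFinset
  have hmem : ∀ c v, v ∈ support c ↔ ∃ h : v ∈ W.verts, W.coe.connectedComponentMk ⟨v, h⟩ = c := by
    intro c v
    simp [support, SimpleGraph.ConnectedComponent.mem_supp_iff]
  have hinj : support.Injective := by
    intro c c' h
    induction c using SimpleGraph.ConnectedComponent.ind with
    | _ v => exact ((hmem c' v).1 (h ▸ (hmem _ v).2 ⟨v.2, rfl⟩)).2
  have hfin := W.coe.oddComponents.toFinite
  have hle := hK A.toFinset (hfin.toFinset.image support) ?_ ?_ ?_ ?_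
  · rw [Finset.card_image_of_injective _ hinj, ← Set.ncard_eq_toFinset_card _ hfin,
      ← Set.ncard_eq_toFinset_card'] at hle
    omega
  · simp only [Set.PairwiseDisjoint, Set.Pairwise, Finset.mem_coe, Finset.forall_mem_image]
    intro c _ c' _ hne
    refine Finset.disjoint_left.2 fun v hv hv' => hne ?_
    rw [← ((hmem c v).1 hv).2, ← ((hmem c' v).1 hv').2]
  · refine Finset.forall_mem_image.2 fun c _ => Finset.disjoint_left.2 fun v hv => ?_
    simpa using (hverts v).1 ((hmem c v).1 hv).1
  · refine Finset.forall_mem_image.2 fun c _ x hx y hy hxy => ?_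
    obtain ⟨hxW, rfl⟩ := (hmem c x).1 hx
    have hyA : y ∉ A := by simpa using hy
    refine (hmem _ y).2 ⟨(hverts y).2 hyA, ?_⟩
    rw [SimpleGraph.ConnectedComponent.eq]
    refine SimpleGraph.Adj.reachable ?_
    rw [SimpleGraph.Subgraph.coe_adj]
    exact SimpleGraph.Subgraph.deleteVerts_adj.2
      ⟨trivial, hyA, trivial, (hverts x).1 hxW, hxy.symm⟩
  · refine Finset.forall_mem_image.2 fun c hc => ?_
    have hodd : Odd c.supp.ncard := by simpa [SimpleGraph.oddComponents] using hc
    rwa [← Set.ncard_eq_toFinset_card, Set.ncard_image_of_injective _ Subtype.val_injective]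

namespace Multigraph

/-! ### Edge cuts, components and partial sums -/

section Cuts

variable {G : Multigraph}

/-- The edge cut `∂(X)`: the edges with exactly one end in `X`. -/
def boundary (X : Finset G.V) : Finset G.E :=
  Finset.univ.filter fun e => ∃ u ∈ X, ∃ v ∉ X, G.ends e = s(u, v)

/-- The edges of the subgraph induced on `X`. -/
def innerEdges (X : Finset G.V) : Finset G.E :=
  Finset.univ.filter fun e => ∀ v ∈ G.ends e, v ∈ X

theorem mem_star {v : G.V} {e : G.E} : e ∈ G.star v ↔ v ∈ G.ends e := by
  simp [star]

theorem mem_boundary {X : Finset G.V} {e : G.E} :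
    e ∈ boundary X ↔ ∃ u ∈ X, ∃ v ∉ X, G.ends e = s(u, v) := by
  simp [boundary]

theorem mem_innerEdges {X : Finset G.V} {e : G.E} :
    e ∈ innerEdges X ↔ ∀ v ∈ G.ends e, v ∈ X := by
  simp [innerEdges]

theorem mem_boundary_iff {X : Finset G.V} {e : G.E} {u v : G.V} (he : G.ends e = s(u, v)) :
    e ∈ boundary X ↔ (u ∈ X ∧ v ∉ X) ∨ (v ∈ X ∧ u ∉ X) := by
  rw [mem_boundary]
  constructor
  · rintro ⟨x, hx, y, hy, hxy⟩
    rw [he, Sym2.eq_iff] at hxy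
    rcases hxy with ⟨rfl, rfl⟩ | ⟨rfl, rfl⟩ <;> tauto
  · rintro (⟨hu, hv⟩ | ⟨hv, hu⟩)
    · exact ⟨u, hu, v, hv, he⟩
    · exact ⟨v, hv, u, hu, he.trans Sym2.eq_swap⟩

theorem mem_innerEdges_iff {X : Finset G.V} {e : G.E} {u v : G.V} (he : G.ends e = s(u, v)) :
    e ∈ innerEdges X ↔ u ∈ X ∧ v ∈ X := by
  rw [mem_innerEdges, he, Sym2.ball]

theorem mem_star_iff {e : G.E} {u v w : G.V} (he : G.ends e = s(u, v)) :
    e ∈ G.star w ↔ w = u ∨ w = v := by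
  rw [mem_star, he, Sym2.mem_iff]

theorem Loopless.exists_ends (hl : G.Loopless) (e : G.E) : ∃ u v, u ≠ v ∧ G.ends e = s(u, v) := by
  have hdiag := hl e
  revert hdiag
  induction G.ends e using Sym2.ind with
  | _ u v => exact fun h => ⟨u, v, by simpa using h, rfl⟩

theorem Loopless.exists_ends_of_mem_star (hl : G.Loopless) {e : G.E} {u : G.V}
    (hu : e ∈ G.star u) : ∃ v, u ≠ v ∧ G.ends e = s(u, v) := by
  obtain ⟨x, y, hxy, he⟩ := hl.exists_ends e
  rcases (mem_star_iff he).1 hu with rfl | rfl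
  · exact ⟨y, hxy, he⟩
  · exact ⟨x, hxy.symm, he.trans Sym2.eq_swap⟩

theorem Loopless.degree_eq_card_star (hl : G.Loopless) (v : G.V) :
    G.degree v = (G.star v).card := by
  rw [degree, star, Finset.card_filter]
  refine Finset.sum_congr rfl fun e _ => ?_
  have hne : G.ends e ≠ Sym2.diag v := fun h => hl e (h ▸ Sym2.diag_isDiag v)
  simp [incCount, hne]

theorem Cubic.card_star (hG : G.Cubic) (v : G.V) : (G.star v).card = 3 := by
  rw [← hG.1.degree_eq_card_star, hG.2 v]

theorem Loopless.cubic (hl : G.Loopless) (h : ∀ v, (G.star v).card = 3) : G.Cubic :=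
  ⟨hl, fun v => (hl.degree_eq_card_star v).trans (h v)⟩

theorem Loopless.mem_innerEdges_or_mem_boundary {X : Finset G.V} (hl : G.Loopless) {v : G.V}
    (hv : v ∈ X) {e : G.E} (he : e ∈ G.star v) : e ∈ innerEdges X ∨ e ∈ boundary X := by
  obtain ⟨w, -, hvw⟩ := hl.exists_ends_of_mem_star he
  rw [mem_innerEdges_iff hvw, mem_boundary_iff hvw]
  tauto

theorem disjoint_innerEdges_boundary (X : Finset G.V) : Disjoint (innerEdges X) (boundary X) := by
  rw [Finset.disjoint_left]
  intro e hinner hbd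
  obtain ⟨u, -, v, hv, he⟩ := mem_boundary.1 hbd
  exact hv ((mem_innerEdges_iff he).1 hinner).2

theorem Loopless.sum_mem_star (hl : G.Loopless) {M : Type*} [AddCommMonoid M] (X : Finset G.V)
    (e : G.E) (a : M) :
    ∑ v ∈ X, (if e ∈ G.star v then a else 0) =
      (if e ∈ boundary X then a else 0) + 2 • (if e ∈ innerEdges X then a else 0) := by
  obtain ⟨u, v, huv, he⟩ := hl.exists_ends e
  have hstar : ∀ w, (if e ∈ G.star w then a else 0) =
      (if w = u then a else 0) + (if w = v then a else 0) := by
    intro w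
    simp only [mem_star_iff he]
    rcases eq_or_ne w u with rfl | hwu
    · simp [huv]
    · simp [hwu]
  simp_rw [hstar, Finset.sum_add_distrib, Finset.sum_ite_eq', mem_boundary_iff he,
    mem_innerEdges_iff he]
  by_cases hu : u ∈ X <;> by_cases hv : v ∈ X <;> simp [hu, hv, two_nsmul]

theorem Loopless.sum_sum_inter_star (hl : G.Loopless) {M : Type*} [AddCommMonoid M]
    (X : Finset G.V) (L : Finset G.E) (c : G.E → M) :
    ∑ v ∈ X, ∑ e ∈ L ∩ G.star v, c e =
      ∑ e ∈ L ∩ boundary X, c e + 2 • ∑ e ∈ L ∩ innerEdges X, c e := by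
  simp_rw [← Finset.sum_ite_mem]
  rw [Finset.sum_comm, Finset.smul_sum, ← Finset.sum_add_distrib]
  exact Finset.sum_congr rfl fun e _ => hl.sum_mem_star X e (c e)

theorem Loopless.sum_card_inter_star (hl : G.Loopless) (X : Finset G.V) (L : Finset G.E) :
    ∑ v ∈ X, (L ∩ G.star v).card =
      (L ∩ boundary X).card + 2 * (L ∩ innerEdges X).card := by
  simp only [Finset.card_eq_sum_ones]
  rw [hl.sum_sum_inter_star X L fun _ => 1, smul_eq_mul]

theorem Cubic.three_mul_card (hG : G.Cubic) (X : Finset G.V) :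
    3 * X.card = (boundary X).card + 2 * (innerEdges X).card := by
  have hsum := hG.1.sum_card_inter_star X Finset.univ
  simp only [Finset.univ_inter, hG.card_star, Finset.sum_const, smul_eq_mul] at hsum
  omega

theorem Cubic.odd_card_boundary_iff (hG : G.Cubic) (X : Finset G.V) :
    Odd (boundary X).card ↔ Odd X.card := by
  have := hG.three_mul_card X
  rw [Nat.odd_iff, Nat.odd_iff]
  omega

theorem boundary_univ : boundary (Finset.univ : Finset G.V) = ∅ := by
  ext e
  simp [mem_boundary]

theorem Cubic.even_card (hG : G.Cubic) : Even (Fintype.card G.V) := by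
  rw [← Nat.not_odd_iff_even, ← Finset.card_univ, ← hG.odd_card_boundary_iff, boundary_univ]
  simp

theorem Reach.symm {A : Set G.E} {u v : G.V} (h : G.Reach A u v) : G.Reach A v u := by
  induction h with
  | refl => exact .refl
  | tail _ hstep ih =>
    obtain ⟨e, he, hends⟩ := hstep
    exact .head ⟨e, he, hends.trans Sym2.eq_swap⟩ ih

/-- The vertex set of the component of `v` in the spanning subgraph with edge set `A`. -/
noncomputable def component (A : Set G.E) (v : G.V) : Finset G.V :=
  Finset.univ.filter fun w => G.Reach A v w

theorem mem_component {A : Set G.E} {v w : G.V} : w ∈ component A v ↔ G.Reach A v w := by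
  simp [component]

theorem self_mem_component {A : Set G.E} {v : G.V} : v ∈ component A v :=
  mem_component.2 .refl

theorem component_eq_of_reach {A : Set G.E} {v w : G.V} (h : G.Reach A v w) :
    component A v = component A w := by
  ext x
  rw [mem_component, mem_component]
  exact ⟨fun hvx => h.symm.trans hvx, fun hwx => h.trans hwx⟩

theorem notMem_of_mem_boundary_component {A : Set G.E} {v : G.V} {e : G.E}
    (h : e ∈ boundary (component A v)) : e ∉ A := by
  obtain ⟨x, hx, y, hy, he⟩ := mem_boundary.1 h
  exact fun hA => hy (mem_component.2 ((mem_component.1 hx).tail ⟨e, hA, he⟩))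

theorem inter_boundary_component_eq_empty (L : Finset G.E) (v : G.V) :
    L ∩ boundary (component (L : Set G.E) v) = ∅ := by
  ext e
  simp only [Finset.mem_inter, Finset.notMem_empty, iff_false]
  exact fun h => notMem_of_mem_boundary_component h.2 h.1

/-- `ρ` maps each vertex to a representative of its component in the spanning subgraph with
edge set `A`. -/
structure IsRepresentative (A : Set G.E) (ρ : G.V → G.V) : Prop where
  reach : ∀ v, G.Reach A v (ρ v)
  eq_of_reach : ∀ v w, G.Reach A v w → ρ v = ρ w

theorem IsRepresentative.apply_apply {A : Set G.E} {ρ : G.V → G.V} (hρ : IsRepresentative A ρ)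
    (v : G.V) : ρ (ρ v) = ρ v :=
  (hρ.eq_of_reach v (ρ v) (hρ.reach v)).symm

theorem exists_isRepresentative (A : Set G.E) (Q : G.V → Prop) :
    ∃ ρ : G.V → G.V, IsRepresentative A ρ ∧ ∀ v w, G.Reach A v w → Q w → Q (ρ v) := by
  have hprefer : ∀ K : {K : Finset G.V // K.Nonempty}, ∃ r ∈ K.1, (∃ w ∈ K.1, Q w) → Q r := by
    intro K
    by_cases h : ∃ w ∈ K.1, Q w
    · obtain ⟨w, hw, hQw⟩ := h
      exact ⟨w, hw, fun _ => hQw⟩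
    · exact ⟨K.2.choose, K.2.choose_spec, fun h' => absurd h' h⟩
  choose pick hpick hQ using hprefer
  refine ⟨fun v => pick ⟨component A v, v, self_mem_component⟩,
    ⟨fun v => mem_component.1 (hpick _), fun v w h => ?_⟩, fun v w h hw => ?_⟩
  · simp only [component_eq_of_reach h]
  · exact hQ _ ⟨w, mem_component.2 h, hw⟩

theorem Loopless.exists_pathChain (hl : G.Loopless) {L : Finset G.E} {u v : G.V}
    (h : G.Reach L u v) : ∃ p : G.E → ZMod 2, ∀ x,
      ∑ e ∈ L ∩ G.star x, p e = (if u = x then 1 else 0) + (if v = x then 1 else 0) := by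
  induction h with
  | refl => exact ⟨0, fun x => by simp [CharTwo.add_self_eq_zero]⟩
  | @tail v w _ hstep ih =>
    obtain ⟨p, hp⟩ := ih
    obtain ⟨e, he, hends⟩ := hstep
    have hvw : v ≠ w := fun h => hl e (by rw [hends, h]; simp)
    refine ⟨p + Pi.single e 1, fun x => ?_⟩
    have hlast : ∑ e' ∈ L ∩ G.star x, (Pi.single e 1 : G.E → ZMod 2) e' =
        (if v = x then 1 else 0) + (if w = x then 1 else 0) := by
      rw [Finset.sum_pi_single']
      simp only [Finset.mem_inter, mem_star_iff hends, Finset.mem_coe.1 he, true_and]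
      rcases eq_or_ne v x with rfl | hvx
      · simp [hvw.symm]
      · simp [hvx, hvx.symm, eq_comm]
    simp only [Pi.add_apply, Finset.sum_add_distrib, hp, hlast]
    rw [add_assoc, ← add_assoc (if v = x then (1 : ZMod 2) else 0), CharTwo.add_self_eq_zero,
      zero_add]

theorem Loopless.exists_chain (hl : G.Loopless) {L : Finset G.E} {ρ : G.V → G.V}
    (hρ : ∀ v, G.Reach L v (ρ v)) (s : G.V → ZMod 2) :
    ∃ c : G.E → ZMod 2, ∀ x, (∀ v, ρ v ≠ x) → ∑ e ∈ L ∩ G.star x, c e = s x := by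
  choose p hp using fun v => hl.exists_pathChain (hρ v)
  refine ⟨fun e => ∑ v, s v * p v e, fun x hx => ?_⟩
  rw [Finset.sum_comm]
  simp_rw [← Finset.mul_sum, hp]
  simp [hx]

theorem Loopless.sum_sum_star_component (hl : G.Loopless) (L : Finset G.E) (v : G.V)
    (c : G.E → ZMod 2) : ∑ x ∈ component (L : Set G.E) v, ∑ e ∈ L ∩ G.star x, c e = 0 := by
  rw [hl.sum_sum_inter_star, inter_boundary_component_eq_empty, Finset.sum_empty, zero_add,
    two_nsmul, CharTwo.add_self_eq_zero]

theorem zmod_two_add_eq_one_of_ne {a b : ZMod 2} (h : a ≠ b) : a + b = 1 := by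
  revert a b
  decide

theorem Loopless.exists_chain_eq_or_odd (hl : G.Loopless) {L : Finset G.E} {ρ : G.V → G.V}
    (hρ : IsRepresentative L ρ) (s : G.V → ZMod 2) :
    ∃ c : G.E → ZMod 2, ∀ x, ∑ e ∈ L ∩ G.star x, c e = s x ∨
      (ρ x = x ∧ ∑ w ∈ component (L : Set G.E) x, s w = 1) := by
  obtain ⟨c, hc⟩ := hl.exists_chain hρ.reach s
  refine ⟨c, fun x => or_iff_not_imp_left.2 fun hne => ?_⟩
  have hx : ρ x = x := by
    by_contra hx
    exact hne (hc x fun v hv => hx (by rw [← hv, hρ.apply_apply]))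
  refine ⟨hx, ?_⟩
  have hrest : ∀ v ∈ (component (L : Set G.E) x).erase x, ∑ e ∈ L ∩ G.star v, c e = s v := by
    refine fun v hv => hc v fun w hw => Finset.ne_of_mem_erase hv ?_
    rw [← hx, hρ.eq_of_reach x v (mem_component.1 (Finset.mem_of_mem_erase hv)), ← hw,
      hρ.apply_apply]
  have htotal := hl.sum_sum_star_component L x c
  rw [← Finset.add_sum_erase _ _ self_mem_component, Finset.sum_congr rfl hrest] at htotal
  rw [← Finset.add_sum_erase _ _ (self_mem_component (A := (L : Set G.E)) (v := x)),
    ← CharTwo.add_eq_zero.1 htotal, add_comm]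
  exact zmod_two_add_eq_one_of_ne hne

end Cuts

/-! ### Perfect matchings -/

section PerfectMatching

variable {G : Multigraph}

/-- The simple graph underlying `G` with the edges in `R` removed; Tutte's theorem applies to
it. -/
def simpleAvoiding (G : Multigraph) (R : Finset G.E) : SimpleGraph G.V where
  Adj x y := x ≠ y ∧ ∃ e ∉ R, G.ends e = s(x, y)
  symm := ⟨fun _ _ ⟨hne, e, he, hends⟩ => ⟨hne.symm, e, he, hends.trans Sym2.eq_swap⟩⟩
  loopless := ⟨fun _ h => h.1 rfl⟩

theorem exists_disjoint_card_inter_star_eq_one {R : Finset G.E}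
    {M : (G.simpleAvoiding R).Subgraph} (hM : M.IsPerfectMatching) :
    ∃ N : Finset G.E, Disjoint N R ∧ ∀ v, (N ∩ G.star v).card = 1 := by
  rw [SimpleGraph.Subgraph.isPerfectMatching_iff] at hM
  choose mate hmate hunique using hM
  have hinvol : ∀ v, mate (mate v) = v := fun v => (hunique (mate v) v (hmate v).symm).symm
  have hedge : ∀ p : {p : Sym2 G.V // ∃ e ∉ R, G.ends e = p}, ∃ e ∉ R, G.ends e = p.1 :=
    fun p => p.2
  choose edge hedgeR hends using hedge
  let mateEdge (v : G.V) : G.E := edge ⟨s(v, mate v), (M.adj_sub (hmate v)).2⟩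
  have hmateEdge : ∀ v, mateEdge (mate v) = mateEdge v := by
    intro v
    simp only [mateEdge, hinvol, Sym2.eq_swap]
  have hstar : ∀ v w, mateEdge w ∈ G.star v ↔ v = w ∨ v = mate w :=
    fun v w => mem_star_iff (hends _)
  refine ⟨Finset.univ.image mateEdge, ?_, fun v => Finset.card_eq_one.2 ⟨mateEdge v, ?_⟩⟩
  · refine Finset.disjoint_left.2 fun e he => ?_
    obtain ⟨v, -, rfl⟩ := Finset.mem_image.1 he
    exact hedgeR _
  · ext e
    simp only [Finset.mem_inter, Finset.mem_image, Finset.mem_univ, true_and,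
      Finset.mem_singleton]
    constructor
    · rintro ⟨⟨w, rfl⟩, hw⟩
      rcases (hstar v w).1 hw with rfl | rfl
      · rfl
      · exact (hmateEdge w).symm
    · rintro rfl
      exact ⟨⟨v, rfl⟩, (hstar v v).2 (.inl rfl)⟩

theorem Loopless.sum_card_inter_boundary_le (hl : G.Loopless) (R : Finset G.E)
    {K : Finset (Finset G.V)} (hdisj : (K : Set (Finset G.V)).PairwiseDisjoint id) :
    ∑ D ∈ K, (R ∩ boundary D).card ≤ 2 * R.card :=
  calc ∑ D ∈ K, (R ∩ boundary D).card
      ≤ ∑ D ∈ K, ∑ v ∈ D, (R ∩ G.star v).card :=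
        Finset.sum_le_sum fun D _ => (hl.sum_card_inter_star D R).symm ▸ Nat.le_add_right _ _
    _ = ∑ v ∈ K.biUnion id, (R ∩ G.star v).card := (Finset.sum_biUnion hdisj).symm
    _ ≤ ∑ v, (R ∩ G.star v).card := Finset.sum_le_univ_sum_of_nonneg fun _ => Nat.zero_le _
    _ ≤ 2 * R.card := by
        rw [hl.sum_card_inter_star, boundary_univ, Finset.inter_empty, Finset.card_empty, zero_add]
        gcongr
        exact Finset.inter_subset_left

theorem Cubic.sum_card_boundary_sdiff_le (hG : G.Cubic) (R : Finset G.E) {A : Finset G.V}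
    {K : Finset (Finset G.V)} (hdisj : (K : Set (Finset G.V)).PairwiseDisjoint id)
    (hA : ∀ D ∈ K, Disjoint D A)
    (hsep : ∀ D ∈ K, ∀ x ∈ D, ∀ y ∉ A, (G.simpleAvoiding R).Adj x y → y ∈ D) :
    ∑ D ∈ K, (boundary D \ R).card ≤ 3 * A.card := by
  have hends : ∀ D ∈ K, ∀ e ∈ boundary D \ R, ∃ x ∈ D, ∃ y ∈ A, G.ends e = s(x, y) := by
    intro D hD e he
    obtain ⟨hbd, hR⟩ := Finset.mem_sdiff.1 he
    obtain ⟨x, hx, y, hy, hxy⟩ := mem_boundary.1 hbd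
    refine ⟨x, hx, y, by_contra fun hyA => hy ?_, hxy⟩
    exact hsep D hD x hx y hyA ⟨fun h => hy (h ▸ hx), e, hR, hxy⟩
  have hdisj' : (K : Set (Finset G.V)).PairwiseDisjoint fun D => boundary D \ R := by
    intro D hD D' hD' hne
    refine Finset.disjoint_left.2 fun e he he' => ?_
    obtain ⟨x, hx, y, -, hxy⟩ := hends D hD e he
    obtain ⟨x', hx', y', hy', hxy'⟩ := hends D' hD' e he'
    rw [hxy, Sym2.eq_iff] at hxy'
    rcases hxy' with ⟨rfl, rfl⟩ | ⟨rfl, rfl⟩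
    · exact Finset.disjoint_left.1 (hdisj hD hD' hne) hx hx'
    · exact Finset.disjoint_left.1 (hA D hD) hx hy'
  rw [← Finset.card_biUnion hdisj', mul_comm]
  refine (Finset.card_le_card (Finset.biUnion_subset.2 fun D hD e he => ?_)).trans
    (Finset.card_biUnion_le_card_mul A G.star 3 fun v _ => (hG.card_star v).le)
  obtain ⟨x, -, y, hy, hxy⟩ := hends D hD e he
  exact Finset.mem_biUnion.2 ⟨y, hy, (mem_star_iff hxy).2 (.inr rfl)⟩

theorem Cubic.exists_perfectMatching_avoiding (hG : G.Cubic)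
    (hcut : ∀ D : Finset G.V, D.Nonempty → D ≠ Finset.univ → 2 ≤ (boundary D).card)
    (R : Finset G.E) (hR : R.card ≤ 2) :
    ∃ M : Finset G.E, Disjoint M R ∧ ∀ v, (M ∩ G.star v).card = 1 := by
  suffices ∃ M : (G.simpleAvoiding R).Subgraph, M.IsPerfectMatching from
    this.elim fun M hM => exists_disjoint_card_inter_star_eq_one hM
  refine exists_isPerfectMatching_of_card_le _ hG.even_card fun A K hdisj hA hsep hodd => ?_
  have hlower : ∀ D ∈ K, 3 ≤ (boundary D).card := by
    intro D hD
    have htwo := hcut D (Finset.card_pos.1 (hodd D hD).pos) fun h => ?_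
    · obtain ⟨k, hk⟩ := (hG.odd_card_boundary_iff D).2 (hodd D hD)
      omega
    · have hDodd := hodd D hD
      rw [h, Finset.card_univ] at hDodd
      exact Nat.not_even_iff_odd.2 hDodd hG.even_card
  have hupper : ∑ D ∈ K, (boundary D).card ≤ 3 * A.card + 2 * R.card := by
    simp_rw [← Finset.card_sdiff_add_card_inter (boundary _) R, Finset.inter_comm _ R,
      Finset.sum_add_distrib]
    exact add_le_add (hG.sum_card_boundary_sdiff_le R hdisj hA hsep)
      (hG.1.sum_card_inter_boundary_le R hdisj)
  have hcount := (Finset.card_nsmul_le_sum K _ 3 hlower).trans hupper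
  rw [smul_eq_mul] at hcount
  omega

end PerfectMatching

/-! ### Even covers of bridgeless pieces -/

section SplitGraph

variable {G : Multigraph} {C : Finset G.V} {d : G.V → G.E}

/-- The vertices of `C` that are incident to an edge leaving `C`. -/
noncomputable def boundaryVerts (C : Finset G.V) : Finset G.V :=
  C.filter fun v => (G.star v ∩ boundary C).Nonempty

theorem mem_boundaryVerts {v : G.V} :
    v ∈ boundaryVerts C ↔ v ∈ C ∧ (G.star v ∩ boundary C).Nonempty := by
  simp [boundaryVerts]

theorem star_inter_boundary_eq_empty {v : G.V} (hv : v ∈ C) (hp : v ∉ boundaryVerts C) :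
    G.star v ∩ boundary C = ∅ :=
  Finset.not_nonempty_iff_eq_empty.1 fun h => hp (mem_boundaryVerts.2 ⟨hv, h⟩)

theorem Cubic.card_innerEdges_inter_star_add (hG : G.Cubic) {v : G.V} (hv : v ∈ C) :
    (innerEdges C ∩ G.star v).card + (G.star v ∩ boundary C).card = 3 := by
  rw [← hG.card_star v, ← Finset.card_union_of_disjoint]
  · congr 1
    ext e
    have := hG.1.mem_innerEdges_or_mem_boundary hv (e := e)
    simp only [Finset.mem_union, Finset.mem_inter]
    tauto
  · exact (disjoint_innerEdges_boundary C).mono Finset.inter_subset_left Finset.inter_subset_right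

/-- `C` has at least two vertices and induces a connected subgraph without bridges, in the form
that every proper nonempty part of `C` is joined to the rest of `C` by at least two edges. -/
structure IsBridgelessPiece (C : Finset G.V) : Prop where
  nontrivial : C.Nontrivial
  two_le_card_cut : ∀ D ⊆ C, D.Nonempty → D ≠ C → 2 ≤ (boundary D ∩ innerEdges C).card

theorem IsBridgelessPiece.two_le_card_innerEdges_inter_star (hC : IsBridgelessPiece C) {v : G.V}
    (hv : v ∈ C) : 2 ≤ (innerEdges C ∩ G.star v).card := by
  refine (hC.two_le_card_cut {v} (Finset.singleton_subset_iff.2 hv) (Finset.singleton_nonempty v)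
    hC.nontrivial.ne_singleton.symm).trans (Finset.card_le_card fun e he => ?_)
  obtain ⟨hbd, hinner⟩ := Finset.mem_inter.1 he
  obtain ⟨u, hu, w, -, huw⟩ := mem_boundary.1 hbd
  exact Finset.mem_inter.2
    ⟨hinner, (mem_star_iff huw).2 (.inl (Finset.mem_singleton.1 hu).symm)⟩

theorem IsBridgelessPiece.card_star_inter_boundary_le_one (hG : G.Cubic)
    (hC : IsBridgelessPiece C) {v : G.V} (hv : v ∈ C) : (G.star v ∩ boundary C).card ≤ 1 := by
  have := hG.card_innerEdges_inter_star_add hv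
  have := hC.two_le_card_innerEdges_inter_star hv
  omega

theorem IsBridgelessPiece.card_star_inter_boundary_eq_one (hG : G.Cubic)
    (hC : IsBridgelessPiece C) {v : G.V} (hv : v ∈ boundaryVerts C) :
    (G.star v ∩ boundary C).card = 1 := by
  obtain ⟨hvC, hne⟩ := mem_boundaryVerts.1 hv
  exact le_antisymm (hC.card_star_inter_boundary_le_one hG hvC) (Finset.card_pos.2 hne)

/-- The vertices of the split graph of `C`: a copy `(v, true)` of every vertex `v` of `C`, and a
second copy `(v, false)` if `v` has an edge leaving `C`. -/
abbrev SplitVertex (C : Finset G.V) : Type :=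
  {p : G.V × Bool // p.1 ∈ C ∧ (p.2 = false → p.1 ∈ boundaryVerts C)}

/-- The copy `(v, true)` of `v` in the split graph. -/
def firstHalf (v : G.V) (hv : v ∈ C) : SplitVertex C :=
  ⟨(v, true), hv, fun h => Bool.noConfusion h⟩

/-- The copy `(v, false)` of `v` in the split graph. -/
def secondHalf (v : G.V) (hv : v ∈ boundaryVerts C) : SplitVertex C :=
  ⟨(v, false), (mem_boundaryVerts.1 hv).1, fun _ => hv⟩

/-- The copy of `v` that the edge `e` is attached to in the split graph: of the two inner edges
at a vertex `v` with an edge leaving `C`, only `d v` stays at the first copy. -/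
noncomputable def side (C : Finset G.V) (d : G.V → G.E) (v : G.V) (e : G.E) : Bool :=
  decide (v ∈ boundaryVerts C → e = d v)

theorem side_eq_true_iff {v : G.V} {e : G.E} :
    side C d v e = true ↔ (v ∈ boundaryVerts C → e = d v) := by
  simp [side, imp_iff_not_or]

/-- The end at `v` of the edge `e` in the split graph. -/
noncomputable def splitEnd (C : Finset G.V) (d : G.V → G.E) (e : G.E) (v : G.V) (hv : v ∈ C) :
    SplitVertex C :=
  ⟨(v, side C d v e), hv, fun h => by_contra fun hp => by simp [side, hp] at h⟩

/-- The cubic graph obtained from the graph induced on `C` by splitting each vertex `v` with an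
edge leaving `C` into two copies, joined by a double edge; `d v` is the inner edge that stays at
the first copy. -/
noncomputable abbrev splitGraph (C : Finset G.V) (d : G.V → G.E) : Multigraph where
  V := SplitVertex C
  E := {e : G.E // e ∈ innerEdges C} ⊕ ({u : G.V // u ∈ boundaryVerts C} × Bool)
  ends := Sum.elim
    (fun e => (G.ends e.1).pmap (splitEnd C d e.1) (mem_innerEdges.1 e.2))
    (fun x => s(firstHalf x.1.1 (mem_boundaryVerts.1 x.1.2).1, secondHalf x.1.1 x.1.2))

theorem inl_mem_star_splitGraph {e : {e : G.E // e ∈ innerEdges C}} {p : (splitGraph C d).V} :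
    (Sum.inl e : (splitGraph C d).E) ∈ (splitGraph C d).star p ↔
      e.1 ∈ G.star p.1.1 ∧ side C d p.1.1 e.1 = p.1.2 := by
  rw [mem_star, mem_star]
  refine (Sym2.mem_pmap_iff (splitEnd C d e.1) (G.ends e.1) (mem_innerEdges.1 e.2) p).trans ?_
  constructor
  · rintro ⟨v, hv, rfl⟩
    exact ⟨hv, rfl⟩
  · rintro ⟨hmem, hside⟩
    exact ⟨p.1.1, hmem, Subtype.ext (Prod.ext rfl hside.symm)⟩

theorem inr_mem_star_splitGraph {x : {u : G.V // u ∈ boundaryVerts C} × Bool}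
    {p : (splitGraph C d).V} :
    (Sum.inr x : (splitGraph C d).E) ∈ (splitGraph C d).star p ↔ x.1.1 = p.1.1 := by
  rw [mem_star]
  change p ∈ s(_, _) ↔ _
  rw [Sym2.mem_iff]
  obtain ⟨⟨v, i⟩, hp⟩ := p
  cases i <;> simp [Subtype.ext_iff, firstHalf, secondHalf, eq_comm]

theorem splitGraph_ends_inl {e : {e : G.E // e ∈ innerEdges C}} {u v : G.V} (hu : u ∈ C)
    (hv : v ∈ C) (huv : u ≠ v) (he : G.ends e.1 = s(u, v)) :
    (splitGraph C d).ends (.inl e) = s(splitEnd C d e.1 u hu, splitEnd C d e.1 v hv) := by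
  have hmem := Sym2.mem_pmap_iff (splitEnd C d e.1) (G.ends e.1) (mem_innerEdges.1 e.2)
  rw [← Sym2.mem_and_mem_iff fun h => huv (congrArg (fun p => p.1.1) h)]
  exact ⟨(hmem _).2 ⟨u, by simp [he], rfl⟩, (hmem _).2 ⟨v, by simp [he], rfl⟩⟩

theorem Loopless.splitGraph (hl : G.Loopless) : (splitGraph C d).Loopless := by
  rintro (e | x)
  · obtain ⟨u, v, huv, he⟩ := hl.exists_ends e.1
    obtain ⟨hu, hv⟩ := (mem_innerEdges_iff he).1 e.2
    rw [splitGraph_ends_inl hu hv huv he, Sym2.mk_isDiag_iff]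
    exact fun h => huv (congrArg (fun p => p.1.1) h)
  · change ¬ Sym2.IsDiag s(_, _)
    simp [Subtype.ext_iff, firstHalf, secondHalf]

/-- The edges of `G` that correspond to the edges in `M` of the split graph. -/
noncomputable def unsplit (M : Finset (splitGraph C d).E) : Finset G.E :=
  (innerEdges C).filter fun e =>
    ∃ h : e ∈ innerEdges C, (Sum.inl ⟨e, h⟩ : (splitGraph C d).E) ∈ M

theorem unsplit_univ : unsplit (C := C) (d := d) Finset.univ = innerEdges C := by
  ext e
  simp [unsplit]

theorem unsplit_subset (M : Finset (splitGraph C d).E) : unsplit M ⊆ innerEdges C :=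
  Finset.filter_subset _ _

/-- The number of edges of `M` among the two parallel edges joining the copies of `v`. -/
noncomputable def pairCount (M : Finset (splitGraph C d).E) (v : G.V) : ℕ :=
  (Finset.univ.filter fun x : {u : G.V // u ∈ boundaryVerts C} × Bool =>
    x.1.1 = v ∧ (Sum.inr x : (splitGraph C d).E) ∈ M).card

theorem pairCount_of_notMem (M : Finset (splitGraph C d).E) {v : G.V}
    (hv : v ∉ boundaryVerts C) : pairCount M v = 0 := by
  rw [pairCount, Finset.card_eq_zero, Finset.filter_eq_empty_iff]
  rintro ⟨u, i⟩ - ⟨rfl, -⟩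
  exact hv u.2

theorem pairCount_univ {v : G.V} (hv : v ∈ boundaryVerts C) :
    pairCount (C := C) (d := d) Finset.univ v = 2 := by
  have hpair : (Finset.univ.filter fun x : {u : G.V // u ∈ boundaryVerts C} × Bool =>
      x.1.1 = v ∧ (Sum.inr x : (splitGraph C d).E) ∈ Finset.univ) =
      {(⟨v, hv⟩, true), (⟨v, hv⟩, false)} := by
    ext ⟨u, i⟩
    cases i <;> simp [Subtype.ext_iff]
  rw [pairCount, hpair, Finset.card_pair (by simp)]

theorem card_inter_star_splitGraph (M : Finset (splitGraph C d).E) (p : (splitGraph C d).V) :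
    (M ∩ (splitGraph C d).star p).card =
      ((unsplit M ∩ G.star p.1.1).filter fun e => side C d p.1.1 e = p.1.2).card +
        pairCount M p.1.1 := by
  have hsum : M ∩ (splitGraph C d).star p =
      (((unsplit M ∩ G.star p.1.1).filter fun e => side C d p.1.1 e = p.1.2).subtype
        (fun e => e ∈ innerEdges C)).disjSum
      (Finset.univ.filter fun x : {u : G.V // u ∈ boundaryVerts C} × Bool =>
        x.1.1 = p.1.1 ∧ (Sum.inr x : (splitGraph C d).E) ∈ M) := by
    ext (e | x)
    · rw [Finset.mem_inter, inl_mem_star_splitGraph, Finset.inl_mem_disjSum]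
      simp [unsplit]
      tauto
    · rw [Finset.mem_inter, inr_mem_star_splitGraph, Finset.inr_mem_disjSum]
      simp [and_comm]
  rw [hsum, Finset.card_disjSum, Finset.card_subtype, Finset.filter_true_of_mem, pairCount]
  exact fun e he => unsplit_subset M (Finset.mem_inter.1 (Finset.mem_filter.1 he).1).1

theorem card_inter_star_firstHalf (M : Finset (splitGraph C d).E) {v : G.V} (hv : v ∈ C) :
    (M ∩ (splitGraph C d).star (firstHalf v hv)).card =
      ((unsplit M ∩ G.star v).filter fun e => side C d v e = true).card + pairCount M v :=
  card_inter_star_splitGraph M (firstHalf v hv)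

theorem card_inter_star_secondHalf (M : Finset (splitGraph C d).E) {v : G.V}
    (hv : v ∈ boundaryVerts C) :
    (M ∩ (splitGraph C d).star (secondHalf v hv)).card =
      ((unsplit M ∩ G.star v).filter fun e => side C d v e = false).card + pairCount M v :=
  card_inter_star_splitGraph M (secondHalf v hv)

theorem filter_side_eq_true_of_notMem {v : G.V} (hp : v ∉ boundaryVerts C) (L : Finset G.E) :
    L.filter (fun e => side C d v e = true) = L :=
  Finset.filter_true_of_mem fun _ _ => side_eq_true_iff.2 fun h => absurd h hp

theorem card_innerEdges_filter_side (hG : G.Cubic) (hC : IsBridgelessPiece C)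
    (hd : ∀ u ∈ boundaryVerts C, d u ∈ innerEdges C ∩ G.star u) {v : G.V}
    (hv : v ∈ boundaryVerts C) (i : Bool) :
    ((innerEdges C ∩ G.star v).filter fun e => side C d v e = i).card = 1 := by
  have hthree := hG.card_innerEdges_inter_star_add (mem_boundaryVerts.1 hv).1
  have hone := hC.card_star_inter_boundary_eq_one hG hv
  have hfirst : ((innerEdges C ∩ G.star v).filter fun e => side C d v e = true) = {d v} := by
    ext e
    simp only [Finset.mem_filter, side_eq_true_iff, hv, true_imp_iff, Finset.mem_singleton]
    exact ⟨And.right, fun h => ⟨h ▸ hd v hv, h⟩⟩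
  cases i
  · have hsplit := Finset.card_filter_add_card_filter_not (s := innerEdges C ∩ G.star v)
      (fun e => side C d v e = true)
    rw [hfirst, Finset.card_singleton] at hsplit
    simp only [Bool.not_eq_true] at hsplit
    omega
  · rw [hfirst, Finset.card_singleton]

theorem IsBridgelessPiece.cubic_splitGraph (hG : G.Cubic) (hC : IsBridgelessPiece C)
    (hd : ∀ u ∈ boundaryVerts C, d u ∈ innerEdges C ∩ G.star u) : (splitGraph C d).Cubic := by
  refine hG.1.splitGraph.cubic fun p => ?_
  have hcard := card_inter_star_splitGraph Finset.univ p
  rw [Finset.univ_inter, unsplit_univ] at hcard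
  rw [hcard]
  by_cases hp : p.1.1 ∈ boundaryVerts C
  · rw [pairCount_univ hp, card_innerEdges_filter_side hG hC hd hp]
  · have htrue : p.1.2 = true := by
      by_contra h
      exact hp (p.2.2 (Bool.eq_false_of_not_eq_true h))
    have hthree := hG.card_innerEdges_inter_star_add p.2.1
    rw [star_inter_boundary_eq_empty p.2.1 hp, Finset.card_empty] at hthree
    rw [pairCount_of_notMem _ hp, htrue, filter_side_eq_true_of_notMem hp]
    exact hthree

theorem two_le_card_boundary_splitGraph_of_separated {u : G.V} (hu : u ∈ boundaryVerts C)
    {D : Finset (splitGraph C d).V}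
    (hsep : ¬ (firstHalf u (mem_boundaryVerts.1 hu).1 ∈ D ↔ secondHalf u hu ∈ D)) :
    2 ≤ (boundary D).card := by
  have hparallel : ∀ i, (Sum.inr (⟨u, hu⟩, i) : (splitGraph C d).E) ∈ boundary D := by
    intro i
    rw [mem_boundary_iff (G := splitGraph C d) rfl]
    tauto
  rw [← Finset.card_pair (a := (Sum.inr (⟨u, hu⟩, true) : (splitGraph C d).E))
    (b := Sum.inr (⟨u, hu⟩, false)) (by simp)]
  exact Finset.card_le_card (by simp [Finset.insert_subset_iff, hparallel])

theorem card_boundary_inter_innerEdges_le {D : Finset (splitGraph C d).V} {D' : Finset G.V}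
    (hD : ∀ p, p ∈ D ↔ p.1.1 ∈ D') : (boundary D' ∩ innerEdges C).card ≤ (boundary D).card := by
  have hsubset : ((boundary D' ∩ innerEdges C).subtype (· ∈ innerEdges C)).map
      Function.Embedding.inl ⊆ boundary D := by
    intro e' he'
    obtain ⟨⟨e, heC⟩, he, rfl⟩ := Finset.mem_map.1 he'
    obtain ⟨u, hu, v, hv, huv⟩ := mem_boundary.1 (Finset.mem_inter.1 (Finset.mem_subtype.1 he)).1
    obtain ⟨huC, hvC⟩ := (mem_innerEdges_iff huv).1 heC
    exact mem_boundary.2 ⟨splitEnd C d e u huC, (hD _).2 hu, splitEnd C d e v hvC,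
      fun h => hv ((hD _).1 h), splitGraph_ends_inl huC hvC (fun h => hv (h ▸ hu)) huv⟩
  have hcard := Finset.card_le_card hsubset
  rwa [Finset.card_map, Finset.card_subtype,
    Finset.filter_true_of_mem fun e he => (Finset.mem_inter.1 he).2] at hcard

theorem IsBridgelessPiece.two_le_card_boundary_splitGraph (hC : IsBridgelessPiece C)
    {D : Finset (splitGraph C d).V} (hne : D.Nonempty) (hproper : D ≠ Finset.univ) :
    2 ≤ (boundary D).card := by
  by_cases hsep : ∃ (u : G.V) (hu : u ∈ boundaryVerts C),
      ¬ (firstHalf u (mem_boundaryVerts.1 hu).1 ∈ D ↔ secondHalf u hu ∈ D)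
  · obtain ⟨u, hu, hsep⟩ := hsep
    exact two_le_card_boundary_splitGraph_of_separated hu hsep
  push Not at hsep
  set D' : Finset G.V := C.filter fun v => ∃ h : v ∈ C, firstHalf v h ∈ D
  have hD : ∀ p : (splitGraph C d).V, p ∈ D ↔ p.1.1 ∈ D' := by
    rintro ⟨⟨v, i⟩, hv, hi⟩
    simp only [D', Finset.mem_filter, hv, true_and, exists_true_left]
    cases i
    · exact (hsep v (hi rfl)).symm
    · exact Iff.rfl
  refine (hC.two_le_card_cut D' (Finset.filter_subset _ _) ?_ ?_).trans
    (card_boundary_inter_innerEdges_le hD)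
  · obtain ⟨p, hp⟩ := hne
    exact ⟨_, (hD p).1 hp⟩
  · intro h
    refine hproper (Finset.eq_univ_of_forall fun p => (hD p).2 ?_)
    rw [h]
    exact p.2.1

/-- `F` is the edge set of disjoint cycles inside `C` that cover all vertices of `C` without an
edge leaving `C`. -/
structure IsEvenCover (C : Finset G.V) (F : Finset G.E) : Prop where
  subset : F ⊆ innerEdges C
  card_eq_zero_or_two : ∀ v ∈ C, (F ∩ G.star v).card = 0 ∨ (F ∩ G.star v).card = 2
  card_eq_two : ∀ v ∈ C, v ∉ boundaryVerts C → (F ∩ G.star v).card = 2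

theorem card_sdiff_inter_star_add {L M : Finset G.E} (h : M ⊆ L) (v : G.V) :
    ((L \ M) ∩ G.star v).card + (M ∩ G.star v).card = (L ∩ G.star v).card := by
  rw [← Finset.card_union_of_disjoint, ← Finset.union_inter_distrib_right,
    Finset.sdiff_union_of_subset h]
  exact Finset.sdiff_disjoint.mono Finset.inter_subset_left Finset.inter_subset_left

theorem card_sdiff_unsplit_of_notMem (hG : G.Cubic) {M : Finset (splitGraph C d).E}
    (hM : ∀ p, (M ∩ (splitGraph C d).star p).card = 1) {v : G.V} (hv : v ∈ C)
    (hp : v ∉ boundaryVerts C) : ((innerEdges C \ unsplit M) ∩ G.star v).card = 2 := by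
  have hinner := hG.card_innerEdges_inter_star_add hv
  have hsplit := card_sdiff_inter_star_add (unsplit_subset M) v
  have hone := card_inter_star_firstHalf M hv
  rw [star_inter_boundary_eq_empty hv hp, Finset.card_empty] at hinner
  rw [hM, pairCount_of_notMem _ hp, filter_side_eq_true_of_notMem hp] at hone
  omega

theorem IsBridgelessPiece.card_sdiff_unsplit (hG : G.Cubic) (hC : IsBridgelessPiece C)
    {M : Finset (splitGraph C d).E} (hM : ∀ p, (M ∩ (splitGraph C d).star p).card = 1) {v : G.V}
    (hv : v ∈ boundaryVerts C) :
    ((innerEdges C \ unsplit M) ∩ G.star v).card = 2 * pairCount M v ∧ pairCount M v ≤ 1 := by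
  have hvC := (mem_boundaryVerts.1 hv).1
  have hinner := hG.card_innerEdges_inter_star_add hvC
  have hsplit := card_sdiff_inter_star_add (unsplit_subset M) v
  have hsides := Finset.card_filter_add_card_filter_not (s := unsplit M ∩ G.star v)
    (fun e => side C d v e = true)
  have hfirst := card_inter_star_firstHalf M hvC
  have hsecond := card_inter_star_secondHalf M hv
  have hbd := hC.card_star_inter_boundary_eq_one hG hv
  rw [hM] at hfirst hsecond
  simp only [Bool.not_eq_true] at hsides
  omega

theorem IsBridgelessPiece.isEvenCover_sdiff_unsplit (hG : G.Cubic) (hC : IsBridgelessPiece C)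
    {M : Finset (splitGraph C d).E} (hM : ∀ p, (M ∩ (splitGraph C d).star p).card = 1) :
    IsEvenCover C (innerEdges C \ unsplit M) where
  subset := Finset.sdiff_subset
  card_eq_zero_or_two v hv := by
    by_cases hp : v ∈ boundaryVerts C
    · have := hC.card_sdiff_unsplit hG hM hp
      omega
    · exact .inr (card_sdiff_unsplit_of_notMem hG hM hv hp)
  card_eq_two _ hv hp := card_sdiff_unsplit_of_notMem hG hM hv hp

theorem IsBridgelessPiece.exists_innerEdge (hC : IsBridgelessPiece C) :
    ∃ d : G.V → G.E, ∀ u ∈ C, d u ∈ innerEdges C ∩ G.star u := by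
  have hne : ∀ u ∈ C, (innerEdges C ∩ G.star u).Nonempty := fun u hu =>
    Finset.card_pos.1 (by have := hC.two_le_card_innerEdges_inter_star hu; omega)
  choose d hd using hne
  obtain ⟨u₀, hu₀⟩ := hC.nontrivial.nonempty
  refine ⟨fun u => if hu : u ∈ C then d u hu else d u₀ hu₀, fun u hu => ?_⟩
  simpa [hu] using hd u hu

theorem IsBridgelessPiece.exists_isEvenCover_of_avoiding (hG : G.Cubic)
    (hC : IsBridgelessPiece C) (hd : ∀ u ∈ C, d u ∈ innerEdges C ∩ G.star u)
    (R : Finset (splitGraph C d).E) (hR : R.card ≤ 2) :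
    ∃ M : Finset (splitGraph C d).E, Disjoint M R ∧
      (∀ p, (M ∩ (splitGraph C d).star p).card = 1) ∧
      IsEvenCover C (innerEdges C \ unsplit M) := by
  obtain ⟨M, hMR, hM⟩ := (hC.cubic_splitGraph hG fun u hu =>
    hd u (mem_boundaryVerts.1 hu).1).exists_perfectMatching_avoiding
    (fun D => hC.two_le_card_boundary_splitGraph) R hR
  exact ⟨M, hMR, hM, hC.isEvenCover_sdiff_unsplit hG hM⟩

theorem IsBridgelessPiece.exists_isEvenCover_missing (hG : G.Cubic) (hC : IsBridgelessPiece C)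
    {u : G.V} (hu : u ∈ boundaryVerts C) :
    ∃ F, IsEvenCover C F ∧ (F ∩ G.star u).card = 0 := by
  obtain ⟨d, hd⟩ := hC.exists_innerEdge
  obtain ⟨M, hMR, hM, hF⟩ := hC.exists_isEvenCover_of_avoiding hG hd
    {Sum.inr (⟨u, hu⟩, true), Sum.inr (⟨u, hu⟩, false)} Finset.card_le_two
  refine ⟨_, hF, ?_⟩
  suffices pairCount M u = 0 by rw [(hC.card_sdiff_unsplit hG hM hu).1, this]
  rw [pairCount, Finset.card_eq_zero, Finset.filter_eq_empty_iff]
  rintro ⟨⟨v, hv⟩, i⟩ - ⟨rfl, hvM⟩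
  refine Finset.disjoint_left.1 hMR hvM ?_
  cases i <;> simp

theorem IsBridgelessPiece.exists_isEvenCover_through (hG : G.Cubic) (hC : IsBridgelessPiece C)
    {u : G.V} (hu : u ∈ C) : ∃ F, IsEvenCover C F ∧ (F ∩ G.star u).card = 2 := by
  obtain ⟨d, hd⟩ := hC.exists_innerEdge
  obtain ⟨hdC, hdu⟩ := Finset.mem_inter.1 (hd u hu)
  obtain ⟨M, hMR, -, hF⟩ := hC.exists_isEvenCover_of_avoiding hG hd
    {Sum.inl ⟨d u, hdC⟩} (by rw [Finset.card_singleton]; omega)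
  refine ⟨_, hF, (hF.card_eq_zero_or_two u hu).resolve_left ?_⟩
  refine (Finset.card_pos.2 ⟨d u, Finset.mem_inter.2 ⟨Finset.mem_sdiff.2 ⟨hdC, ?_⟩, hdu⟩⟩).ne'
  intro hmem
  obtain ⟨-, _, hM'⟩ := Finset.mem_filter.1 hmem
  exact Finset.disjoint_left.1 hMR hM' (Finset.mem_singleton_self _)

end SplitGraph

/-! ### Colourings and cycles of an even cover -/

section Colouring

variable {G : Multigraph} {C : Finset G.V} {F : Finset G.E}

/-- The sets `∂_S(y)` for the vertices `y` of the Sylvester graph. The edge `i` of `S` is the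
colour `i`: the bridges are `0, 5, 10`, and `1, 2` (`3, 4`) are the single (parallel) edges of the
end-block at `0`. -/
def sylvesterStars : Finset (Finset (Fin 15)) :=
  {{0, 5, 10}, {0, 1, 2}, {1, 3, 4}, {2, 3, 4}, {5, 6, 7}, {6, 8, 9}, {7, 8, 9},
    {10, 11, 12}, {11, 13, 14}, {12, 13, 14}}

/-- The star of `v` is mapped onto a star of the Sylvester graph. -/
def Good (f : G.E → Fin 15) (v : G.V) : Prop := (G.star v).image f ∈ sylvesterStars

/-- Two distinct edges at `v` have the same colour. -/
def HasRepeat (f : G.E → Fin 15) (v : G.V) : Prop :=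
  ∃ e ∈ G.star v, ∃ e' ∈ G.star v, e ≠ e' ∧ f e = f e'

/-- The condition which the theorem imposes on a colouring at the vertex `v`. -/
def Admissible (f : G.E → Fin 15) (v : G.V) : Prop := Good f v ∨ HasRepeat f v

/-- The vertices of `C` which count as lost: those where `f` is not good. -/
noncomputable def badVerts (f : G.E → Fin 15) (C : Finset G.V) : Finset G.V :=
  C.filter fun v => ¬ Good f v

theorem Good.congr {f g : G.E → Fin 15} {v : G.V} (hf : Good f v)
    (h : ∀ e ∈ G.star v, f e = g e) : Good g v := by
  rwa [Good, ← Finset.image_congr fun e he => h e he]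

theorem HasRepeat.congr {f g : G.E → Fin 15} {v : G.V} (hf : HasRepeat f v)
    (h : ∀ e ∈ G.star v, f e = g e) : HasRepeat g v := by
  obtain ⟨e, he, e', he', hne, heq⟩ := hf
  exact ⟨e, he, e', he', hne, by rw [← h e he, ← h e' he', heq]⟩

theorem Admissible.congr {f g : G.E → Fin 15} {v : G.V} (hf : Admissible f v)
    (h : ∀ e ∈ G.star v, f e = g e) : Admissible g v :=
  hf.imp (·.congr h) (·.congr h)

theorem badVerts_congr {f g : G.E → Fin 15} {X : Finset G.V}
    (h : ∀ v ∈ X, ∀ e ∈ G.star v, f e = g e) : badVerts f X = badVerts g X :=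
  Finset.filter_congr fun v hv =>
    not_congr ⟨(·.congr (h v hv)), (·.congr fun e he => (h v hv e he).symm)⟩

theorem good_of_star_eq {f : G.E → Fin 15} {v : G.V} {e₁ e₂ e₃ : G.E}
    (hs : G.star v = {e₁, e₂, e₃}) (h : {f e₁, f e₂, f e₃} ∈ sylvesterStars) : Good f v := by
  rw [Good, hs]
  simpa [Finset.image_insert] using h

theorem Cubic.exists_star_eq_of_card_two (hG : G.Cubic) {L : Finset G.E} {v : G.V}
    (h : (L ∩ G.star v).card = 2) : ∃ e₁ e₂ e₃, e₁ ≠ e₂ ∧ G.star v = {e₁, e₂, e₃} ∧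
      L ∩ G.star v = {e₁, e₂} ∧ e₁ ∈ L ∧ e₂ ∈ L ∧ e₃ ∉ L := by
  obtain ⟨e₁, e₂, hne, hL⟩ := Finset.card_eq_two.1 h
  have hrest : (G.star v \ (L ∩ G.star v)).card = 1 := by
    rw [Finset.card_sdiff_of_subset Finset.inter_subset_right, h, hG.card_star]
  obtain ⟨e₃, he₃⟩ := Finset.card_eq_one.1 hrest
  have hstar : G.star v = {e₁, e₂, e₃} := by
    rw [← Finset.union_sdiff_of_subset (Finset.inter_subset_right (s₁ := L) (s₂ := G.star v)),
      he₃, hL]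
    ext; simp
  have h₁ : e₁ ∈ L ∩ G.star v := by simp [hL]
  have h₂ : e₂ ∈ L ∩ G.star v := by simp [hL]
  have h₃ : e₃ ∈ G.star v \ (L ∩ G.star v) := by simp [he₃]
  simp only [Finset.mem_sdiff, Finset.mem_inter, not_and] at h₁ h₂ h₃
  exact ⟨e₁, e₂, e₃, hne, hstar, hL, h₁.1, h₂.1, fun h => h₃.2 h h₃.1⟩

theorem Cubic.good_of_sum_eq_one (hG : G.Cubic) {L : Finset G.E} {c : G.E → ZMod 2}
    {f : G.E → Fin 15} {a b : Fin 15} (hf : ∀ e ∈ L, f e = if c e = 0 then a else b) {v : G.V}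
    (h2 : (L ∩ G.star v).card = 2) (hsum : ∑ e ∈ L ∩ G.star v, c e = 1)
    (hrest : ∀ e ∈ G.star v, e ∉ L → {a, b, f e} ∈ sylvesterStars) : Good f v := by
  obtain ⟨e₁, e₂, e₃, hne, hs, hL, h₁, h₂, h₃⟩ := hG.exists_star_eq_of_card_two h2
  rw [hL, Finset.sum_pair hne] at hsum
  refine good_of_star_eq hs ?_
  have hcases : ∀ x y : ZMod 2, x + y = 1 → x = 0 ∧ y ≠ 0 ∨ x ≠ 0 ∧ y = 0 := by decide
  have hmem := hrest e₃ (by simp [hs]) h₃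
  rcases hcases _ _ hsum with ⟨hx, hy⟩ | ⟨hx, hy⟩
  · rwa [hf _ h₁, hf _ h₂, if_pos hx, if_neg hy]
  · rwa [hf _ h₁, hf _ h₂, if_neg hx, if_pos hy, Finset.insert_comm]

theorem hasRepeat_of_sum_ne_one {L : Finset G.E} {c : G.E → ZMod 2} {f : G.E → Fin 15}
    {a b : Fin 15} (hf : ∀ e ∈ L, f e = if c e = 0 then a else b) {v : G.V}
    (h2 : (L ∩ G.star v).card = 2) (hsum : ∑ e ∈ L ∩ G.star v, c e ≠ 1) : HasRepeat f v := by
  obtain ⟨e₁, e₂, hne, hL⟩ := Finset.card_eq_two.1 h2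
  rw [hL, Finset.sum_pair hne] at hsum
  have h₁ : e₁ ∈ L ∩ G.star v := by simp [hL]
  have h₂ : e₂ ∈ L ∩ G.star v := by simp [hL]
  rw [Finset.mem_inter] at h₁ h₂
  refine ⟨e₁, h₁.2, e₂, h₂.2, hne, ?_⟩
  rw [hf _ h₁.1, hf _ h₂.1, not_imp_comm.1 zmod_two_add_eq_one_of_ne hsum]

/-- No triangle of `G` has all its vertices in `C`. -/
def TriangleFreeOn (C : Finset G.V) : Prop :=
  ∀ x ∈ C, ∀ y ∈ C, ∀ z ∈ C, ∀ e₁ e₂ e₃, ¬ G.IsTriangle e₁ e₂ e₃ x y z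

/-- The vertices of `C` on a cycle of the even cover `F`. -/
noncomputable def coveredVerts (C : Finset G.V) (F : Finset G.E) : Finset G.V :=
  C.filter fun v => (F ∩ G.star v).card = 2

/-- The vertices of `C` on no cycle of the even cover `F`. -/
noncomputable def missedVerts (C : Finset G.V) (F : Finset G.E) : Finset G.V :=
  C.filter fun v => (F ∩ G.star v).card = 0

/-- The vertices incident to an edge of `S`. -/
noncomputable def incidentVerts (S : Finset G.E) : Finset G.V :=
  Finset.univ.filter fun v => (S ∩ G.star v).Nonempty

theorem mem_coveredVerts {v : G.V} :
    v ∈ coveredVerts C F ↔ v ∈ C ∧ (F ∩ G.star v).card = 2 :=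
  Finset.mem_filter

theorem mem_missedVerts {v : G.V} :
    v ∈ missedVerts C F ↔ v ∈ C ∧ (F ∩ G.star v).card = 0 :=
  Finset.mem_filter

theorem mem_incidentVerts {S : Finset G.E} {v : G.V} :
    v ∈ incidentVerts S ↔ ∃ e ∈ S, e ∈ G.star v := by
  simp [incidentVerts, Finset.Nonempty]

theorem disjoint_missedVerts_coveredVerts (C : Finset G.V) (F : Finset G.E) :
    Disjoint (missedVerts C F) (coveredVerts C F) := by
  refine Finset.disjoint_filter.2 fun v _ h0 h2 => ?_
  omega

theorem IsEvenCover.missedVerts_union_coveredVerts (hF : IsEvenCover C F) :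
    missedVerts C F ∪ coveredVerts C F = C := by
  rw [missedVerts, coveredVerts, ← Finset.filter_or]
  exact Finset.filter_true_of_mem hF.card_eq_zero_or_two

theorem IsEvenCover.card_missedVerts_add_card_coveredVerts (hF : IsEvenCover C F) :
    (missedVerts C F).card + (coveredVerts C F).card = C.card := by
  rw [← Finset.card_union_of_disjoint (disjoint_missedVerts_coveredVerts C F),
    hF.missedVerts_union_coveredVerts]

theorem IsEvenCover.mem_coveredVerts_of_notMem (hF : IsEvenCover C F) {v : G.V} (hv : v ∈ C)
    (h : v ∉ boundaryVerts C) : v ∈ coveredVerts C F :=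
  mem_coveredVerts.2 ⟨hv, hF.card_eq_two v hv h⟩

theorem IsEvenCover.mem_coveredVerts_of_mem (hF : IsEvenCover C F) {v : G.V} (hv : v ∈ C)
    {e : G.E} (he : e ∈ F) (hev : e ∈ G.star v) : v ∈ coveredVerts C F :=
  mem_coveredVerts.2 ⟨hv, (hF.card_eq_zero_or_two v hv).resolve_left
    (Finset.card_pos.2 ⟨e, Finset.mem_inter.2 ⟨he, hev⟩⟩).ne'⟩

theorem IsEvenCover.component_subset_coveredVerts (hF : IsEvenCover C F) {v : G.V}
    (hv : v ∈ coveredVerts C F) : component (F : Set G.E) v ⊆ coveredVerts C F := by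
  intro w hw
  rcases mem_component.1 hw with _ | ⟨-, e, he, hends⟩
  · exact hv
  · exact hF.mem_coveredVerts_of_mem ((mem_innerEdges_iff hends).1 (hF.subset he)).2 he
      ((mem_star_iff hends).2 (.inr rfl))

theorem IsEvenCover.notMem_of_mem_boundary (hF : IsEvenCover C F) {e : G.E}
    (he : e ∈ boundary C) : e ∉ F := fun h =>
  Finset.disjoint_left.1 (disjoint_innerEdges_boundary C) (hF.subset h) he

theorem Loopless.two_le_card_component (hl : G.Loopless) {v : G.V}
    (h : (F ∩ G.star v).Nonempty) : 2 ≤ (component (F : Set G.E) v).card := by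
  obtain ⟨e, he⟩ := h
  obtain ⟨heF, hev⟩ := Finset.mem_inter.1 he
  obtain ⟨w, hvw, hends⟩ := hl.exists_ends_of_mem_star hev
  rw [← Finset.card_pair hvw]
  refine Finset.card_le_card ?_
  simp only [Finset.insert_subset_iff, Finset.singleton_subset_iff, self_mem_component, true_and]
  exact mem_component.2 (.tail .refl ⟨e, heF, hends⟩)

theorem Loopless.exists_joining_of_card_two (hl : G.Loopless) {x y z : G.V} (hxy : x ≠ y)
    (hclosed : ∀ e ∈ F, e ∉ boundary {x, y, z}) (hx : (F ∩ G.star x).card = 2)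
    (hy : (F ∩ G.star y).card = 2) (hz : (F ∩ G.star z).card = 2) :
    ∃ e ∈ F, G.ends e = s(x, y) := by
  -- otherwise the four edges of `F` at `x` and `y` all lead to `z`
  by_contra! hno
  have hsub : ∀ v, (v = x ∨ v = y) → F ∩ G.star v ⊆ F ∩ G.star z := by
    intro v hv e he
    obtain ⟨heF, hev⟩ := Finset.mem_inter.1 he
    obtain ⟨w, hvw, hends⟩ := hl.exists_ends_of_mem_star hev
    have hcl := hclosed e heF
    have hnxy := hno e heF
    rw [mem_boundary_iff hends] at hcl
    rw [hends] at hnxy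
    have hwz : w = z := by
      simp only [Finset.mem_insert, Finset.mem_singleton] at hcl
      grind
    exact Finset.mem_inter.2 ⟨heF, (mem_star_iff hends).2 (.inr hwz.symm)⟩
  have hle := Finset.card_le_card (Finset.union_subset (hsub x (.inl rfl)) (hsub y (.inr rfl)))
  rw [Finset.card_union_of_disjoint] at hle
  · omega
  · rw [Finset.disjoint_left]
    intro e hex hey
    obtain ⟨heF, hex⟩ := Finset.mem_inter.1 hex
    obtain ⟨w, -, hends⟩ := hl.exists_ends_of_mem_star hex
    refine hno e heF ?_
    rw [hends, ((mem_star_iff hends).1 (Finset.mem_inter.1 hey).2).resolve_left hxy.symm]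

theorem IsEvenCover.five_le_card_component (hl : G.Loopless) (hF : IsEvenCover C F)
    (hT : TriangleFreeOn C) {v : G.V} (hv : v ∈ coveredVerts C F)
    (hodd : Odd (component (F : Set G.E) v).card) : 5 ≤ (component (F : Set G.E) v).card := by
  have htwo := hl.two_le_card_component (Finset.card_pos.1 ((mem_coveredVerts.1 hv).2 ▸ two_pos))
  by_contra hlt
  obtain ⟨x, y, z, hxy, hxz, hyz, hK⟩ := Finset.card_eq_three.1
    (show (component (F : Set G.E) v).card = 3 by obtain ⟨k, hk⟩ := hodd; omega)
  have hclosed : ∀ e ∈ F, e ∉ boundary {x, y, z} :=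
    fun e he h => notMem_of_mem_boundary_component (hK ▸ h) he
  have hcov : ∀ w ∈ ({x, y, z} : Finset G.V), w ∈ C ∧ (F ∩ G.star w).card = 2 :=
    fun w hw => mem_coveredVerts.1 (hF.component_subset_coveredVerts hv (hK ▸ hw))
  obtain ⟨hxC, hx⟩ := hcov x (by simp)
  obtain ⟨hyC, hy⟩ := hcov y (by simp)
  obtain ⟨hzC, hz⟩ := hcov z (by simp)
  obtain ⟨e₁, -, h₁⟩ := hl.exists_joining_of_card_two hxy hclosed hx hy hz
  obtain ⟨e₂, -, h₂⟩ := hl.exists_joining_of_card_two hyz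
    (by rwa [show ({y, z, x} : Finset G.V) = {x, y, z} by ext; simp; tauto]) hy hz hx
  obtain ⟨e₃, -, h₃⟩ := hl.exists_joining_of_card_two hxz
    (by rwa [show ({x, z, y} : Finset G.V) = {x, y, z} by ext; simp; tauto]) hx hz hy
  exact hT x hxC y hyC z hzC e₁ e₂ e₃ ⟨hxy, hyz, hxz, h₁, h₂, h₃⟩

theorem IsRepresentative.sum_card_inter_component_le {A : Set G.E} {ρ : G.V → G.V}
    (hρ : IsRepresentative A ρ) {R : Finset G.V} (hR : ∀ r ∈ R, ρ r = r) (Y : Finset G.V) :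
    ∑ r ∈ R, (Y ∩ component A r).card ≤ Y.card := by
  rw [← Finset.card_biUnion]
  · exact Finset.card_le_card (Finset.biUnion_subset.2 fun r _ => Finset.inter_subset_left)
  · intro r hr r' hr' hne
    rw [Function.onFun, Finset.disjoint_left]
    intro w hw hw'
    rw [Finset.mem_inter, mem_component] at hw hw'
    exact hne (by
      rw [← hR r hr, ← hR r' hr', hρ.eq_of_reach _ _ hw.2, hρ.eq_of_reach _ _ hw'.2])

/-- The representatives of the cycles of `F` with an odd number of vertices outside `U`: the
vertices of the cycles at which an alternating 2-colouring of `F`, with a further defect at each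
vertex of `U`, cannot succeed. -/
noncomputable def oddReps (C : Finset G.V) (F : Finset G.E) (ρ : G.V → G.V) (U : Finset G.V) :
    Finset G.V :=
  (coveredVerts C F).filter fun v => ρ v = v ∧ Odd (component (F : Set G.E) v \ U).card

theorem mem_oddReps {ρ : G.V → G.V} {U : Finset G.V} {v : G.V} :
    v ∈ oddReps C F ρ U ↔
      v ∈ coveredVerts C F ∧ ρ v = v ∧ Odd (component (F : Set G.E) v \ U).card :=
  Finset.mem_filter

theorem IsEvenCover.five_le_of_mem_oddReps (hl : G.Loopless) (hF : IsEvenCover C F)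
    (hT : TriangleFreeOn C) {ρ : G.V → G.V} {U : Finset G.V} {v : G.V}
    (hv : v ∈ oddReps C F ρ U) :
    5 ≤ (component (F : Set G.E) v).card + 3 * (U ∩ component (F : Set G.E) v).card := by
  obtain ⟨hcov, -, hodd⟩ := mem_oddReps.1 hv
  rcases (U ∩ component (F : Set G.E) v).eq_empty_or_nonempty with h | h
  · rw [Finset.sdiff_eq_self_of_disjoint
      (Finset.disjoint_iff_inter_eq_empty.2 (by rwa [Finset.inter_comm]))] at hodd
    exact (hF.five_le_card_component hl hT hcov hodd).trans (Nat.le_add_right _ _)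
  · have htwo := hl.two_le_card_component
      (Finset.card_pos.1 ((mem_coveredVerts.1 hcov).2 ▸ two_pos))
    have hpos := Finset.card_pos.2 h
    omega

theorem IsEvenCover.five_mul_card_le (hl : G.Loopless) (hF : IsEvenCover C F)
    (hT : TriangleFreeOn C) {ρ : G.V → G.V} (hρ : IsRepresentative (F : Set G.E) ρ)
    {R Q U : Finset G.V} (hR : R ⊆ oddReps C F ρ U)
    (hQ : ∀ r ∈ R, component (F : Set G.E) r ⊆ Q) : 5 * R.card ≤ Q.card + 3 * U.card := by
  have hfix : ∀ r ∈ R, ρ r = r := fun r hr => (mem_oddReps.1 (hR hr)).2.1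
  calc 5 * R.card = ∑ _r ∈ R, 5 := by rw [Finset.sum_const, smul_eq_mul, mul_comm]
    _ ≤ ∑ r ∈ R, ((Q ∩ component (F : Set G.E) r).card +
          3 * (U ∩ component (F : Set G.E) r).card) := Finset.sum_le_sum fun r hr => by
        rw [Finset.inter_eq_right.2 (hQ r hr)]
        exact hF.five_le_of_mem_oddReps hl hT (hR hr)
    _ ≤ Q.card + 3 * U.card := by
        rw [Finset.sum_add_distrib, ← Finset.mul_sum]
        have hQle := hρ.sum_card_inter_component_le hfix Q
        have hUle := hρ.sum_card_inter_component_le hfix U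
        omega

end Colouring

/-! ### The two colourings of a bridgeless piece -/

section PieceColouring

variable {G : Multigraph} {C : Finset G.V} {F S : Finset G.E} {U : Finset G.V}

theorem eq_of_mem_boundary_of_mem_star {e : G.E} (he : e ∈ boundary C) {u v : G.V} (hu : u ∈ C)
    (heu : e ∈ G.star u) (hv : v ∈ C) (hev : e ∈ G.star v) : u = v := by
  obtain ⟨x, -, y, hy, hends⟩ := mem_boundary.1 he
  have hx : ∀ w ∈ C, e ∈ G.star w → w = x := fun w hw hew =>
    ((mem_star_iff hends).1 hew).resolve_right fun h => hy (h ▸ hw)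
  rw [hx u hu heu, hx v hv hev]

theorem Loopless.sum_eq_sum_inter_star (hl : G.Loopless) (hS : S ⊆ boundary C) {M : Type*}
    [AddCommMonoid M] (c : G.E → M) : ∑ e ∈ S, c e = ∑ v ∈ C, ∑ e ∈ S ∩ G.star v, c e := by
  have hinner : S ∩ innerEdges C = ∅ :=
    Finset.disjoint_iff_inter_eq_empty.1 ((disjoint_innerEdges_boundary C).symm.mono_left hS)
  rw [hl.sum_sum_inter_star, Finset.inter_eq_left.2 hS, hinner, Finset.sum_empty, smul_zero,
    add_zero]

theorem IsBridgelessPiece.sum_inter_star_eq (hG : G.Cubic) (hC : IsBridgelessPiece C)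
    (hS : S ⊆ boundary C) {v : G.V} (hv : v ∈ C) {M : Type*} [AddCommMonoid M] {c : G.E → M}
    {a : M} (hc : ∀ e ∈ S, e ∈ G.star v → c e = a) :
    ∑ e ∈ S ∩ G.star v, c e = if v ∈ incidentVerts S then a else 0 := by
  have hle : (S ∩ G.star v).card ≤ 1 := by
    rw [Finset.inter_comm]
    exact (Finset.card_le_card (Finset.inter_subset_inter_left hS)).trans
      (hC.card_star_inter_boundary_le_one hG hv)
  rw [Finset.sum_congr rfl fun e he => hc e (Finset.mem_inter.1 he).1 (Finset.mem_inter.1 he).2,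
    Finset.sum_const]
  split_ifs with hinc
  · obtain ⟨e, he⟩ := mem_incidentVerts.1 hinc
    rw [hle.antisymm (Finset.card_pos.2 ⟨e, Finset.mem_inter.2 he⟩), one_smul]
  · rw [Finset.not_nonempty_iff_eq_empty.1 (fun h => hinc (Finset.mem_filter.2 ⟨by simp, h⟩)),
      Finset.card_empty, zero_smul]

theorem IsBridgelessPiece.card_eq_card_inter_incidentVerts (hG : G.Cubic)
    (hC : IsBridgelessPiece C) (hS : S ⊆ boundary C) : S.card = (C ∩ incidentVerts S).card := by
  rw [Finset.card_eq_sum_ones, hG.1.sum_eq_sum_inter_star hS, ← Finset.filter_mem_eq_inter,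
    Finset.card_filter]
  exact Finset.sum_congr rfl fun v hv => hC.sum_inter_star_eq hG hS hv fun _ _ _ => rfl

theorem IsEvenCover.card_eq_add_card (hG : G.Cubic) (hC : IsBridgelessPiece C)
    (hF : IsEvenCover C F) (hS : S ⊆ boundary C) :
    S.card = (missedVerts C F ∩ incidentVerts S).card +
      (coveredVerts C F ∩ incidentVerts S).card := by
  rw [hC.card_eq_card_inter_incidentVerts hG hS, ← Finset.card_union_of_disjoint
    ((disjoint_missedVerts_coveredVerts C F).mono Finset.inter_subset_left
      Finset.inter_subset_left), ← Finset.union_inter_distrib_right,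
    hF.missedVerts_union_coveredVerts]

theorem mem_boundaryVerts_of_mem {e : G.E} (he : e ∈ boundary C) {v : G.V} (hv : v ∈ C)
    (hev : e ∈ G.star v) : v ∈ boundaryVerts C :=
  mem_boundaryVerts.2 ⟨hv, e, Finset.mem_inter.2 ⟨hev, he⟩⟩

theorem IsEvenCover.card_sdiff_inter_star (hG : G.Cubic) (hC : IsBridgelessPiece C)
    (hF : IsEvenCover C F) {v : G.V} (hv : v ∈ missedVerts C F) :
    ((innerEdges C \ F) ∩ G.star v).card = 2 := by
  obtain ⟨hvC, h0⟩ := mem_missedVerts.1 hv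
  have hb : v ∈ boundaryVerts C := by
    by_contra h
    have := hF.card_eq_two v hvC h
    omega
  have h1 := hC.card_star_inter_boundary_eq_one hG hb
  have h3 := hG.card_innerEdges_inter_star_add hvC
  have hsum := card_sdiff_inter_star_add hF.subset v
  omega

/-- Colour `F` with `5, 10` according to `c`, and all other edges with `0` except those leaving
`C` from `U`, which get `1`. -/
noncomputable def fiveTenColoring (C : Finset G.V) (F : Finset G.E) (U : Finset G.V)
    (c : G.E → ZMod 2) (e : G.E) : Fin 15 :=
  if e ∈ F then if c e = 0 then 5 else 10
  else if e ∈ boundary C ∧ ∃ u ∈ U, e ∈ G.star u then 1 else 0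

theorem IsEvenCover.hasRepeat_fiveTenColoring (hG : G.Cubic) (hC : IsBridgelessPiece C)
    (hF : IsEvenCover C F) (c : G.E → ZMod 2) {v : G.V} (hv : v ∈ missedVerts C F) :
    HasRepeat (fiveTenColoring C F U c) v := by
  refine hasRepeat_of_sum_ne_one (c := 0) (a := 0) (b := 0) (fun e he => ?_)
    (hF.card_sdiff_inter_star hG hC hv) (by simp)
  obtain ⟨hinner, heF⟩ := Finset.mem_sdiff.1 he
  rw [fiveTenColoring, if_neg heF,
    if_neg fun h => Finset.disjoint_left.1 (disjoint_innerEdges_boundary C) hinner h.1, ite_self]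

theorem IsEvenCover.good_fiveTenColoring (hG : G.Cubic) {c : G.E → ZMod 2} (hU : U ⊆ C) {v : G.V}
    (hv : v ∈ coveredVerts C F) (hvU : v ∉ U) (hsum : ∑ e ∈ F ∩ G.star v, c e = 1) :
    Good (fiveTenColoring C F U c) v := by
  obtain ⟨hvC, h2⟩ := mem_coveredVerts.1 hv
  refine hG.good_of_sum_eq_one (f := fiveTenColoring C F U c) (fun e he => if_pos he) h2 hsum
    fun e hev heF => ?_
  rw [fiveTenColoring, if_neg heF, if_neg]
  · decide
  · rintro ⟨hb, u, hu, heu⟩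
    exact hvU (eq_of_mem_boundary_of_mem_star hb (hU hu) heu hvC hev ▸ hu)

theorem exists_coloring_five_ten (hG : G.Cubic) (hC : IsBridgelessPiece C)
    (hF : IsEvenCover C F) {ρ : G.V → G.V} (hρ : IsRepresentative (F : Set G.E) ρ) (hU : U ⊆ C)
    (hρU : ∀ u ∈ U, ρ u ≠ u) :
    ∃ g : G.E → Fin 15, (∀ e ∈ boundary C, g e = if ∃ u ∈ U, e ∈ G.star u then 1 else 0) ∧
      (∀ v ∈ C, Admissible g v) ∧
      (badVerts g C).card ≤ (missedVerts C F).card + U.card + (oddReps C F ρ U).card := by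
  obtain ⟨c, hc⟩ := hG.1.exists_chain_eq_or_odd hρ fun v => if v ∈ U then 0 else 1
  have hodd : ∀ v ∈ coveredVerts C F, v ∉ U → ∑ e ∈ F ∩ G.star v, c e ≠ 1 →
      v ∈ oddReps C F ρ U := by
    intro v hv hvU hsum
    obtain ⟨hrep, hone⟩ := (hc v).resolve_left (by rwa [if_neg hvU])
    rw [Finset.sum_ite, Finset.sum_const_zero, zero_add, Finset.sum_const, nsmul_one,
      Finset.filter_notMem_eq_sdiff, ZMod.natCast_eq_one_iff_odd] at hone
    exact mem_oddReps.2 ⟨hv, hrep, hone⟩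
  have hcases : ∀ v ∈ C, Good (fiveTenColoring C F U c) v ∨
      HasRepeat (fiveTenColoring C F U c) v ∧ v ∈ missedVerts C F ∪ U ∪ oddReps C F ρ U := by
    intro v hv
    simp only [Finset.mem_union]
    rw [← hF.missedVerts_union_coveredVerts, Finset.mem_union] at hv
    rcases hv with hv | hv
    · exact .inr ⟨hF.hasRepeat_fiveTenColoring hG hC c hv, .inl (.inl hv)⟩
    · have hrep := hasRepeat_of_sum_ne_one (f := fiveTenColoring C F U c) (c := c)
        (fun e he => if_pos he) (mem_coveredVerts.1 hv).2
      by_cases hsum : ∑ e ∈ F ∩ G.star v, c e = 1 <;> by_cases hvU : v ∈ U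
      · have h0 := (hc v).resolve_right fun h => hρU v hvU h.1
        rw [hsum, if_pos hvU] at h0
        exact absurd h0 one_ne_zero
      · exact .inl (IsEvenCover.good_fiveTenColoring hG hU hv hvU hsum)
      · exact .inr ⟨hrep hsum, .inl (.inr hvU)⟩
      · exact .inr ⟨hrep hsum, .inr (hodd v hv hvU hsum)⟩
  refine ⟨fiveTenColoring C F U c, fun e he => ?_, fun v hv => (hcases v hv).imp_right And.left,
    (Finset.card_le_card fun v hv => ?_).trans
      ((Finset.card_union_le _ _).trans (Nat.add_le_add_right (Finset.card_union_le _ _) _))⟩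
  · simp only [fiveTenColoring, if_neg (hF.notMem_of_mem_boundary he), he, true_and]
  · obtain ⟨hvC, hbad⟩ := Finset.mem_filter.1 hv
    exact ((hcases v hvC).resolve_left hbad).2

/-- Five times the number of bad vertices minus the number of vertices, for a 3-vertex branch
attached by an edge of colour `x`. -/
def endBlockExcess (x : Fin 15) : ℤ := if x ∈ ({1, 2} : Finset (Fin 15)) then 2 else -3

theorem component_subset {A : Finset G.E} (hA : A ⊆ innerEdges C) {v : G.V} (hv : v ∈ C) :
    component (A : Set G.E) v ⊆ C := by
  intro w hw
  rcases mem_component.1 hw with _ | ⟨-, e, he, hends⟩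
  · exact hv
  · exact ((mem_innerEdges_iff hends).1 (hA he)).2

theorem IsEvenCover.exists_reach_coveredVerts (hC : IsBridgelessPiece C) (hF : IsEvenCover C F)
    (hcov : (coveredVerts C F).Nonempty) {v : G.V} (hv : v ∈ C) :
    ∃ w ∈ coveredVerts C F, G.Reach (innerEdges C \ F : Finset G.E) v w := by
  by_contra! hno
  set K := component ((innerEdges C \ F : Finset G.E) : Set G.E) v with hK
  have hKC : K ⊆ C := component_subset Finset.sdiff_subset hv
  obtain ⟨x, hx⟩ := hcov
  have hcut := hC.two_le_card_cut K hKC ⟨v, self_mem_component⟩ fun h =>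
    hno x hx (mem_component.1 (hK ▸ h ▸ (mem_coveredVerts.1 hx).1))
  obtain ⟨e, he⟩ := Finset.card_pos.1 (two_pos.trans_le hcut)
  obtain ⟨hb, hinner⟩ := Finset.mem_inter.1 he
  have heF : e ∈ F := by
    by_contra heF
    exact notMem_of_mem_boundary_component hb
      (Finset.mem_coe.2 (Finset.mem_sdiff.2 ⟨hinner, heF⟩))
  obtain ⟨u, hu, w, -, hends⟩ := mem_boundary.1 hb
  exact hno u (hF.mem_coveredVerts_of_mem (hKC hu) heF ((mem_star_iff hends).2 (.inl rfl)))
    (mem_component.1 hu)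

theorem IsEvenCover.exists_chain_missedVerts (hl : G.Loopless) (hC : IsBridgelessPiece C)
    (hF : IsEvenCover C F) (hcov : (coveredVerts C F).Nonempty) :
    ∃ d : G.E → ZMod 2, ∀ v ∈ missedVerts C F,
      ∑ e ∈ (innerEdges C \ F) ∩ G.star v, d e = 1 := by
  obtain ⟨ρ, hρ, hpref⟩ := exists_isRepresentative ((innerEdges C \ F : Finset G.E) : Set G.E)
    fun v => v ∈ coveredVerts C F
  obtain ⟨d, hd⟩ := hl.exists_chain hρ.reach fun _ => 1
  refine ⟨d, fun v hv => hd v fun w hw => ?_⟩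
  obtain ⟨x, hx, hreach⟩ := hF.exists_reach_coveredVerts hC hcov (mem_missedVerts.1 hv).1
  have hvcov := hpref v x hreach hx
  rw [← hw, hρ.apply_apply, hw] at hvcov
  exact Finset.disjoint_left.1 (disjoint_missedVerts_coveredVerts C F) hv hvcov

/-- Colour `F` with `3, 4` according to `c`, the other edges inside `C` with `1, 2` according to
`d`, and the edges leaving `C` with `1` at covered and `0` at missed vertices; the edges of `S` at
a covered vertex where the colouring of `F` fails are also coloured `0`. -/
noncomputable def threeFourColoring (C : Finset G.V) (F S : Finset G.E) (c d : G.E → ZMod 2)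
    (e : G.E) : Fin 15 :=
  if e ∈ F then if c e = 0 then 3 else 4
  else if e ∈ innerEdges C then if d e = 0 then 1 else 2
  else if ∃ u ∈ coveredVerts C F, e ∈ G.star u ∧ (e ∈ S → ∑ e' ∈ F ∩ G.star u, c e' = 1) then 1
  else 0

section threeFour

variable {c d : G.E → ZMod 2} {v : G.V}

theorem IsEvenCover.threeFourColoring_of_mem_boundary (hF : IsEvenCover C F) {e : G.E}
    (he : e ∈ boundary C) (hv : v ∈ C) (hev : e ∈ G.star v) :
    threeFourColoring C F S c d e =
      if v ∈ coveredVerts C F ∧ (e ∈ S → ∑ e' ∈ F ∩ G.star v, c e' = 1) then 1 else 0 := by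
  rw [threeFourColoring, if_neg (hF.notMem_of_mem_boundary he),
    if_neg (Finset.disjoint_right.1 (disjoint_innerEdges_boundary C) he)]
  refine if_congr ⟨?_, fun h => ⟨v, h.1, hev, h.2⟩⟩ rfl rfl
  rintro ⟨u, hu, heu, h⟩
  obtain rfl := eq_of_mem_boundary_of_mem_star he (mem_coveredVerts.1 hu).1 heu hv hev
  exact ⟨hu, h⟩

theorem IsEvenCover.threeFourColoring_missedVerts (hF : IsEvenCover C F) {e : G.E}
    (he : e ∈ boundary C) (hv : v ∈ missedVerts C F) (hev : e ∈ G.star v) :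
    threeFourColoring C F S c d e = 0 := by
  rw [hF.threeFourColoring_of_mem_boundary he (mem_missedVerts.1 hv).1 hev,
    if_neg fun h => Finset.disjoint_left.1 (disjoint_missedVerts_coveredVerts C F) hv h.1]

theorem IsEvenCover.good_threeFourColoring_of_mem_missedVerts (hG : G.Cubic)
    (hC : IsBridgelessPiece C) (hF : IsEvenCover C F) (hv : v ∈ missedVerts C F)
    (hsum : ∑ e ∈ (innerEdges C \ F) ∩ G.star v, d e = 1) :
    Good (threeFourColoring C F S c d) v := by
  obtain ⟨hvC, h0⟩ := mem_missedVerts.1 hv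
  refine hG.good_of_sum_eq_one (c := d) (a := 1) (b := 2) (fun e he => ?_)
    (hF.card_sdiff_inter_star hG hC hv) hsum fun e hev he => ?_
  · obtain ⟨hinner, heF⟩ := Finset.mem_sdiff.1 he
    rw [threeFourColoring, if_neg heF, if_pos hinner]
  · have heF : e ∉ F := fun h =>
      Finset.eq_empty_iff_forall_notMem.1 (Finset.card_eq_zero.1 h0) e (Finset.mem_inter.2 ⟨h, hev⟩)
    have hb : e ∈ boundary C := (hG.1.mem_innerEdges_or_mem_boundary hvC hev).resolve_left
      fun h => he (Finset.mem_sdiff.2 ⟨h, heF⟩)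
    rw [hF.threeFourColoring_missedVerts hb hv hev]
    decide

theorem IsEvenCover.good_threeFourColoring_of_sum_eq_one (hG : G.Cubic) (hF : IsEvenCover C F)
    (hv : v ∈ coveredVerts C F) (hsum : ∑ e ∈ F ∩ G.star v, c e = 1) :
    Good (threeFourColoring C F S c d) v := by
  obtain ⟨hvC, h2⟩ := mem_coveredVerts.1 hv
  refine hG.good_of_sum_eq_one (f := threeFourColoring C F S c d) (fun e he => if_pos he) h2 hsum
    fun e hev heF => ?_
  rcases hG.1.mem_innerEdges_or_mem_boundary hvC hev with hinner | hb
  · rw [threeFourColoring, if_neg heF, if_pos hinner]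
    split_ifs <;> decide
  · rw [hF.threeFourColoring_of_mem_boundary hb hvC hev, if_pos ⟨hv, fun _ => hsum⟩]
    decide

theorem hasRepeat_threeFourColoring (hv : v ∈ coveredVerts C F)
    (hsum : ∑ e ∈ F ∩ G.star v, c e ≠ 1) : HasRepeat (threeFourColoring C F S c d) v :=
  hasRepeat_of_sum_ne_one (f := threeFourColoring C F S c d) (fun _ he => if_pos he)
    (mem_coveredVerts.1 hv).2 hsum

theorem IsEvenCover.sum_endBlockExcess_threeFourColoring (hG : G.Cubic)
    (hC : IsBridgelessPiece C) (hF : IsEvenCover C F) (hS : S ⊆ boundary C) (hv : v ∈ C) :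
    ∑ e ∈ S ∩ G.star v, endBlockExcess (threeFourColoring C F S c d e) =
      if v ∈ incidentVerts S then
        if v ∈ coveredVerts C F ∧ ∑ e ∈ F ∩ G.star v, c e = 1 then 2 else -3
      else 0 := by
  refine hC.sum_inter_star_eq hG hS hv fun e heS hev => ?_
  rw [hF.threeFourColoring_of_mem_boundary (hS heS) hv hev]
  simp only [heS, forall_const]
  split_ifs <;> decide

theorem IsEvenCover.weight_threeFourColoring_le (hG : G.Cubic) (hC : IsBridgelessPiece C)
    (hF : IsEvenCover C F) (hS : S ⊆ boundary C) {O : Finset G.V} (hO : O ⊆ C)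
    (hmissed : ∀ v ∈ missedVerts C F, Good (threeFourColoring C F S c d) v)
    (hodd : ∀ v ∈ coveredVerts C F, ∑ e ∈ F ∩ G.star v, c e ≠ 1 → v ∈ O) :
    5 * ((badVerts (threeFourColoring C F S c d) C).card : ℤ) +
        ∑ e ∈ S, endBlockExcess (threeFourColoring C F S c d e) ≤
      2 * (coveredVerts C F ∩ incidentVerts S).card -
        3 * (missedVerts C F ∩ incidentVerts S).card + 5 * (O \ incidentVerts S).card := by
  have hcard : ∀ A ⊆ C, (A.card : ℤ) = ∑ v ∈ C, if v ∈ A then 1 else 0 := fun A hA => by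
    rw [Finset.sum_boole, Finset.filter_mem_eq_inter, Finset.inter_eq_right.2 hA]
  rw [hG.1.sum_eq_sum_inter_star hS, hcard (badVerts _ C) (Finset.filter_subset _ C),
    hcard (coveredVerts C F ∩ _) (Finset.inter_subset_left.trans (Finset.filter_subset _ C)),
    hcard (missedVerts C F ∩ _) (Finset.inter_subset_left.trans (Finset.filter_subset _ C)),
    hcard (O \ _) (Finset.sdiff_subset.trans hO)]
  simp only [Finset.mul_sum, ← Finset.sum_add_distrib, ← Finset.sum_sub_distrib]
  refine Finset.sum_le_sum fun v hv => ?_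
  rw [hF.sum_endBlockExcess_threeFourColoring hG hC hS hv]
  have hdisj : v ∈ missedVerts C F → v ∉ coveredVerts C F := fun h =>
    Finset.disjoint_left.1 (disjoint_missedVerts_coveredVerts C F) h
  simp only [badVerts, Finset.mem_filter, hv, true_and, Finset.mem_inter, Finset.mem_sdiff]
  rcases Finset.mem_union.1 (hF.missedVerts_union_coveredVerts.symm ▸ hv) with hm | hc
  · have hnc := hdisj hm
    have hgood := hmissed v hm
    split_ifs <;> simp_all
  · have hnm : v ∉ missedVerts C F := fun h => hdisj h hc
    by_cases hsum : ∑ e ∈ F ∩ G.star v, c e = 1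
    · have hgood := hF.good_threeFourColoring_of_sum_eq_one (S := S) (d := d) hG hc hsum
      split_ifs <;> simp_all
    · have := hodd v hc hsum
      split_ifs <;> simp_all

end threeFour

theorem exists_coloring_three_four (hG : G.Cubic) (hC : IsBridgelessPiece C)
    (hF : IsEvenCover C F) (hcov : (coveredVerts C F).Nonempty) {ρ : G.V → G.V}
    (hρ : IsRepresentative (F : Set G.E) ρ) (hS : S ⊆ boundary C) :
    ∃ g : G.E → Fin 15, (∀ e ∈ boundary C, g e = 0 ∨ g e = 1) ∧
      (∀ e ∈ boundary C, e ∉ S → ∀ u ∈ C, e ∈ G.star u →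
        g e = if u ∈ coveredVerts C F then 1 else 0) ∧
      (∀ v ∈ C, Admissible g v) ∧
      5 * ((badVerts g C).card : ℤ) + ∑ e ∈ S, endBlockExcess (g e) ≤
        2 * (coveredVerts C F ∩ incidentVerts S).card -
        3 * (missedVerts C F ∩ incidentVerts S).card +
        5 * (oddReps C F ρ ∅ \ incidentVerts S).card := by
  obtain ⟨c, hc⟩ := hG.1.exists_chain_eq_or_odd hρ fun _ => 1
  obtain ⟨d, hd⟩ := hF.exists_chain_missedVerts hG.1 hC hcov
  have hgood_missed : ∀ v ∈ missedVerts C F, Good (threeFourColoring C F S c d) v :=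
    fun v hv => hF.good_threeFourColoring_of_mem_missedVerts hG hC hv (hd v hv)
  have hodd : ∀ v ∈ coveredVerts C F, ∑ e ∈ F ∩ G.star v, c e ≠ 1 → v ∈ oddReps C F ρ ∅ := by
    intro v hv hsum
    refine mem_oddReps.2 ⟨hv, ((hc v).resolve_left hsum).imp_right fun h => ?_⟩
    rwa [Finset.sum_const, nsmul_one, ZMod.natCast_eq_one_iff_odd, ← Finset.sdiff_empty
      (s := component _ _)] at h
  refine ⟨threeFourColoring C F S c d, fun e he => ?_, fun e he heS u hu heu => ?_,
    fun v hv => ?_, ?_⟩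
  · obtain ⟨u, hu, w, -, hends⟩ := mem_boundary.1 he
    rw [hF.threeFourColoring_of_mem_boundary he hu ((mem_star_iff hends).2 (.inl rfl))]
    split_ifs <;> simp
  · rw [hF.threeFourColoring_of_mem_boundary he hu heu]
    simp only [heS, false_imp_iff, and_true]
  · rw [← hF.missedVerts_union_coveredVerts, Finset.mem_union] at hv
    rcases hv with hv | hv
    · exact .inl (hgood_missed v hv)
    · by_cases hsum : ∑ e ∈ F ∩ G.star v, c e = 1
      · exact .inl (hF.good_threeFourColoring_of_sum_eq_one hG hv hsum)
      · exact .inr (hasRepeat_threeFourColoring hv hsum)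
  · exact hF.weight_threeFourColoring_le hG hC hS (fun v hv =>
      (mem_coveredVerts.1 (mem_oddReps.1 hv).1).1) hgood_missed hodd

end PieceColouring

/-! ### Colouring around a bridgeless piece -/

section CoreColouring

variable {G : Multigraph} {C : Finset G.V} {F S : Finset G.E}

/-- One colour for each orbit of bridges of `S` and, within the fixed end-block, for each colour
class of edges that the colourings of the pieces put on a bridge of `G`. -/
def bridgeColors : Finset (Fin 15) := {0, 1, 2, 5, 10}

/-- There is a colouring around the piece `C` with colour `κ` on the boundary edge `e₀` whose bad
vertices, together with those of 3-vertex branches attached along `S`, are at most a fifth of all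
vertices involved. -/
def CoreColoring (C : Finset G.V) (e₀ : G.E) (S : Finset G.E) (κ : Fin 15) : Prop :=
  ∃ g : G.E → Fin 15, g e₀ = κ ∧ (∀ e ∈ boundary C, g e ∈ bridgeColors) ∧
    (∀ v ∈ C, Admissible g v) ∧
    5 * ((badVerts g C).card : ℤ) + ∑ e ∈ S, endBlockExcess (g e) ≤ C.card

theorem IsEvenCover.sum_card_sdiff_inter_star (hG : G.Cubic) (hC : IsBridgelessPiece C)
    (hF : IsEvenCover C F) {K : Finset G.V} (hK : K ⊆ coveredVerts C F) :
    ∑ w ∈ K, ((innerEdges C \ F) ∩ G.star w).card = (K \ boundaryVerts C).card := by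
  rw [Finset.sdiff_eq_filter K, Finset.card_filter]
  refine Finset.sum_congr rfl fun w hw => ?_
  obtain ⟨hwC, h2⟩ := mem_coveredVerts.1 (hK hw)
  have h3 := hG.card_innerEdges_inter_star_add hwC
  have hsum := card_sdiff_inter_star_add hF.subset w
  split_ifs with hb
  · have h1 := hC.card_star_inter_boundary_eq_one hG hb
    omega
  · have h0 := Finset.card_eq_zero.2 (star_inter_boundary_eq_empty hwC hb)
    omega

theorem IsEvenCover.two_le_card_component_sdiff (hG : G.Cubic) (hC : IsBridgelessPiece C)
    (hF : IsEvenCover C F) (hV : ∃ v ∈ C, v ∉ boundaryVerts C) {v : G.V}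
    (hv : v ∈ coveredVerts C F) :
    2 ≤ (component (F : Set G.E) v \ boundaryVerts C).card := by
  set K := component (F : Set G.E) v
  have hKC : K ⊆ C := component_subset hF.subset (mem_coveredVerts.1 hv).1
  have hsum : (K \ boundaryVerts C).card = ((innerEdges C \ F) ∩ boundary K).card +
      2 * ((innerEdges C \ F) ∩ innerEdges K).card := by
    rw [← hF.sum_card_sdiff_inter_star hG hC (hF.component_subset_coveredVerts hv),
      hG.1.sum_card_inter_star]
  by_cases hKe : K = C
  · have hleave : (innerEdges C \ F) ∩ boundary K = ∅ := by
      rw [hKe]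
      exact Finset.disjoint_iff_inter_eq_empty.1
        ((disjoint_innerEdges_boundary C).mono_left Finset.sdiff_subset)
    have hpos : 0 < (K \ boundaryVerts C).card := by
      obtain ⟨x, hx, hxb⟩ := hV
      exact Finset.card_pos.2 ⟨x, Finset.mem_sdiff.2 ⟨hKe ▸ hx, hxb⟩⟩
    rw [hleave, Finset.card_empty] at hsum
    omega
  · have hcut := hC.two_le_card_cut K hKC ⟨v, self_mem_component⟩ hKe
    have hsub : boundary K ∩ innerEdges C ⊆ (innerEdges C \ F) ∩ boundary K := fun e he => by
      obtain ⟨hb, hinner⟩ := Finset.mem_inter.1 he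
      exact Finset.mem_inter.2
        ⟨Finset.mem_sdiff.2 ⟨hinner, notMem_of_mem_boundary_component hb⟩, hb⟩
    have hle := Finset.card_le_card hsub
    omega

/-- The vertices on those cycles of `F` that are incident with an edge of `S`. -/
noncomputable def attachedVerts (C : Finset G.V) (F S : Finset G.E) : Finset G.V :=
  (coveredVerts C F).filter fun v => ∃ w ∈ component (F : Set G.E) v, w ∈ incidentVerts S

theorem mem_attachedVerts {v : G.V} : v ∈ attachedVerts C F S ↔
    v ∈ coveredVerts C F ∧ ∃ w ∈ component (F : Set G.E) v, w ∈ incidentVerts S :=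
  Finset.mem_filter

theorem coveredVerts_inter_incidentVerts_subset :
    coveredVerts C F ∩ incidentVerts S ⊆ attachedVerts C F S := fun v hv => by
  obtain ⟨hcov, hinc⟩ := Finset.mem_inter.1 hv
  exact mem_attachedVerts.2 ⟨hcov, v, self_mem_component, hinc⟩

theorem IsEvenCover.component_subset_sdiff_attachedVerts (hF : IsEvenCover C F) {v : G.V}
    (hv : v ∈ coveredVerts C F \ attachedVerts C F S) :
    component (F : Set G.E) v ⊆ coveredVerts C F \ attachedVerts C F S := by
  obtain ⟨hcov, hnot⟩ := Finset.mem_sdiff.1 hv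
  intro w hw
  refine Finset.mem_sdiff.2 ⟨hF.component_subset_coveredVerts hcov hw, fun h => hnot ?_⟩
  refine mem_attachedVerts.2 ⟨hcov, ?_⟩
  rw [component_eq_of_reach (mem_component.1 hw)]
  exact (mem_attachedVerts.1 h).2

theorem card_attachedVerts_add_card_sdiff :
    (attachedVerts C F S).card + (coveredVerts C F \ attachedVerts C F S).card =
      (coveredVerts C F).card := by
  rw [add_comm]
  exact Finset.card_sdiff_add_card_eq_card fun v hv => (mem_attachedVerts.1 hv).1

section CoreColoring

variable {e₀ : G.E} {u₀ : G.V} {κ : Fin 15}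

theorem coreColoring_three_four (hG : G.Cubic) (hC : IsBridgelessPiece C) (hF : IsEvenCover C F)
    (hT : TriangleFreeOn C) (hcov : (coveredVerts C F).Nonempty) (hS : S ⊆ boundary C)
    (he₀ : e₀ ∈ boundary C) (heS : e₀ ∉ S) (hu₀ : u₀ ∈ C) (heu : e₀ ∈ G.star u₀)
    (hκ : κ = if u₀ ∈ coveredVerts C F then 1 else 0)
    (hle : 2 * (coveredVerts C F ∩ incidentVerts S).card ≤ (attachedVerts C F S).card +
      (missedVerts C F).card + 3 * (missedVerts C F ∩ incidentVerts S).card) :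
    CoreColoring C e₀ S κ := by
  obtain ⟨ρ, hρ, hpref⟩ := exists_isRepresentative (F : Set G.E) (· ∈ incidentVerts S)
  obtain ⟨g, hbridge, hout, hadm, hweight⟩ := exists_coloring_three_four hG hC hF hcov hρ hS
  refine ⟨g, (hout e₀ he₀ heS u₀ hu₀ heu).trans hκ.symm, fun e he => ?_, hadm, ?_⟩
  · rcases hbridge e he with h | h <;> rw [h] <;> decide
  · set R := oddReps C F ρ ∅ \ incidentVerts S
    have hfree : ∀ r ∈ R, r ∈ coveredVerts C F \ attachedVerts C F S := fun r hr => by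
      obtain ⟨hodd, hinc⟩ := Finset.mem_sdiff.1 hr
      obtain ⟨hrcov, hfix, -⟩ := mem_oddReps.1 hodd
      refine Finset.mem_sdiff.2 ⟨hrcov, fun h => hinc ?_⟩
      obtain ⟨w, hw, hwinc⟩ := (mem_attachedVerts.1 h).2
      exact hfix ▸ hpref r w (mem_component.1 hw) hwinc
    have hfive := hF.five_mul_card_le hG.1 hT hρ (R := R) Finset.sdiff_subset
      fun r hr => hF.component_subset_sdiff_attachedVerts (hfree r hr)
    have hcard := hF.card_missedVerts_add_card_coveredVerts
    have hattached := card_attachedVerts_add_card_sdiff (C := C) (F := F) (S := S)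
    rw [Finset.card_empty] at hfive
    omega

theorem coreColoring_five_ten (hG : G.Cubic) (hC : IsBridgelessPiece C) (hF : IsEvenCover C F)
    {ρ : G.V → G.V} (hρ : IsRepresentative (F : Set G.E) ρ) (hS : S ⊆ boundary C)
    (he₀ : e₀ ∈ boundary C) (heS : e₀ ∉ S) (hu₀ : u₀ ∈ C) (heu : e₀ ∈ G.star u₀)
    {U : Finset G.V} (hU : U = ∅ ∧ κ = 0 ∨ U = {u₀} ∧ κ = 1 ∧ ρ u₀ ≠ u₀)
    (hle : 5 * (missedVerts C F).card + 5 * U.card + 5 * (oddReps C F ρ U).card ≤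
      C.card + 3 * S.card) :
    CoreColoring C e₀ S κ := by
  have hUu : ∀ u ∈ U, u = u₀ := by rcases hU with h | h <;> simp [h.1]
  have hρU : ∀ u ∈ U, ρ u ≠ u := by
    rcases hU with ⟨rfl, -⟩ | ⟨rfl, -, hne⟩
    · simp
    · simpa using hne
  obtain ⟨g, hbridge, hadm, hbad⟩ :=
    exists_coloring_five_ten hG hC hF hρ (fun u hu => hUu u hu ▸ hu₀) hρU
  refine ⟨g, ?_, fun e he => ?_, hadm, ?_⟩
  · rw [hbridge e₀ he₀]
    rcases hU with ⟨rfl, rfl⟩ | ⟨rfl, rfl, -⟩ <;> simp [heu]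
  · rw [hbridge e he]
    split_ifs <;> decide
  · have hexcess : ∀ e ∈ S, endBlockExcess (g e) = -3 := by
      intro e he
      have hnot : ¬ ∃ u ∈ U, e ∈ G.star u := by
        rintro ⟨u, hu, heu'⟩
        obtain rfl := hUu u hu
        refine heS ?_
        rwa [Finset.card_le_one.1 (hC.card_star_inter_boundary_le_one hG hu₀) e₀
          (Finset.mem_inter.2 ⟨heu, he₀⟩) e (Finset.mem_inter.2 ⟨heu', hS he⟩)]
      rw [hbridge e (hS he), if_neg hnot]
      decide
    rw [Finset.sum_congr rfl hexcess, Finset.sum_const, nsmul_eq_mul]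
    omega

end CoreColoring

theorem incidentVerts_subset_boundaryVerts (hS : S ⊆ boundary C) :
    C ∩ incidentVerts S ⊆ boundaryVerts C := fun v hv => by
  obtain ⟨hvC, hinc⟩ := Finset.mem_inter.1 hv
  obtain ⟨e, he, hev⟩ := mem_incidentVerts.1 hinc
  exact mem_boundaryVerts_of_mem (hS he) hvC hev

theorem IsEvenCover.card_oddReps_inter_attachedVerts_lt (hG : G.Cubic) (hC : IsBridgelessPiece C)
    (hF : IsEvenCover C F) (hV : ∃ v ∈ C, v ∉ boundaryVerts C) (hS : S ⊆ boundary C)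
    {ρ : G.V → G.V} (hρ : IsRepresentative (F : Set G.E) ρ)
    (hρS : ∀ v ∈ coveredVerts C F, ρ v ∉ incidentVerts S) (U : Finset G.V)
    (hne : (coveredVerts C F ∩ incidentVerts S).Nonempty) :
    (coveredVerts C F ∩ incidentVerts S).card +
      (oddReps C F ρ U ∩ attachedVerts C F S).card < (attachedVerts C F S).card := by
  obtain ⟨v, hv⟩ := hne
  obtain ⟨hvcov, hvinc⟩ := Finset.mem_inter.1 hv
  have hfix : ∀ w ∈ oddReps C F ρ U, ρ w = w := fun w hw => (mem_oddReps.1 hw).2.1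
  -- the cycle through `v` has two vertices without boundary edge, only one a representative
  obtain ⟨z, hz, hzR⟩ : ∃ z ∈ component (F : Set G.E) v \ boundaryVerts C, z ∉ oddReps C F ρ U := by
    by_contra! hall
    obtain ⟨x, hx, y, hy, hxy⟩ :=
      Finset.one_lt_card.1 (hF.two_le_card_component_sdiff hG hC hV hvcov)
    refine hxy ?_
    rw [← hfix x (hall x hx), ← hfix y (hall y hy),
      ← hρ.eq_of_reach v x (mem_component.1 (Finset.mem_sdiff.1 hx).1),
      ← hρ.eq_of_reach v y (mem_component.1 (Finset.mem_sdiff.1 hy).1)]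
  obtain ⟨hzv, hzb⟩ := Finset.mem_sdiff.1 hz
  have hzcov := hF.component_subset_coveredVerts hvcov hzv
  have hzinc : z ∉ incidentVerts S := fun h => hzb
    (incidentVerts_subset_boundaryVerts hS (Finset.mem_inter.2 ⟨(mem_coveredVerts.1 hzcov).1, h⟩))
  have hzatt : z ∈ attachedVerts C F S :=
    mem_attachedVerts.2 ⟨hzcov, v, mem_component.2 (mem_component.1 hzv).symm, hvinc⟩
  have hdisj : Disjoint (coveredVerts C F ∩ incidentVerts S)
      (oddReps C F ρ U ∩ attachedVerts C F S) := by
    rw [Finset.disjoint_left]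
    intro w hw hw'
    obtain ⟨hwcov, hwinc⟩ := Finset.mem_inter.1 hw
    refine hρS w hwcov ?_
    rwa [hfix w (Finset.mem_inter.1 hw').1]
  rw [← Finset.card_union_of_disjoint hdisj]
  refine Finset.card_lt_card ⟨Finset.union_subset coveredVerts_inter_incidentVerts_subset
    Finset.inter_subset_right, fun h => ?_⟩
  rcases Finset.mem_union.1 (h hzatt) with hz | hz
  · exact hzinc (Finset.mem_inter.1 hz).2
  · exact hzR (Finset.mem_inter.1 hz).1

theorem IsEvenCover.exists_isRepresentative_forall_notMem (hG : G.Cubic)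
    (hC : IsBridgelessPiece C) (hF : IsEvenCover C F) (hV : ∃ v ∈ C, v ∉ boundaryVerts C) :
    ∃ ρ, IsRepresentative (F : Set G.E) ρ ∧ ∀ v ∈ coveredVerts C F, ρ v ∉ boundaryVerts C := by
  obtain ⟨ρ, hρ, hpref⟩ := exists_isRepresentative (F : Set G.E) (· ∉ boundaryVerts C)
  refine ⟨ρ, hρ, fun v hv => ?_⟩
  obtain ⟨w, hw⟩ := Finset.card_pos.1
    (two_pos.trans_le (hF.two_le_card_component_sdiff hG hC hV hv))
  exact hpref v w (mem_component.1 (Finset.mem_sdiff.1 hw).1) (Finset.mem_sdiff.1 hw).2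

theorem IsEvenCover.five_mul_card_add_le_of_lt (hG : G.Cubic) (hC : IsBridgelessPiece C)
    (hF : IsEvenCover C F) (hT : TriangleFreeOn C) (hV : ∃ v ∈ C, v ∉ boundaryVerts C)
    (hS : S ⊆ boundary C) {ρ : G.V → G.V} (hρ : IsRepresentative (F : Set G.E) ρ)
    (hρS : ∀ v ∈ coveredVerts C F, ρ v ∉ incidentVerts S) {U : Finset G.V} (hU : U.card ≤ 1)
    (hlt : (attachedVerts C F S).card + (missedVerts C F).card +
      3 * (missedVerts C F ∩ incidentVerts S).card <
        2 * (coveredVerts C F ∩ incidentVerts S).card) :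
    5 * (missedVerts C F).card + 5 * U.card + 5 * (oddReps C F ρ U).card ≤
      C.card + 3 * S.card := by
  have hmeet := hF.card_oddReps_inter_attachedVerts_lt hG hC hV hS hρ hρS U
    (Finset.card_pos.1 (by omega))
  set R := oddReps C F ρ U
  have hcard := hF.card_missedVerts_add_card_coveredVerts
  have hattached := card_attachedVerts_add_card_sdiff (C := C) (F := F) (S := S)
  have hScard := hF.card_eq_add_card hG hC hS
  have hR : R.card = (R \ attachedVerts C F S).card + (R ∩ attachedVerts C F S).card :=
    (Finset.card_sdiff_add_card_inter _ _).symm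
  have hfree := hF.five_mul_card_le hG.1 hT hρ (R := R \ attachedVerts C F S)
    Finset.sdiff_subset fun r hr => hF.component_subset_sdiff_attachedVerts (Finset.mem_sdiff.2
      ⟨(mem_oddReps.1 (Finset.mem_sdiff.1 hr).1).1, (Finset.mem_sdiff.1 hr).2⟩)
  omega

theorem IsEvenCover.coreColoring (hG : G.Cubic) (hC : IsBridgelessPiece C) (hF : IsEvenCover C F)
    (hT : TriangleFreeOn C) (hV : ∃ v ∈ C, v ∉ boundaryVerts C) (hS : S ⊆ boundary C) {e₀ : G.E}
    (he₀ : e₀ ∈ boundary C) (heS : e₀ ∉ S) {u₀ : G.V} (hu₀ : u₀ ∈ C) (heu : e₀ ∈ G.star u₀) :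
    CoreColoring C e₀ S (if u₀ ∈ coveredVerts C F then 1 else 0) := by
  by_cases hle : 2 * (coveredVerts C F ∩ incidentVerts S).card ≤ (attachedVerts C F S).card +
      (missedVerts C F).card + 3 * (missedVerts C F ∩ incidentVerts S).card
  · obtain ⟨v, hv, hvb⟩ := hV
    exact coreColoring_three_four hG hC hF hT ⟨v, hF.mem_coveredVerts_of_notMem hv hvb⟩ hS he₀ heS
      hu₀ heu rfl hle
  · obtain ⟨ρ, hρ, hρb⟩ := hF.exists_isRepresentative_forall_notMem hG hC hV
    have hρS : ∀ v ∈ coveredVerts C F, ρ v ∉ incidentVerts S := fun v hv h => hρb v hv <|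
      incidentVerts_subset_boundaryVerts hS <| Finset.mem_inter.2 ⟨component_subset hF.subset
        (mem_coveredVerts.1 hv).1 (mem_component.2 (hρ.reach v)), h⟩
    refine coreColoring_five_ten hG hC hF hρ hS he₀ heS hu₀ heu
      (U := if u₀ ∈ coveredVerts C F then {u₀} else ∅) ?_ <|
      hF.five_mul_card_add_le_of_lt hG hC hT hV hS hρ hρS (by split_ifs <;> simp) (not_le.1 hle)
    split_ifs with hcov
    · exact .inr ⟨rfl, rfl, fun h => hρb u₀ hcov
        (h.symm ▸ mem_boundaryVerts_of_mem he₀ hu₀ heu)⟩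
    · exact .inl ⟨rfl, rfl⟩

theorem IsBridgelessPiece.isEvenCover_innerEdges (hG : G.Cubic) (hC : IsBridgelessPiece C)
    (hall : ∀ v ∈ C, v ∈ boundaryVerts C) :
    IsEvenCover C (innerEdges C) ∧ coveredVerts C (innerEdges C) = C := by
  have h2 : ∀ v ∈ C, (innerEdges C ∩ G.star v).card = 2 := fun v hv => by
    have h3 := hG.card_innerEdges_inter_star_add hv
    have h1 := hC.card_star_inter_boundary_eq_one hG (hall v hv)
    omega
  exact ⟨⟨subset_rfl, fun v hv => .inr (h2 v hv), fun v hv _ => h2 v hv⟩,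
    Finset.filter_true_of_mem h2⟩

theorem IsBridgelessPiece.component_innerEdges_eq (hC : IsBridgelessPiece C) {v : G.V}
    (hv : v ∈ C) : component (innerEdges C : Set G.E) v = C := by
  by_contra hne
  have hcut := hC.two_le_card_cut _ (component_subset subset_rfl hv) ⟨v, self_mem_component⟩ hne
  obtain ⟨e, he⟩ := Finset.card_pos.1 (two_pos.trans_le hcut)
  obtain ⟨hb, hinner⟩ := Finset.mem_inter.1 he
  exact notMem_of_mem_boundary_component hb hinner

section AllBoundary

variable {e₀ : G.E}

theorem IsBridgelessPiece.coreColoring_zero (hG : G.Cubic) (hC : IsBridgelessPiece C)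
    (hT : TriangleFreeOn C) (hall : ∀ v ∈ C, v ∈ boundaryVerts C) (hS : S ⊆ boundary C)
    (he₀ : e₀ ∈ boundary C) (heS : e₀ ∉ S) : CoreColoring C e₀ S 0 := by
  obtain ⟨u₀, hu₀, w, -, hends⟩ := mem_boundary.1 he₀
  obtain ⟨hF, hcov⟩ := hC.isEvenCover_innerEdges hG hall
  obtain ⟨ρ, hρ, -⟩ := exists_isRepresentative (innerEdges C : Set G.E) fun _ => True
  refine coreColoring_five_ten hG hC hF hρ hS he₀ heS hu₀ ((mem_star_iff hends).2 (.inl rfl))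
    (.inl ⟨rfl, rfl⟩) ?_
  have hfive := hF.five_mul_card_le hG.1 hT hρ (U := ∅) (Q := C) subset_rfl fun r hr =>
    component_subset subset_rfl (mem_coveredVerts.1 (mem_oddReps.1 hr).1).1
  have hcard := hF.card_missedVerts_add_card_coveredVerts
  rw [hcov] at hcard
  rw [Finset.card_empty] at hfive ⊢
  omega

theorem IsBridgelessPiece.coreColoring_one_of_le (hG : G.Cubic) (hC : IsBridgelessPiece C)
    (hT : TriangleFreeOn C) (hall : ∀ v ∈ C, v ∈ boundaryVerts C) (hS : S ⊆ boundary C)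
    (he₀ : e₀ ∈ boundary C) (heS : e₀ ∉ S) (hle : 2 * S.card ≤ C.card) :
    CoreColoring C e₀ S 1 := by
  obtain ⟨u₀, hu₀, w, -, hends⟩ := mem_boundary.1 he₀
  obtain ⟨hF, hcov⟩ := hC.isEvenCover_innerEdges hG hall
  refine coreColoring_three_four hG hC hF hT (by rw [hcov]; exact ⟨u₀, hu₀⟩) hS he₀ heS hu₀
    ((mem_star_iff hends).2 (.inl rfl)) (by rw [hcov, if_pos hu₀]) ?_
  have hScard := hC.card_eq_card_inter_incidentVerts hG hS
  rw [hcov, ← hScard]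
  rcases (C ∩ incidentVerts S).eq_empty_or_nonempty with h | ⟨w, hw⟩
  · rw [h, Finset.card_empty] at hScard
    omega
  · obtain ⟨hwC, hwinc⟩ := Finset.mem_inter.1 hw
    have hatt : attachedVerts C (innerEdges C) S = C :=
      (Finset.filter_true_of_mem fun v hv => ⟨w, by
        rwa [hC.component_innerEdges_eq (mem_coveredVerts.1 hv).1], hwinc⟩).trans hcov
    rw [hatt]
    omega

theorem IsBridgelessPiece.card_lt_of_notMem (hG : G.Cubic) (hC : IsBridgelessPiece C)
    (hS : S ⊆ boundary C) (he₀ : e₀ ∈ boundary C) (heS : e₀ ∉ S) : S.card < C.card := by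
  rw [Nat.lt_iff_add_one_le, ← Finset.card_insert_of_notMem heS,
    hC.card_eq_card_inter_incidentVerts hG (Finset.insert_subset he₀ hS)]
  exact Finset.card_le_card Finset.inter_subset_left

theorem IsBridgelessPiece.oddReps_innerEdges_card_le (hC : IsBridgelessPiece C) {ρ : G.V → G.V}
    (hρ : IsRepresentative (innerEdges C : Set G.E) ρ) (U : Finset G.V) :
    (oddReps C (innerEdges C) ρ U).card ≤ 1 ∧
      ((oddReps C (innerEdges C) ρ U).Nonempty → Odd (C \ U).card) := by
  have hmem : ∀ r ∈ oddReps C (innerEdges C) ρ U, r ∈ C ∧ ρ r = r ∧ Odd (C \ U).card :=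
    fun r hr => by
      obtain ⟨hcov, hfix, hodd⟩ := mem_oddReps.1 hr
      have hrC := (mem_coveredVerts.1 hcov).1
      exact ⟨hrC, hfix, hC.component_innerEdges_eq hrC ▸ hodd⟩
  refine ⟨Finset.card_le_one.2 fun r hr r' hr' => ?_, fun ⟨r, hr⟩ => (hmem r hr).2.2⟩
  obtain ⟨hrC, hfix, -⟩ := hmem r hr
  obtain ⟨hrC', hfix', -⟩ := hmem r' hr'
  rw [← hfix, ← hfix']
  exact hρ.eq_of_reach _ _ (mem_component.1 (by rwa [hC.component_innerEdges_eq hrC]))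

theorem IsBridgelessPiece.coreColoring_one_of_lt (hG : G.Cubic) (hC : IsBridgelessPiece C)
    (hall : ∀ v ∈ C, v ∈ boundaryVerts C) (hS : S ⊆ boundary C)
    (he₀ : e₀ ∈ boundary C) (heS : e₀ ∉ S) (hlt : C.card < 2 * S.card) :
    CoreColoring C e₀ S 1 := by
  obtain ⟨u₀, hu₀, w, -, hends⟩ := mem_boundary.1 he₀
  obtain ⟨hF, hcov⟩ := hC.isEvenCover_innerEdges hG hall
  obtain ⟨ρ, hρ, hpref⟩ := exists_isRepresentative (innerEdges C : Set G.E) (· ≠ u₀)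
  have hρu : ρ u₀ ≠ u₀ := by
    obtain ⟨w, hw, hne⟩ := hC.nontrivial.exists_ne u₀
    exact hpref u₀ w (mem_component.1 (by rwa [hC.component_innerEdges_eq hu₀])) hne
  refine coreColoring_five_ten hG hC hF hρ hS he₀ heS hu₀ ((mem_star_iff hends).2 (.inl rfl))
    (.inr ⟨rfl, rfl, hρu⟩) ?_
  have hcard := hF.card_missedVerts_add_card_coveredVerts
  rw [hcov] at hcard
  have hlt' := hC.card_lt_of_notMem hG hS he₀ heS
  obtain ⟨hone, hodd⟩ := hC.oddReps_innerEdges_card_le hρ {u₀}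
  rw [Finset.card_sdiff_of_subset (Finset.singleton_subset_iff.2 hu₀),
    Finset.card_singleton] at hodd
  rw [Finset.card_singleton]
  rcases (oddReps C (innerEdges C) ρ {u₀}).eq_empty_or_nonempty with h | h
  · rw [h, Finset.card_empty]
    omega
  · obtain ⟨k, hk⟩ := hodd h
    omega

end AllBoundary

theorem IsBridgelessPiece.coreColoring (hG : G.Cubic) (hC : IsBridgelessPiece C)
    (hT : TriangleFreeOn C) (hS : S ⊆ boundary C) {e₀ : G.E} (he₀ : e₀ ∈ boundary C)
    (heS : e₀ ∉ S) {κ : Fin 15} (hκ : κ = 0 ∨ κ = 1) : CoreColoring C e₀ S κ := by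
  by_cases hV : ∃ v ∈ C, v ∉ boundaryVerts C
  · obtain ⟨u₀, hu₀, w, -, hends⟩ := mem_boundary.1 he₀
    have heu : e₀ ∈ G.star u₀ := (mem_star_iff hends).2 (.inl rfl)
    rcases hκ with rfl | rfl
    · obtain ⟨F, hF, h0⟩ :=
        hC.exists_isEvenCover_missing hG (mem_boundaryVerts_of_mem he₀ hu₀ heu)
      simpa only [mem_coveredVerts, h0, OfNat.zero_ne_ofNat, and_false, if_false] using
        hF.coreColoring hG hC hT hV hS he₀ heS hu₀ heu
    · obtain ⟨F, hF, h2⟩ := hC.exists_isEvenCover_through hG hu₀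
      simpa only [mem_coveredVerts, h2, hu₀, and_self, if_true] using
        hF.coreColoring hG hC hT hV hS he₀ heS hu₀ heu
  · push Not at hV
    rcases hκ with rfl | rfl
    · exact hC.coreColoring_zero hG hT hV hS he₀ heS
    · rcases le_or_gt (2 * S.card) C.card with hle | hlt
      · exact hC.coreColoring_one_of_le hG hT hV hS he₀ heS hle
      · exact hC.coreColoring_one_of_lt hG hV hS he₀ heS hlt

/-- Some colouring makes all vertices of `X` admissible and at most a fifth of them bad. -/
def IsColorable (X : Finset G.V) : Prop :=
  ∃ f : G.E → Fin 15, (∀ v ∈ X, Admissible f v) ∧ 5 * (badVerts f X).card ≤ X.card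

theorem IsBridgelessPiece.isColorable_of_boundary_eq_empty (hG : G.Cubic)
    (hC : IsBridgelessPiece C) (hT : TriangleFreeOn C) (h0 : boundary C = ∅) :
    IsColorable C := by
  obtain ⟨u, hu⟩ := hC.nontrivial.nonempty
  obtain ⟨F, hF, -⟩ := hC.exists_isEvenCover_through hG hu
  have hmissed : missedVerts C F = ∅ := Finset.filter_eq_empty_iff.2 fun v hv h => by
    have h2 := hF.card_eq_two v hv (by simp [mem_boundaryVerts, h0])
    omega
  obtain ⟨ρ, hρ, -⟩ := exists_isRepresentative (F : Set G.E) fun _ => True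
  obtain ⟨g, -, hadm, hbad⟩ :=
    exists_coloring_five_ten hG hC hF hρ (U := ∅) (Finset.empty_subset C) (by simp)
  have hfive := hF.five_mul_card_le hG.1 hT hρ (U := ∅) (Q := C) subset_rfl fun r hr =>
    component_subset hF.subset (mem_coveredVerts.1 (mem_oddReps.1 hr).1).1
  rw [hmissed] at hbad
  rw [Finset.card_empty] at hbad hfive
  exact ⟨g, hadm, by omega⟩

end CoreColouring

/-! ### Branches -/

section Branch

variable {G : Multigraph} {X C D Z : Finset G.V} {e₀ : G.E} {κ : Fin 15}

theorem Good.comp {f : G.E → Fin 15} {v : G.V} (h : Good f v) {σ : Fin 15 → Fin 15}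
    (hσ : ∀ s ∈ sylvesterStars, s.image σ ∈ sylvesterStars) : Good (σ ∘ f) v := by
  rw [Good, ← Finset.image_image]
  exact hσ _ h

theorem HasRepeat.comp {f : G.E → Fin 15} {v : G.V} (h : HasRepeat f v) (σ : Fin 15 → Fin 15) :
    HasRepeat (σ ∘ f) v := by
  obtain ⟨e, he, e', he', hne, h⟩ := h
  exact ⟨e, he, e', he', hne, congrArg σ h⟩

/-- The colour `κ` of the edge `e₀` leaving `X` extends to `X` with at most a fifth of the vertices
bad, up to the correction `endBlockExcess` if `X` has three vertices. -/
def BranchColoring (X : Finset G.V) (e₀ : G.E) (κ : Fin 15) : Prop :=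
  ∃ f : G.E → Fin 15, f e₀ = κ ∧ (∀ v ∈ X, Admissible f v) ∧
    5 * ((badVerts f X).card : ℤ) ≤ X.card + if X.card = 3 then endBlockExcess κ else 0

theorem BranchColoring.comp (h : BranchColoring X e₀ κ) {σ : Fin 15 → Fin 15}
    (hσ : ∀ s ∈ sylvesterStars, s.image σ ∈ sylvesterStars)
    (hκ : endBlockExcess (σ κ) = endBlockExcess κ) : BranchColoring X e₀ (σ κ) := by
  obtain ⟨f, hfκ, hadm, hbad⟩ := h
  refine ⟨σ ∘ f, congrArg σ hfκ, fun v hv => (hadm v hv).imp (·.comp hσ) (·.comp σ), ?_⟩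
  have hle : (badVerts (σ ∘ f) X).card ≤ (badVerts f X).card :=
    Finset.card_le_card (Finset.monotone_filter_right _ fun v _ hv hg => hv (hg.comp hσ))
  rw [hκ]
  omega

theorem image_mem_sylvesterStars {σ : Fin 15 → Fin 15}
    (h : {σ 0, σ 5, σ 10} ∈ sylvesterStars ∧ {σ 0, σ 1, σ 2} ∈ sylvesterStars ∧
      {σ 1, σ 3, σ 4} ∈ sylvesterStars ∧ {σ 2, σ 3, σ 4} ∈ sylvesterStars ∧
      {σ 5, σ 6, σ 7} ∈ sylvesterStars ∧ {σ 6, σ 8, σ 9} ∈ sylvesterStars ∧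
      {σ 7, σ 8, σ 9} ∈ sylvesterStars ∧ {σ 10, σ 11, σ 12} ∈ sylvesterStars ∧
      {σ 11, σ 13, σ 14} ∈ sylvesterStars ∧ {σ 12, σ 13, σ 14} ∈ sylvesterStars) :
    ∀ s ∈ sylvesterStars, s.image σ ∈ sylvesterStars := by
  intro s hs
  simp only [sylvesterStars, Finset.mem_insert, Finset.mem_singleton] at hs
  rcases hs with rfl | rfl | rfl | rfl | rfl | rfl | rfl | rfl | rfl | rfl <;>
    simp only [Finset.image_insert, Finset.image_singleton] <;> tauto

-- every other bridge colour is the image of `0` or `1` under an automorphism of the Sylvester graph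
theorem branchColoring_of_zero_of_one (h0 : BranchColoring X e₀ 0) (h1 : BranchColoring X e₀ 1)
    (hκ : κ ∈ bridgeColors) : BranchColoring X e₀ κ := by
  have hcases : κ = 0 ∨ κ = 1 ∨ κ = 2 ∨ κ = 5 ∨ κ = 10 := by simpa [bridgeColors] using hκ
  rcases hcases with rfl | rfl | rfl | rfl | rfl
  · exact h0
  · exact h1
  · exact h1.comp (σ := ![0, 2, 1, 3, 4, 5, 6, 7, 8, 9, 10, 11, 12, 13, 14])
      (image_mem_sylvesterStars (by decide)) (by decide)
  · exact h0.comp (σ := ![5, 6, 7, 8, 9, 0, 1, 2, 3, 4, 10, 11, 12, 13, 14])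
      (image_mem_sylvesterStars (by decide)) (by decide)
  · exact h0.comp (σ := ![10, 11, 12, 13, 14, 5, 6, 7, 8, 9, 0, 1, 2, 3, 4])
      (image_mem_sylvesterStars (by decide)) (by decide)

theorem Cubic.star_eq (hG : G.Cubic) {v : G.V} {s : Finset G.E} (h : s ⊆ G.star v)
    (hs : s.card = 3) : G.star v = s :=
  (Finset.eq_of_subset_of_card_le h (by rw [hs, hG.card_star])).symm

section EndBlock

variable {x : G.V}

theorem Loopless.mem_star_of_card_eq_three (hl : G.Loopless) (h3 : X.card = 3) (hx : x ∈ X)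
    {e : G.E} (he : e ∈ innerEdges X) (hex : e ∉ G.star x) {w : G.V} (hw : w ∈ X) (hwx : w ≠ x) :
    e ∈ G.star w := by
  obtain ⟨p, q, hpq, hends⟩ := hl.exists_ends e
  obtain ⟨hp, hq⟩ := (mem_innerEdges_iff hends).1 he
  rw [mem_star_iff hends] at hex ⊢
  push Not at hex
  have hpair : {p, q} = X.erase x := Finset.eq_of_subset_of_card_le
    (by simp [Finset.insert_subset_iff, hp, hq, hex.1.symm, hex.2.symm])
    (by rw [Finset.card_erase_of_mem hx, h3, Finset.card_pair hpq])
  have hmem : w ∈ ({p, q} : Finset G.V) := hpair ▸ Finset.mem_erase.2 ⟨hwx, hw⟩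
  simpa using hmem

theorem Cubic.exists_innerEdges_eq_of_card_eq_three (hG : G.Cubic) (hX : boundary X = {e₀})
    (h3 : X.card = 3) (hx : x ∈ X) (he₀x : e₀ ∈ G.star x) :
    ∃ e₁ e₂ e₃ e₄, [e₀, e₁, e₂, e₃, e₄].Nodup ∧ G.star x = {e₀, e₁, e₂} ∧
      innerEdges X = {e₁, e₂, e₃, e₄} := by
  have h4 : (innerEdges X).card = 4 := by
    have hcount := hG.three_mul_card X
    rw [h3, hX, Finset.card_singleton] at hcount
    omega
  obtain ⟨e₁, e₂, h12, hx12⟩ := Finset.card_eq_two.1 (show ((G.star x).erase e₀).card = 2 by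
    rw [Finset.card_erase_of_mem he₀x, hG.card_star])
  have hinner : {e₁, e₂} ⊆ innerEdges X := fun e he => by
    rw [← hx12, Finset.mem_erase] at he
    exact (hG.1.mem_innerEdges_or_mem_boundary hx he.2).resolve_right (by simp [hX, he.1])
  obtain ⟨e₃, e₄, h34, hrest⟩ := Finset.card_eq_two.1 (show (innerEdges X \ {e₁, e₂}).card = 2 by
    rw [Finset.card_sdiff_of_subset hinner, h4, Finset.card_pair h12])
  have hX4 : innerEdges X = {e₁, e₂, e₃, e₄} := by
    rw [← Finset.union_sdiff_of_subset hinner, hrest, Finset.insert_union,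
      Finset.singleton_union]
  have he₀ : e₀ ∉ innerEdges X :=
    Finset.disjoint_right.1 (disjoint_innerEdges_boundary X) (by simp [hX])
  refine ⟨e₁, e₂, e₃, e₄, ?_, by rw [← Finset.insert_erase he₀x, hx12], hX4⟩
  have h₃ : e₃ ∈ innerEdges X \ {e₁, e₂} := by simp [hrest]
  have h₄ : e₄ ∈ innerEdges X \ {e₁, e₂} := by simp [hrest]
  simp only [hX4, Finset.mem_sdiff, Finset.mem_insert, Finset.mem_singleton] at he₀ h₃ h₄
  simp only [List.nodup_cons, List.mem_cons, List.not_mem_nil, or_false, not_false_eq_true,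
    List.nodup_nil, and_true]
  tauto

theorem Cubic.exists_endBlock (hG : G.Cubic) (hX : boundary X = {e₀}) (h3 : X.card = 3) :
    ∃ (e : Fin 5 → G.E) (x w₁ w₂ : G.V), e.Injective ∧ e 0 = e₀ ∧ X = {x, w₁, w₂} ∧
      G.star x = {e 0, e 1, e 2} ∧ G.star w₁ = {e 1, e 3, e 4} ∧ G.star w₂ = {e 2, e 3, e 4} := by
  obtain ⟨x, hx, x', -, hends⟩ := mem_boundary.1 (show e₀ ∈ boundary X by simp [hX])
  obtain ⟨e₁, e₂, e₃, e₄, hnodup, hsx, hinner⟩ := hG.exists_innerEdges_eq_of_card_eq_three hX h3 hx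
    ((mem_star_iff hends).2 (.inl rfl))
  have hinj : (![e₀, e₁, e₂, e₃, e₄] : Fin 5 → G.E).Injective :=
    List.nodup_ofFn.1 (by simpa using hnodup)
  simp only [List.nodup_cons, List.mem_cons, List.not_mem_nil, or_false, not_or] at hnodup
  have hstar : ∀ e, e = e₁ ∨ e = e₂ → ∃ w ∈ X, w ≠ x ∧ G.star w = {e, e₃, e₄} := by
    intro e he
    obtain ⟨w, hxw, hew⟩ := hG.1.exists_ends_of_mem_star (show e ∈ G.star x by simp [hsx, he])
    have hwX : w ∈ X := ((mem_innerEdges_iff hew).1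
      (by rcases he with rfl | rfl <;> simp [hinner])).2
    refine ⟨w, hwX, hxw.symm, hG.star_eq ?_ (Finset.card_eq_three.2 ⟨e, e₃, e₄, ?_, ?_, ?_, rfl⟩)⟩
    · have hmem : ∀ e', e' = e₃ ∨ e' = e₄ → e' ∈ G.star w := fun e' he' =>
        hG.1.mem_star_of_card_eq_three h3 hx (by rcases he' with rfl | rfl <;> simp [hinner])
          (by rcases he' with rfl | rfl <;> simp [hsx] <;> tauto) hwX hxw.symm
      simp [Finset.insert_subset_iff, hmem, (mem_star_iff hew).2]
    all_goals rcases he with rfl | rfl <;> tauto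
  obtain ⟨w₁, hw₁, hne₁, hs₁⟩ := hstar e₁ (.inl rfl)
  obtain ⟨w₂, hw₂, hne₂, hs₂⟩ := hstar e₂ (.inr rfl)
  have hw : w₁ ≠ w₂ := by
    rintro rfl
    have : e₁ ∈ ({e₂, e₃, e₄} : Finset G.E) := by simp [← hs₂, hs₁]
    simp only [Finset.mem_insert, Finset.mem_singleton] at this
    tauto
  refine ⟨_, x, w₁, w₂, hinj, rfl, (Finset.eq_of_subset_of_card_le ?_ ?_).symm, hsx, hs₁, hs₂⟩
  · simp [Finset.insert_subset_iff, hx, hw₁, hw₂]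
  · rw [h3, Finset.card_eq_three.2 ⟨x, w₁, w₂, hne₁.symm, hne₂.symm, hw, rfl⟩]

theorem Cubic.branchColoring_of_card_eq_three (hG : G.Cubic) (hX : boundary X = {e₀})
    (h3 : X.card = 3) (hκ : κ ∈ bridgeColors) : BranchColoring X e₀ κ := by
  obtain ⟨e, x, w₁, w₂, hinj, rfl, hXeq, hsx, hs₁, hs₂⟩ := hG.exists_endBlock hX h3
  have hcolor : ∀ a : Fin 5 → Fin 15, ∃ f : G.E → Fin 15, ∀ i, f (e i) = a i := fun a =>
    ⟨Function.extend e a 0, hinj.extend_apply a 0⟩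
  refine branchColoring_of_zero_of_one ?_ ?_ hκ
  · obtain ⟨f, hf⟩ := hcolor ![0, 1, 2, 3, 4]
    have hgood : ∀ v ∈ X, Good f v := by
      simp only [hXeq, Finset.mem_insert, Finset.mem_singleton, forall_eq_or_imp, forall_eq]
      refine ⟨good_of_star_eq hsx ?_, good_of_star_eq hs₁ ?_, good_of_star_eq hs₂ ?_⟩ <;>
        simp only [hf] <;> decide
    have hbad : badVerts f X = ∅ := Finset.filter_eq_empty_iff.2 fun v hv => not_not.2 (hgood v hv)
    refine ⟨f, hf 0, fun v hv => .inl (hgood v hv), ?_⟩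
    have hexcess : endBlockExcess 0 = -3 := by decide
    rw [hbad, h3, if_pos rfl, hexcess, Finset.card_empty]
    rfl
  · obtain ⟨f, hf⟩ := hcolor ![1, 3, 4, 4, 1]
    have hgoodx : Good f x := good_of_star_eq hsx (by simp only [hf]; decide)
    have hgood₁ : Good f w₁ := good_of_star_eq hs₁ (by simp only [hf]; decide)
    have hrepeat₂ : HasRepeat f w₂ :=
      ⟨e 2, by simp [hs₂], e 3, by simp [hs₂], hinj.ne (by decide), by simp only [hf]; rfl⟩
    refine ⟨f, hf 0, ?_, ?_⟩
    · simp only [hXeq, Finset.mem_insert, Finset.mem_singleton, forall_eq_or_imp, forall_eq]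
      exact ⟨.inl hgoodx, .inl hgood₁, .inr hrepeat₂⟩
    · have hbad : badVerts f X ⊆ {w₂} := fun v hv => by
        obtain ⟨hvX, hnot⟩ := Finset.mem_filter.1 hv
        simp only [hXeq, Finset.mem_insert, Finset.mem_singleton] at hvX ⊢
        rcases hvX with rfl | rfl | rfl
        exacts [absurd hgoodx hnot, absurd hgood₁ hnot, rfl]
      have hle := Finset.card_le_card hbad
      rw [Finset.card_singleton] at hle
      have hexcess : endBlockExcess 1 = 2 := by decide
      rw [h3, if_pos rfl, hexcess]
      omega

end EndBlock

theorem boundary_inter_subset : boundary (C ∩ D) ⊆ boundary C ∪ boundary D := fun e he => by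
  obtain ⟨u, hu, w, hw, hends⟩ := mem_boundary.1 he
  rw [Finset.mem_union, mem_boundary_iff hends, mem_boundary_iff hends]
  simp only [Finset.mem_inter] at hu hw
  tauto

theorem boundary_sdiff_eq_empty (hZ : Z ⊆ X) (h : boundary Z = boundary X) :
    boundary (X \ Z) = ∅ := by
  refine Finset.eq_empty_of_forall_notMem fun e he => ?_
  obtain ⟨u, hu, w, hw, hends⟩ := mem_boundary.1 he
  have hiff : e ∈ boundary Z ↔ e ∈ boundary X := by rw [h]
  rw [mem_boundary_iff hends, mem_boundary_iff hends] at hiff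
  simp only [Finset.mem_sdiff] at hu hw
  have := @hZ u
  have := @hZ w
  tauto

theorem Loopless.boundary_sdiff_inter_innerEdges (hl : G.Loopless) :
    boundary (C \ D) ∩ innerEdges C = boundary D ∩ innerEdges C := by
  ext e
  obtain ⟨u, w, -, hends⟩ := hl.exists_ends e
  simp only [Finset.mem_inter, mem_innerEdges_iff hends, mem_boundary_iff hends, Finset.mem_sdiff]
  tauto

theorem exists_mem_boundary_of_reach {A : Set G.E} {u v : G.V} (h : G.Reach A u v)
    (hu : u ∈ D) (hv : v ∉ D) : ∃ e ∈ A, e ∈ boundary D ∧ e ∈ innerEdges (component A u) := by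
  induction h with
  | refl => exact absurd hu hv
  | @tail x y hx hxy ih =>
    by_cases hxD : x ∈ D
    · obtain ⟨e, he, hends⟩ := hxy
      exact ⟨e, he, (mem_boundary_iff hends).2 (.inl ⟨hxD, hv⟩),
        (mem_innerEdges_iff hends).2
          ⟨mem_component.2 hx, mem_component.2 (hx.tail ⟨e, he, hends⟩)⟩⟩
    · exact ih hxD

/-- `Y` is the part of `X` cut off from `C` by the bridge `e` at `C`. -/
structure IsBranch (X C : Finset G.V) (e : G.E) (Y : Finset G.V) : Prop where
  mem_boundary : e ∈ boundary C
  subset : Y ⊆ X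
  boundary_eq : boundary Y = {e}
  disjoint : Disjoint C Y

theorem IsBranch.notMem_boundary_inter {e e' : G.E} {Y Y' : Finset G.V} (h : IsBranch X C e Y)
    (h' : IsBranch X C e' Y') (hne : e ≠ e') : e ∉ boundary (Y ∩ Y') := fun he => by
  obtain ⟨c, hc, y, -, hends⟩ := Multigraph.mem_boundary.1 h.mem_boundary
  have hcY' := Finset.disjoint_left.1 h'.disjoint hc
  have hmem : e ∉ boundary Y' := by rwa [h'.boundary_eq, Finset.mem_singleton]
  rw [mem_boundary_iff hends] at he hmem
  simp only [Finset.mem_inter] at he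
  tauto

theorem IsBranch.disjoint_of_ne (hX : ∀ Z ⊆ X, Z.Nonempty → boundary Z ≠ ∅) {e e' : G.E}
    {Y Y' : Finset G.V} (h : IsBranch X C e Y) (h' : IsBranch X C e' Y') (hne : e ≠ e') :
    Disjoint Y Y' := by
  rw [Finset.disjoint_iff_inter_eq_empty, ← Finset.not_nonempty_iff_eq_empty]
  refine fun hinter => hX _ (Finset.inter_subset_left.trans h.subset) hinter
    (Finset.eq_empty_of_forall_notMem fun a ha => ?_)
  have hor := boundary_inter_subset ha
  rw [h.boundary_eq, h'.boundary_eq, Finset.mem_union, Finset.mem_singleton,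
    Finset.mem_singleton] at hor
  rcases hor with rfl | rfl
  · exact h.notMem_boundary_inter h' hne ha
  · exact h'.notMem_boundary_inter h hne.symm (Finset.inter_comm Y Y' ▸ ha)

theorem boundary_union_biUnion (hD : D ⊆ C) {T : Finset G.E} (hT : T ⊆ boundary D)
    {Y : G.E → Finset G.V} (hY : ∀ e ∈ T, IsBranch X C e (Y e)) :
    boundary (D ∪ T.biUnion Y) = boundary D \ T := by
  have hend : ∀ e ∈ T, ∀ u ∈ D, ∀ w, G.ends e = s(u, w) → w ∈ Y e := fun e he u hu w hends => by
    have hmem : e ∈ boundary (Y e) := by simp [(hY e he).boundary_eq]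
    rw [mem_boundary_iff hends] at hmem
    have := Finset.disjoint_left.1 (hY e he).disjoint (hD hu)
    tauto
  ext a
  rw [Finset.mem_sdiff]
  refine ⟨fun ha => ?_, fun ⟨ha, haT⟩ => ?_⟩
  · obtain ⟨u, hu, w, hw, hends⟩ := mem_boundary.1 ha
    simp only [Finset.mem_union, Finset.mem_biUnion, not_or, not_exists, not_and] at hu hw
    rcases hu with hu | ⟨e, he, hue⟩
    · exact ⟨(mem_boundary_iff hends).2 (.inl ⟨hu, hw.1⟩),
        fun haT => hw.2 a haT (hend a haT u hu w hends)⟩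
    · have hae : a ∈ boundary (Y e) := (mem_boundary_iff hends).2 (.inl ⟨hue, hw.2 e he⟩)
      rw [(hY e he).boundary_eq, Finset.mem_singleton] at hae
      subst hae
      have hmem := (mem_boundary_iff hends).1 (hT he)
      have := Finset.disjoint_right.1 (hY a he).disjoint hue
      have := @hD u
      tauto
  · obtain ⟨u, hu, w, hw, hends⟩ := mem_boundary.1 ha
    refine (mem_boundary_iff hends).2 (.inl ⟨Finset.mem_union_left _ hu, ?_⟩)
    simp only [Finset.mem_union, Finset.mem_biUnion, not_or, not_exists, not_and]
    refine ⟨hw, fun e he hwe => haT ?_⟩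
    have hae : a ∈ boundary (Y e) := (mem_boundary_iff hends).2
      (.inr ⟨hwe, Finset.disjoint_left.1 (hY e he).disjoint (hD hu)⟩)
    rw [(hY e he).boundary_eq, Finset.mem_singleton] at hae
    rwa [hae]

/-- `C` is the bridgeless part of the branch `X` which contains the end of `e₀`, and the `Y e` are
the branches at the other bridges `e` leaving `C`. -/
structure BranchCore (X : Finset G.V) (e₀ : G.E) (C : Finset G.V) (Y : G.E → Finset G.V) :
    Prop where
  subset : C ⊆ X
  mem : e₀ ∈ boundary C
  branch : ∀ e ∈ boundary C, e ≠ e₀ → IsBranch X C e (Y e)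
  cover : X ⊆ C ∪ ((boundary C).erase e₀).biUnion Y
  cut : ∀ D ⊆ C, D.Nonempty → D ≠ C → 2 ≤ (boundary D ∩ innerEdges C).card

/-- The edges inside `X` which are not bridges in the sense that no part of `X` is cut off by
them. -/
def coreEdges (X : Finset G.V) : Set G.E := {e | e ∈ innerEdges X ∧ ∀ Y ⊆ X, boundary Y ≠ {e}}

section Core

variable {v₀ w₀ : G.V}

theorem component_coreEdges_subset (hv₀ : v₀ ∈ X) : component (coreEdges X) v₀ ⊆ X := fun w hw => by
  rcases mem_component.1 hw with _ | ⟨-, e, he, hends⟩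
  · exact hv₀
  · exact ((mem_innerEdges_iff hends).1 he.1).2

theorem Loopless.exists_isBranch (hl : G.Loopless) (hX : boundary X = {e₀}) (hv₀ : v₀ ∈ X)
    (hw₀ : w₀ ∉ X) (hends : G.ends e₀ = s(v₀, w₀)) {e : G.E}
    (he : e ∈ boundary (component (coreEdges X) v₀)) (hne : e ≠ e₀) :
    ∃ Y, IsBranch X (component (coreEdges X) v₀) e Y := by
  obtain ⟨Y, hYX, hY⟩ : ∃ Y ⊆ X, boundary Y = {e} := by
    by_contra! hnot
    refine notMem_of_mem_boundary_component he ⟨?_, hnot⟩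
    obtain ⟨u, hu, w, -, heuw⟩ := mem_boundary.1 he
    refine (hl.mem_innerEdges_or_mem_boundary (component_coreEdges_subset hv₀ hu)
      ((mem_star_iff heuw).2 (.inl rfl))).resolve_right ?_
    rwa [hX, Finset.mem_singleton]
  have hv₀Y : v₀ ∉ Y := fun h => hne.symm <| Finset.mem_singleton.1 <|
    hY ▸ (mem_boundary_iff hends).2 (.inl ⟨h, fun h' => hw₀ (hYX h')⟩)
  refine ⟨Y, he, hYX, hY, Finset.disjoint_left.2 fun c hc hcY => ?_⟩
  obtain ⟨a, ha, hab, -⟩ := exists_mem_boundary_of_reach (mem_component.1 hc).symm hcY hv₀Y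
  rw [hY, Finset.mem_singleton] at hab
  exact ha.2 Y hYX (hab ▸ hY)

theorem Loopless.two_le_card_cut_component_coreEdges (hl : G.Loopless) (hv₀ : v₀ ∈ X)
    (hw₀ : w₀ ∉ X) (hends : G.ends e₀ = s(v₀, w₀)) {Y : G.E → Finset G.V}
    (hY : ∀ e ∈ boundary (component (coreEdges X) v₀), e ≠ e₀ →
      IsBranch X (component (coreEdges X) v₀) e (Y e))
    (hD : D ⊆ component (coreEdges X) v₀) (hne : D.Nonempty) (hv₀D : v₀ ∉ D) :
    2 ≤ (boundary D ∩ innerEdges (component (coreEdges X) v₀)).card := by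
  set C := component (coreEdges X) v₀ with hC
  obtain ⟨d, hd⟩ := hne
  have hreach : G.Reach (coreEdges X) d v₀ := (mem_component.1 (hD hd)).symm
  obtain ⟨a, ha, hab, hai⟩ := exists_mem_boundary_of_reach hreach hd hv₀D
  rw [component_eq_of_reach hreach, ← hC] at hai
  have hT : ∀ e ∈ boundary D \ innerEdges C, IsBranch X C e (Y e) := by
    intro e he
    obtain ⟨heD, hei⟩ := Finset.mem_sdiff.1 he
    obtain ⟨u, hu, w, -, heuw⟩ := mem_boundary.1 heD
    refine hY e ((hl.mem_innerEdges_or_mem_boundary (hD hu)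
      ((mem_star_iff heuw).2 (.inl rfl))).resolve_left hei) ?_
    rintro rfl
    have hw₀D : w₀ ∉ D := fun h => hw₀ (component_coreEdges_subset hv₀ (hD h))
    rw [mem_boundary_iff hends] at heD
    tauto
  -- otherwise `D` and the branches attached to it are cut off by the edge `a`
  by_contra! hlt
  refine ha.2 (D ∪ (boundary D \ innerEdges C).biUnion Y) (Finset.union_subset
    (hD.trans (component_coreEdges_subset hv₀))
    (Finset.biUnion_subset.2 fun e he => (hT e he).subset)) ?_
  rw [boundary_union_biUnion hD Finset.sdiff_subset hT, sdiff_sdiff_right_self]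
  exact Finset.eq_singleton_iff_unique_mem.2 ⟨Finset.mem_inter.2 ⟨hab, hai⟩, fun b hb =>
    Finset.card_le_one.1 (Nat.lt_succ_iff.1 hlt) b hb a (Finset.mem_inter.2 ⟨hab, hai⟩)⟩

end Core

theorem Loopless.exists_branchCore (hl : G.Loopless) (hX : boundary X = {e₀})
    (hconn : ∀ Z ⊆ X, Z.Nonempty → boundary Z ≠ ∅) : ∃ C Y, BranchCore X e₀ C Y := by
  obtain ⟨v₀, hv₀, w₀, hw₀, hends⟩ := mem_boundary.1 (show e₀ ∈ boundary X by simp [hX])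
  set C := component (coreEdges X) v₀
  have hCX : C ⊆ X := component_coreEdges_subset hv₀
  have he₀ : e₀ ∈ boundary C :=
    (mem_boundary_iff hends).2 (.inl ⟨self_mem_component, fun h => hw₀ (hCX h)⟩)
  choose! Y hY using fun e he hne => hl.exists_isBranch hX hv₀ hw₀ hends (e := e) he hne
  refine ⟨C, Y, hCX, he₀, hY, ?_, fun D hD hne hDC => ?_⟩
  · have hbranch : ∀ e ∈ (boundary C).erase e₀, IsBranch X C e (Y e) := fun e he =>
      hY e (Finset.mem_erase.1 he).2 (Finset.mem_erase.1 he).1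
    have hbd := boundary_union_biUnion subset_rfl (Finset.erase_subset e₀ (boundary C)) hbranch
    rw [Finset.sdiff_erase_self he₀, ← hX] at hbd
    have hempty := boundary_sdiff_eq_empty (Finset.union_subset hCX
      (Finset.biUnion_subset.2 fun e he => (hbranch e he).subset)) hbd
    by_contra hnot
    exact hconn _ Finset.sdiff_subset (Finset.sdiff_nonempty.2 hnot) hempty
  · by_cases hv₀D : v₀ ∈ D
    · rw [← hl.boundary_sdiff_inter_innerEdges]
      exact hl.two_le_card_cut_component_coreEdges hv₀ hw₀ hends hY Finset.sdiff_subset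
        (Finset.sdiff_nonempty.2 fun h => hDC (hD.antisymm h)) (by simp [hv₀D])
    · exact hl.two_le_card_cut_component_coreEdges hv₀ hw₀ hends hY hD hne hv₀D

end Branch

/-! ### Gluing branches along bridges -/

section Gluing

variable {G : Multigraph} {X Y C D : Finset G.V} {e₀ : G.E} {κ : Fin 15}

theorem Loopless.mem_boundary_of_mem_star (hl : G.Loopless) {u v : G.V} {e : G.E} (hu : u ∈ X)
    (hv : v ∉ X) (heu : e ∈ G.star u) (hev : e ∈ G.star v) : e ∈ boundary X := by
  obtain ⟨w, -, hends⟩ := hl.exists_ends_of_mem_star heu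
  rcases (mem_star_iff hends).1 hev with rfl | rfl
  · exact absurd hu hv
  · exact (mem_boundary_iff hends).2 (.inl ⟨hu, hv⟩)

theorem Loopless.exists_glue (hl : G.Loopless) {ι : Type*} {P : ι → Finset G.V}
    (hdisj : Pairwise fun i j => Disjoint (P i) (P j)) {f : ι → G.E → Fin 15}
    (hagree : ∀ i j, i ≠ j → ∀ e ∈ boundary (P i), e ∈ boundary (P j) → f i e = f j e) :
    ∃ g : G.E → Fin 15, ∀ i, ∀ v ∈ P i, ∀ e ∈ G.star v, f i e = g e := by
  refine ⟨fun e => if he : ∃ i, ∃ u ∈ P i, e ∈ G.star u then f he.choose e else 0, ?_⟩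
  intro i v hv e he
  have hex : ∃ i, ∃ u ∈ P i, e ∈ G.star u := ⟨i, v, hv, he⟩
  obtain ⟨u, hu, heu⟩ := hex.choose_spec
  refine Eq.trans ?_ (dif_pos hex).symm
  by_cases hi : i = hex.choose
  · rw [← hi]
  · have huv := hdisj hi
    exact hagree _ _ hi e
      (hl.mem_boundary_of_mem_star hv (Finset.disjoint_right.1 huv hu) he heu)
      (hl.mem_boundary_of_mem_star hu (Finset.disjoint_left.1 huv hv) heu he)

theorem card_badVerts_le_sum {ι : Type*} [Fintype ι] {P : ι → Finset G.V}
    (hcover : X ⊆ Finset.univ.biUnion P) {f : ι → G.E → Fin 15} {g : G.E → Fin 15}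
    (hg : ∀ i, ∀ v ∈ P i, ∀ e ∈ G.star v, f i e = g e) :
    (badVerts g X).card ≤ ∑ i, (badVerts (f i) (P i)).card := by
  refine (Finset.card_le_card fun v hv => ?_).trans Finset.card_biUnion_le
  obtain ⟨hvX, hbad⟩ := Finset.mem_filter.1 hv
  obtain ⟨i, -, hvi⟩ := Finset.mem_biUnion.1 (hcover hvX)
  rw [Finset.mem_biUnion]
  refine ⟨i, Finset.mem_univ i, ?_⟩
  rw [badVerts_congr (hg i)]
  exact Finset.mem_filter.2 ⟨hvi, hbad⟩

/-- No triangle can be contracted to a vertex of a loopless cubic graph. -/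
def NoContractibleTriangle (G : Multigraph) : Prop :=
  ∀ x y z e₁ e₂ e₃, G.IsTriangle e₁ e₂ e₃ x y z → (innerEdges {x, y, z}).card ≠ 3

theorem IsTriangle.subset_innerEdges {x y z : G.V} {e₁ e₂ e₃ : G.E}
    (h : G.IsTriangle e₁ e₂ e₃ x y z) : {e₁, e₂, e₃} ⊆ innerEdges {x, y, z} := by
  obtain ⟨-, -, -, h₁, h₂, h₃⟩ := h
  simp [Finset.insert_subset_iff, mem_innerEdges_iff h₁, mem_innerEdges_iff h₂,
    mem_innerEdges_iff h₃]

theorem IsTriangle.edges_ne {x y z : G.V} {e₁ e₂ e₃ : G.E}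
    (h : G.IsTriangle e₁ e₂ e₃ x y z) : e₁ ≠ e₂ ∧ e₁ ≠ e₃ ∧ e₂ ≠ e₃ := by
  obtain ⟨hxy, hyz, hxz, h₁, h₂, h₃⟩ := h
  refine ⟨?_, ?_, ?_⟩ <;> rintro rfl <;> grind [Sym2.eq_iff]

theorem IsTriangle.card_verts {x y z : G.V} {e₁ e₂ e₃ : G.E} (h : G.IsTriangle e₁ e₂ e₃ x y z) :
    ({x, y, z} : Finset G.V).card = 3 :=
  Finset.card_eq_three.2 ⟨x, y, z, h.1, h.2.2.1, h.2.1, rfl⟩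

theorem IsTriangle.card_edges {x y z : G.V} {e₁ e₂ e₃ : G.E} (h : G.IsTriangle e₁ e₂ e₃ x y z) :
    ({e₁, e₂, e₃} : Finset G.E).card = 3 :=
  Finset.card_eq_three.2 ⟨e₁, e₂, e₃, h.edges_ne.1, h.edges_ne.2.1, h.edges_ne.2.2, rfl⟩

theorem IsBridgelessPiece.triangleFreeOn (hC : IsBridgelessPiece C) (hG : G.Cubic)
    (ht : G.NoContractibleTriangle) (hcard : C.card = 3 → (boundary C).card ≠ 1) :
    TriangleFreeOn C := by
  intro x hx y hy z hz e₁ e₂ e₃ h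
  have hcount := hG.three_mul_card {x, y, z}
  have hinner := Finset.card_le_card h.subset_innerEdges
  have hne := ht x y z e₁ e₂ e₃ h
  rw [h.card_edges] at hinner
  rw [h.card_verts] at hcount
  have heq : ({x, y, z} : Finset G.V) = C := by
    by_contra hne
    have hcut := hC.two_le_card_cut {x, y, z} (by simp [Finset.insert_subset_iff, hx, hy, hz])
      (by simp) hne
    have hle := Finset.card_le_card
      (Finset.inter_subset_left (s₁ := boundary {x, y, z}) (s₂ := innerEdges C))
    omega
  rw [← heq] at hcard
  exact hcard h.card_verts (by omega)

theorem Loopless.boundary_singleton (hl : G.Loopless) (v : G.V) : boundary {v} = G.star v := by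
  ext e
  constructor
  · intro he
    obtain ⟨u, hu, w, -, hends⟩ := mem_boundary.1 he
    exact (mem_star_iff hends).2 (.inl (Finset.mem_singleton.1 hu).symm)
  · intro he
    obtain ⟨w, hw, hends⟩ := hl.exists_ends_of_mem_star he
    exact (mem_boundary_iff hends).2 (.inl ⟨by simp, by simpa using hw.symm⟩)

theorem coreColoring_singleton_of_mem_sylvesterStars {v : G.V} {e₁ e₂ : G.E} {S : Finset G.E}
    {a b : Fin 15} (hs : G.star v = {e₀, e₁, e₂}) (h01 : e₁ ≠ e₀) (h02 : e₂ ≠ e₀) (h12 : e₁ ≠ e₂)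
    (hS : S ⊆ {e₁, e₂}) (hcolors : {κ, a, b} ⊆ bridgeColors) (hstar : {κ, a, b} ∈ sylvesterStars)
    (hcost : (if e₁ ∈ S then endBlockExcess a else 0) + (if e₂ ∈ S then endBlockExcess b else 0)
      ≤ 1) : CoreColoring {v} e₀ S κ := by
  simp only [Finset.insert_subset_iff, Finset.singleton_subset_iff] at hcolors
  set g : G.E → Fin 15 := fun e => if e = e₀ then κ else if e = e₁ then a else b with hg
  have hg₁ : g e₁ = a := by simp [hg, h01]
  have hg₂ : g e₂ = b := by simp [hg, h02, h12.symm]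
  have hgood : Good g v := good_of_star_eq hs (by rw [hg₁, hg₂]; simpa [hg] using hstar)
  refine ⟨g, by simp [hg], fun e _ => ?_, by simpa using .inl hgood, ?_⟩
  · simp only [hg]
    split_ifs
    exacts [hcolors.1, hcolors.2.1, hcolors.2.2]
  · have hbad : badVerts g {v} = ∅ := Finset.filter_eq_empty_iff.2 (by simpa using hgood)
    rw [← Finset.inter_eq_right.2 hS, ← Finset.sum_ite_mem, Finset.sum_pair h12, hbad, hg₁, hg₂]
    simpa using hcost

theorem Cubic.coreColoring_singleton (hG : G.Cubic) {v : G.V} {S : Finset G.E}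
    (hS : S ⊆ boundary {v}) (he₀ : e₀ ∈ boundary {v}) (heS : e₀ ∉ S) (hκ : κ = 0 ∨ κ = 1) :
    CoreColoring {v} e₀ S κ := by
  rw [hG.1.boundary_singleton] at hS he₀
  obtain ⟨e₁, e₂, h12, hrest⟩ := Finset.card_eq_two.1 (show ((G.star v).erase e₀).card = 2 by
    rw [Finset.card_erase_of_mem he₀, hG.card_star])
  have hs : G.star v = {e₀, e₁, e₂} := by rw [← Finset.insert_erase he₀, hrest]
  have h01 : e₁ ≠ e₀ := Finset.ne_of_mem_erase (s := G.star v) (by simp [hrest])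
  have h02 : e₂ ≠ e₀ := Finset.ne_of_mem_erase (s := G.star v) (by simp [hrest])
  have hS' : S ⊆ {e₁, e₂} := hrest ▸ Finset.subset_erase.2 ⟨hS, heS⟩
  have hexcess0 : endBlockExcess 0 = -3 := by decide
  have hexcess2 : endBlockExcess 2 = 2 := by decide
  have hexcess5 : endBlockExcess 5 = -3 := by decide
  have hexcess10 : endBlockExcess 10 = -3 := by decide
  rcases hκ with rfl | rfl
  · refine coreColoring_singleton_of_mem_sylvesterStars (a := 5) (b := 10) hs h01 h02 h12 hS'
      (by decide) (by decide) ?_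
    rw [hexcess5, hexcess10]
    split_ifs <;> norm_num
  · by_cases h₁ : e₁ ∈ S
    · refine coreColoring_singleton_of_mem_sylvesterStars (a := 0) (b := 2) hs h01 h02 h12 hS'
        (by decide) (by decide) ?_
      rw [hexcess0, hexcess2, if_pos h₁]
      split_ifs <;> norm_num
    · refine coreColoring_singleton_of_mem_sylvesterStars (a := 2) (b := 0) hs h01 h02 h12 hS'
        (by decide) (by decide) ?_
      rw [hexcess0, if_neg h₁]
      split_ifs <;> norm_num

namespace BranchCore

variable {Y : G.E → Finset G.V}

theorem isBranch (hB : BranchCore X e₀ C Y) {e : G.E} (he : e ∈ (boundary C).erase e₀) :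
    IsBranch X C e (Y e) :=
  hB.branch e (Finset.mem_of_mem_erase he) (Finset.ne_of_mem_erase he)

/-- The parts of the branch `X`: its core `C` and the branches `Y e` at `C`. -/
def part (C : Finset G.V) (e₀ : G.E) (Y : G.E → Finset G.V) :
    Option {e // e ∈ (boundary C).erase e₀} → Finset G.V
  | none => C
  | some e => Y e

theorem disjoint_part (hB : BranchCore X e₀ C Y)
    (hconn : ∀ Z ⊆ X, Z.Nonempty → boundary Z ≠ ∅) :
    Pairwise fun i j => Disjoint (part C e₀ Y i) (part C e₀ Y j) := by
  rintro (_ | ⟨e, he⟩) (_ | ⟨e', he'⟩) hne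
  · exact absurd rfl hne
  · exact (hB.isBranch he').disjoint
  · exact (hB.isBranch he).disjoint.symm
  · exact (hB.isBranch he).disjoint_of_ne hconn (hB.isBranch he') fun h => hne (by subst h; rfl)

theorem part_subset (hB : BranchCore X e₀ C Y) :
    ∀ i, part C e₀ Y i ⊆ X
  | none => hB.subset
  | some e => (hB.isBranch e.2).subset

theorem subset_biUnion_part (hB : BranchCore X e₀ C Y) :
    X ⊆ Finset.univ.biUnion (part C e₀ Y) := fun v hv => by
  rcases Finset.mem_union.1 (hB.cover hv) with hvC | hvY
  · exact Finset.mem_biUnion.2 ⟨none, Finset.mem_univ _, hvC⟩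
  · obtain ⟨e, he, hve⟩ := Finset.mem_biUnion.1 hvY
    exact Finset.mem_biUnion.2 ⟨some ⟨e, he⟩, Finset.mem_univ _, hve⟩

theorem exists_glue (hB : BranchCore X e₀ C Y) (hl : G.Loopless)
    (hconn : ∀ Z ⊆ X, Z.Nonempty → boundary Z ≠ ∅) {g : G.E → Fin 15} {F : G.E → G.E → Fin 15}
    (hF : ∀ e ∈ (boundary C).erase e₀, F e e = g e) :
    ∃ f : G.E → Fin 15, (∀ v ∈ C, ∀ a ∈ G.star v, g a = f a) ∧
      (∀ e ∈ (boundary C).erase e₀, ∀ v ∈ Y e, ∀ a ∈ G.star v, F e a = f a) ∧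
      (badVerts f X).card ≤
        (badVerts g C).card + ∑ e ∈ (boundary C).erase e₀, (badVerts (F e) (Y e)).card := by
  have hbridge : ∀ e ∈ (boundary C).erase e₀, ∀ a, a ∈ boundary (Y e) → a = e := fun e he a ha =>
    Finset.mem_singleton.1 ((hB.isBranch he).boundary_eq ▸ ha)
  obtain ⟨f, hf⟩ := hl.exists_glue (hB.disjoint_part hconn)
    (f := fun i => i.elim g fun e => F e) (by
      rintro (_ | ⟨e, he⟩) (_ | ⟨e', he'⟩) hne a ha ha'
      · exact absurd rfl hne
      · obtain rfl := hbridge e' he' a ha'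
        exact (hF a he').symm
      · obtain rfl := hbridge e he a ha
        exact hF a he
      · obtain rfl := hbridge e he a ha
        obtain rfl := hbridge e' he' a ha'
        rfl)
  refine ⟨f, hf none, fun e he => hf (some ⟨e, he⟩), ?_⟩
  have hle := card_badVerts_le_sum hB.subset_biUnion_part hf
  rw [Fintype.sum_option] at hle
  exact hle.trans_eq (congrArg _ (Finset.sum_coe_sort _ fun e => (badVerts (F e) (Y e)).card))

theorem card_add_sum_card_le (hB : BranchCore X e₀ C Y)
    (hconn : ∀ Z ⊆ X, Z.Nonempty → boundary Z ≠ ∅) :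
    C.card + ∑ e ∈ (boundary C).erase e₀, (Y e).card ≤ X.card := by
  have hcard := Finset.card_biUnion (s := Finset.univ) (t := part C e₀ Y)
    fun i _ j _ hij => hB.disjoint_part hconn hij
  rw [Fintype.sum_option] at hcard
  have hsum := Finset.sum_coe_sort ((boundary C).erase e₀) fun e => (Y e).card
  have hle := Finset.card_le_card (Finset.biUnion_subset.2 fun i (_ : i ∈ Finset.univ) =>
    hB.part_subset i)
  rw [hcard] at hle
  rw [← hsum]
  exact hle

theorem exists_coloring (hB : BranchCore X e₀ C Y) (hl : G.Loopless)
    (hconn : ∀ Z ⊆ X, Z.Nonempty → boundary Z ≠ ∅)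
    (hY : ∀ e ∈ (boundary C).erase e₀, ∀ κ ∈ bridgeColors, BranchColoring (Y e) e κ)
    (h : CoreColoring C e₀ (((boundary C).erase e₀).filter fun e => (Y e).card = 3) κ) :
    ∃ f : G.E → Fin 15, f e₀ = κ ∧ (∀ v ∈ X, Admissible f v) ∧
      5 * ((badVerts f X).card : ℤ) ≤ X.card := by
  obtain ⟨g, hg₀, hgb, hgC, hcost⟩ := h
  choose! F hF₀ hFadm hFbad using fun e (he : e ∈ (boundary C).erase e₀) =>
    hY e he (g e) (hgb e (Finset.mem_of_mem_erase he))
  obtain ⟨f, hfC, hfY, hbad⟩ := hB.exists_glue hl hconn hF₀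
  refine ⟨f, ?_, fun v hv => ?_, ?_⟩
  · obtain ⟨u, hu, w, -, hends⟩ := mem_boundary.1 hB.mem
    rw [← hfC u hu e₀ ((mem_star_iff hends).2 (.inl rfl)), hg₀]
  · rcases Finset.mem_union.1 (hB.cover hv) with hvC | hvY
    · exact (hgC v hvC).congr (hfC v hvC)
    · obtain ⟨e, he, hve⟩ := Finset.mem_biUnion.1 hvY
      exact (hFadm e he v hve).congr (hfY e he v hve)
  · have hcard := hB.card_add_sum_card_le hconn
    have hsum := Finset.sum_le_sum hFbad
    rw [← Finset.mul_sum, Finset.sum_add_distrib, ← Finset.sum_filter] at hsum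
    zify at hbad hcard
    linarith

end BranchCore

theorem BranchCore.coreColoring (hG : G.Cubic) (ht : G.NoContractibleTriangle)
    {Y : G.E → Finset G.V} (hB : BranchCore X e₀ C Y) (h3 : X.card ≠ 3) {S : Finset G.E}
    (hS : S ⊆ boundary C) (heS : e₀ ∉ S) (hκ : κ = 0 ∨ κ = 1) : CoreColoring C e₀ S κ := by
  by_cases hsingle : ∃ v, C = {v}
  · obtain ⟨v, rfl⟩ := hsingle
    exact hG.coreColoring_singleton hS hB.mem heS hκ
  obtain ⟨u, hu, -⟩ := mem_boundary.1 hB.mem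
  have hC : IsBridgelessPiece C :=
    ⟨((Finset.nonempty_def.2 ⟨u, hu⟩).exists_eq_singleton_or_nontrivial).resolve_left hsingle,
      hB.cut⟩
  refine hC.coreColoring hG (hC.triangleFreeOn hG ht fun hC3 hone => h3 ?_) hS hB.mem heS hκ
  -- a core with the only boundary edge `e₀` is all of `X`
  have herase : (boundary C).erase e₀ = ∅ := by
    rw [← Finset.card_eq_zero, Finset.card_erase_of_mem hB.mem, hone]
  have hcover := hB.cover
  rw [herase, Finset.biUnion_empty, Finset.union_empty] at hcover
  rw [hcover.antisymm hB.subset, hC3]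

theorem Cubic.branchColoring (hG : G.Cubic) (ht : G.NoContractibleTriangle)
    (hX : boundary X = {e₀}) (hconn : ∀ Z ⊆ X, Z.Nonempty → boundary Z ≠ ∅)
    (hκ : κ ∈ bridgeColors) : BranchColoring X e₀ κ := by
  induction X using Finset.strongInduction generalizing e₀ κ with
  | H X ih =>
  by_cases h3 : X.card = 3
  · exact hG.branchColoring_of_card_eq_three hX h3 hκ
  obtain ⟨C, Y, hB⟩ := hG.1.exists_branchCore hX hconn
  obtain ⟨u, hu, -⟩ := mem_boundary.1 hB.mem
  have hY : ∀ e ∈ (boundary C).erase e₀, ∀ κ ∈ bridgeColors, BranchColoring (Y e) e κ := by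
    intro e he κ hκ
    have hYe := hB.isBranch he
    have hss : Y e ⊂ X :=
      ⟨hYe.subset, fun h => Finset.disjoint_left.1 hYe.disjoint hu (h (hB.subset hu))⟩
    exact ih (Y e) hss hYe.boundary_eq (fun Z hZ => hconn Z (hZ.trans hYe.subset)) hκ
  have hcore : ∀ κ, κ = 0 ∨ κ = 1 → BranchColoring X e₀ κ := fun κ hκ => by
    rw [BranchColoring, if_neg h3, add_zero]
    exact hB.exists_coloring hG.1 hconn hY (hB.coreColoring hG ht h3
      ((Finset.filter_subset _ _).trans (Finset.erase_subset _ _)) (by simp) hκ)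
  exact branchColoring_of_zero_of_one (hcore 0 (.inl rfl)) (hcore 1 (.inr rfl)) hκ

theorem Loopless.boundary_sdiff (hl : G.Loopless) (hX : boundary X = ∅) (hYX : Y ⊆ X) :
    boundary (X \ Y) = boundary Y := by
  ext e
  obtain ⟨u, v, -, hends⟩ := hl.exists_ends e
  have he : e ∉ boundary X := by simp [hX]
  rw [mem_boundary_iff hends] at he ⊢
  rw [mem_boundary_iff hends, Finset.mem_sdiff, Finset.mem_sdiff]
  have := @hYX u
  have := @hYX v
  tauto

theorem Loopless.isColorable_of_sdiff (hl : G.Loopless) (hYX : Y ⊆ X) {f f' : G.E → Fin 15}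
    (hf : ∀ v ∈ Y, Admissible f v) (hf' : ∀ v ∈ X \ Y, Admissible f' v)
    (hb : 5 * (badVerts f Y).card ≤ Y.card) (hb' : 5 * (badVerts f' (X \ Y)).card ≤ (X \ Y).card)
    (hagree : ∀ e ∈ boundary Y, f e = f' e) : IsColorable X := by
  obtain ⟨g, hg⟩ := hl.exists_glue (P := fun i : Bool => if i then Y else X \ Y)
    (f := fun i => if i then f else f')
    (by
      rintro (_ | _) (_ | _) hne
      exacts [absurd rfl hne, Finset.sdiff_disjoint, Finset.disjoint_sdiff, absurd rfl hne])
    (by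
      rintro (_ | _) (_ | _) - e he he'
      exacts [rfl, (hagree e he').symm, hagree e he, rfl])
  have hbad := card_badVerts_le_sum (X := X) (fun v hv => by
    by_cases hvY : v ∈ Y <;> simp [hv, hvY]) hg
  rw [Fintype.sum_bool] at hbad
  refine ⟨g, fun v hv => ?_, ?_⟩
  · by_cases hvY : v ∈ Y
    · exact (hf v hvY).congr (hg true v hvY)
    · have hv' := Finset.mem_sdiff.2 ⟨hv, hvY⟩
      exact (hf' v hv').congr (hg false v hv')
  · have hcard := Finset.card_sdiff_add_card_eq_card hYX
    simp only [if_true, Bool.false_eq_true, if_false] at hbad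
    omega

theorem Cubic.isColorable_of_isBridge (hG : G.Cubic) (ht : G.NoContractibleTriangle)
    (hX : boundary X = ∅) (hconn : ∀ Z ⊆ X, Z.Nonempty → Z ≠ X → boundary Z ≠ ∅) (hYX : Y ⊆ X)
    {e : G.E} (hY : boundary Y = {e}) : IsColorable X := by
  have hside : ∀ Z ⊆ X, boundary Z = {e} → ∃ f : G.E → Fin 15, f e = 0 ∧
      (∀ v ∈ Z, Admissible f v) ∧ 5 * (badVerts f Z).card ≤ Z.card := by
    intro Z hZ hZe
    have hZX : Z ≠ X := by
      rintro rfl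
      simp [hX] at hZe
    obtain ⟨f, hfe, hadm, hbad⟩ : BranchColoring Z e 0 := hG.branchColoring ht hZe
      (fun W hW hne => hconn W (hW.trans hZ) hne fun h => hZX (hZ.antisymm (h ▸ hW))) (by decide)
    have hexcess : endBlockExcess 0 = -3 := by decide
    exact ⟨f, hfe, hadm, by split_ifs at hbad <;> omega⟩
  obtain ⟨f, hfe, hadm, hbad⟩ := hside Y hYX hY
  obtain ⟨f', hfe', hadm', hbad'⟩ :=
    hside (X \ Y) Finset.sdiff_subset (by rw [hG.1.boundary_sdiff hX hYX, hY])
  exact hG.1.isColorable_of_sdiff hYX hadm hadm' hbad hbad' (by simp [hY, hfe, hfe'])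

theorem Cubic.isColorable_of_noContractibleTriangle (hG : G.Cubic)
    (ht : G.NoContractibleTriangle) (hX : boundary X = ∅) : IsColorable X := by
  induction X using Finset.strongInduction with
  | H X ih =>
  by_cases hsplit : ∃ Y ⊆ X, Y.Nonempty ∧ Y ≠ X ∧ boundary Y = ∅
  · obtain ⟨Y, hYX, hne, hYX', hY⟩ := hsplit
    obtain ⟨f, hf, hfb⟩ := ih Y (hYX.ssubset_of_ne hYX') hY
    obtain ⟨f', hf', hfb'⟩ := ih (X \ Y) (Finset.sdiff_ssubset hYX hne)
      (by rw [hG.1.boundary_sdiff hX hYX, hY])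
    exact hG.1.isColorable_of_sdiff hYX hf hf' hfb hfb' (by simp [hY])
  push Not at hsplit
  by_cases hbridge : ∃ Y ⊆ X, ∃ e, boundary Y = {e}
  · obtain ⟨Y, hYX, e, hY⟩ := hbridge
    exact hG.isColorable_of_isBridge ht hX (fun Z hZ hne hZX => (hsplit Z hZ hne hZX).ne_empty)
      hYX hY
  push Not at hbridge
  rcases X.eq_empty_or_nonempty with rfl | hne
  · exact ⟨0, by simp, by simp [badVerts]⟩
  have hnontrivial : X.Nontrivial := hne.exists_eq_singleton_or_nontrivial.resolve_left <| by
    rintro ⟨v, rfl⟩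
    have hthree := hG.card_star v
    rw [← hG.1.boundary_singleton, hX] at hthree
    simp at hthree
  have hpiece : IsBridgelessPiece X := by
    refine ⟨hnontrivial, fun D hD hDne hDX => ?_⟩
    have hinner : boundary D ⊆ innerEdges X := fun e he => by
      obtain ⟨u, hu, w, -, hends⟩ := mem_boundary.1 he
      exact (hG.1.mem_innerEdges_or_mem_boundary (hD hu)
        ((mem_star_iff hends).2 (.inl rfl))).resolve_right (by simp [hX])
    have hpos := Finset.card_pos.2 (hsplit D hD hDne hDX)
    have hone : (boundary D).card ≠ 1 := fun h =>
      let ⟨e, he⟩ := Finset.card_eq_one.1 h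
      hbridge D hD e he
    rw [Finset.inter_eq_left.2 hinner]
    omega
  exact hpiece.isColorable_of_boundary_eq_empty hG
    (hpiece.triangleFreeOn hG ht (by simp [hX])) hX

end Gluing

/-! ### Contracting triangles -/

section Contraction

variable {G : Multigraph} {X : Finset G.V}

section Triangle

variable {x y z : G.V} {e₁ e₂ e₃ a b c : G.E} {f₀ : G.E → Fin 15}

theorem Cubic.exists_star_eq_insert (hG : G.Cubic) {v : G.V} {e e' : G.E} (h : e ∈ G.star v)
    (h' : e' ∈ G.star v) (hne : e ≠ e') : ∃ a, a ≠ e ∧ a ≠ e' ∧ G.star v = {a, e, e'} := by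
  have hs : {e, e'} ⊆ G.star v := by simp [Finset.insert_subset_iff, h, h']
  obtain ⟨a, ha⟩ := Finset.card_eq_one.1 (show (G.star v \ {e, e'}).card = 1 by
    rw [Finset.card_sdiff_of_subset hs, hG.card_star, Finset.card_pair hne])
  have hmem : a ∈ G.star v \ {e, e'} := by simp [ha]
  simp only [Finset.mem_sdiff, Finset.mem_insert, Finset.mem_singleton, not_or] at hmem
  refine ⟨a, hmem.2.1, hmem.2.2, ?_⟩
  rw [← Finset.sdiff_union_of_subset hs, ha, Finset.singleton_union]

theorem Loopless.boundary_eq_biUnion_star_sdiff (hl : G.Loopless) :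
    boundary X = X.biUnion G.star \ innerEdges X := by
  ext e
  obtain ⟨u, v, -, hends⟩ := hl.exists_ends e
  simp only [Finset.mem_sdiff, Finset.mem_biUnion, mem_star_iff hends, mem_boundary_iff hends,
    mem_innerEdges_iff hends, and_or_left, exists_or, exists_eq_right]
  tauto

theorem IsTriangle.rotate (h : G.IsTriangle e₁ e₂ e₃ x y z) : G.IsTriangle e₂ e₃ e₁ y z x := by
  obtain ⟨hxy, hyz, hxz, h₁, h₂, h₃⟩ := h
  exact ⟨hyz, hxz.symm, hxy.symm, h₂, h₃.trans Sym2.eq_swap, h₁.trans Sym2.eq_swap⟩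

theorem IsTriangle.exists_star_eq (h : G.IsTriangle e₁ e₂ e₃ x y z) (hG : G.Cubic) :
    ∃ a ∉ ({e₁, e₂, e₃} : Finset G.E), G.star x = {a, e₁, e₃} := by
  obtain ⟨hxy, -, hxz, h₁, h₂, h₃⟩ := id h
  obtain ⟨a, ha₁, ha₃, hs⟩ := hG.exists_star_eq_insert ((mem_star_iff h₁).2 (.inl rfl))
    ((mem_star_iff h₃).2 (.inl rfl)) h.edges_ne.2.1
  have ha₂ : a ≠ e₂ := by
    rintro rfl
    rcases (mem_star_iff h₂).1 (show a ∈ G.star x by simp [hs]) with h | h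
    exacts [hxy h, hxz h]
  exact ⟨a, by simp [ha₁, ha₂, ha₃], hs⟩

/-- `x y z` is a triangle with edges `e₁ = xy`, `e₂ = yz`, `e₃ = zx`, no further edges inside, and
the edges `a`, `b`, `c` leaving it at `x`, `y`, `z`. -/
structure TriangleStars (x y z : G.V) (e₁ e₂ e₃ a b c : G.E) : Prop where
  isTriangle : G.IsTriangle e₁ e₂ e₃ x y z
  innerEdges_eq : innerEdges {x, y, z} = {e₁, e₂, e₃}
  boundary_eq : boundary {x, y, z} = {a, b, c}
  star_left : G.star x = {a, e₁, e₃}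
  star_mid : G.star y = {b, e₂, e₁}
  star_right : G.star z = {c, e₃, e₂}

theorem IsTriangle.exists_triangleStars (h : G.IsTriangle e₁ e₂ e₃ x y z) (hG : G.Cubic)
    (h3 : (innerEdges {x, y, z}).card = 3) : ∃ a b c, TriangleStars x y z e₁ e₂ e₃ a b c := by
  have hinner : innerEdges {x, y, z} = {e₁, e₂, e₃} :=
    (Finset.eq_of_subset_of_card_le h.subset_innerEdges (by rw [h3, h.card_edges])).symm
  obtain ⟨a, ha, hx⟩ := h.exists_star_eq hG
  obtain ⟨b, hb, hy⟩ := h.rotate.exists_star_eq hG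
  obtain ⟨c, hc, hz⟩ := h.rotate.rotate.exists_star_eq hG
  refine ⟨a, b, c, h, hinner, ?_, hx, hy, hz⟩
  simp only [Finset.mem_insert, Finset.mem_singleton, not_or] at ha hb hc
  ext e
  rw [hG.1.boundary_eq_biUnion_star_sdiff, hinner]
  simp only [Finset.biUnion_insert, Finset.singleton_biUnion, hx, hy, hz, Finset.mem_sdiff,
    Finset.mem_union, Finset.mem_insert, Finset.mem_singleton]
  grind

namespace TriangleStars

theorem rotate (T : TriangleStars x y z e₁ e₂ e₃ a b c) :
    TriangleStars y z x e₂ e₃ e₁ b c a := by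
  have hverts : ({y, z, x} : Finset G.V) = {x, y, z} := by ext; simp; tauto
  have hedges : ({e₂, e₃, e₁} : Finset G.E) = {e₁, e₂, e₃} := by ext; simp; tauto
  have hthird : ({b, c, a} : Finset G.E) = {a, b, c} := by ext; simp; tauto
  exact ⟨T.isTriangle.rotate, by rw [hverts, hedges, T.innerEdges_eq],
    by rw [hverts, hthird, T.boundary_eq], T.star_mid, T.star_right, T.star_left⟩

theorem exists_coloring (T : TriangleStars x y z e₁ e₂ e₃ a b c) (f₀ : G.E → Fin 15)
    (s₁ s₂ s₃ : Fin 15) : ∃ f : G.E → Fin 15, (∀ e ∉ innerEdges {x, y, z}, f e = f₀ e) ∧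
      f e₁ = s₁ ∧ f e₂ = s₂ ∧ f e₃ = s₃ ∧ f a = f₀ a ∧ f b = f₀ b ∧ f c = f₀ c := by
  obtain ⟨h12, h13, h23⟩ := T.isTriangle.edges_ne
  set f := fun e => if e = e₁ then s₁ else if e = e₂ then s₂ else if e = e₃ then s₃ else f₀ e
  have hf : ∀ e ∉ innerEdges {x, y, z}, f e = f₀ e := fun e he => by
    rw [T.innerEdges_eq] at he
    simp only [Finset.mem_insert, Finset.mem_singleton, not_or] at he
    simp [f, he]
  have hthird : ∀ e ∈ boundary {x, y, z}, f e = f₀ e := fun e he =>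
    hf e (Finset.disjoint_right.1 (disjoint_innerEdges_boundary _) he)
  rw [T.boundary_eq] at hthird
  exact ⟨f, hf, by simp [f], by simp [f, h12.symm], by simp [f, h13.symm, h23.symm],
    hthird a (by simp), hthird b (by simp), hthird c (by simp)⟩

theorem exists_good_coloring (T : TriangleStars x y z e₁ e₂ e₃ a b c)
    (hgood : (boundary {x, y, z}).image f₀ ∈ sylvesterStars) :
    ∃ f : G.E → Fin 15, (∀ e ∉ innerEdges {x, y, z}, f e = f₀ e) ∧
      ∀ u ∈ ({x, y, z} : Finset G.V), Good f u := by
  -- each edge of the triangle takes the colour of the edge leaving the opposite vertex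
  obtain ⟨f, hf, h₁, h₂, h₃, ha, hb, hc⟩ := T.exists_coloring f₀ (f₀ c) (f₀ a) (f₀ b)
  refine ⟨f, hf, ?_⟩
  rw [T.boundary_eq, Finset.image_insert, Finset.image_insert, Finset.image_singleton] at hgood
  simp only [Finset.mem_insert, Finset.mem_singleton, forall_eq_or_imp, forall_eq]
  refine ⟨good_of_star_eq T.star_left ?_, good_of_star_eq T.star_mid ?_,
    good_of_star_eq T.star_right ?_⟩
  · rwa [ha, h₁, h₃, Finset.pair_comm]
  · rwa [hb, h₁, h₂, Finset.insert_comm]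
  · rwa [hc, h₃, h₂, Finset.pair_comm, Finset.insert_comm, Finset.pair_comm (f₀ c)]

theorem exists_coloring_of_eq (T : TriangleStars x y z e₁ e₂ e₃ a b c) (hab : f₀ a = f₀ b) :
    ∃ f : G.E → Fin 15, (∀ e ∉ innerEdges {x, y, z}, f e = f₀ e) ∧
      (∀ u ∈ ({x, y, z} : Finset G.V), Admissible f u) ∧ (badVerts f {x, y, z}).card ≤ 1 := by
  obtain ⟨s, t, hst⟩ : ∃ s t, {f₀ a, s, t} ∈ sylvesterStars := by
    generalize f₀ a = p
    revert p
    decide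
  obtain ⟨f, hf, h₁, h₂, h₃, ha, hb, -⟩ := T.exists_coloring f₀ s t t
  have hx : Good f x := good_of_star_eq T.star_left (by rwa [ha, h₁, h₃])
  have hy : Good f y := good_of_star_eq T.star_mid (by rwa [hb, h₁, h₂, ← hab, Finset.pair_comm])
  have hz : HasRepeat f z := ⟨e₂, by simp [T.star_right], e₃, by simp [T.star_right],
    T.isTriangle.edges_ne.2.2, h₂.trans h₃.symm⟩
  have hbad : badVerts f {x, y, z} ⊆ {z} := by
    simpa [badVerts, Finset.filter_insert, hx, hy] using em _
  refine ⟨f, hf, ?_, Finset.card_le_card hbad⟩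
  simp only [Finset.mem_insert, Finset.mem_singleton, forall_eq_or_imp, forall_eq]
  exact ⟨.inl hx, .inl hy, .inr hz⟩

end TriangleStars

/-- Every colouring which is admissible at the vertex obtained by contracting `X` extends to `X`
with at most one bad vertex, and with none if that vertex is good. -/
def IsReducible (X : Finset G.V) : Prop :=
  ∀ f₀ : G.E → Fin 15, (boundary X).image f₀ ∈ sylvesterStars ∨ ¬ Set.InjOn f₀ (boundary X) →
    ∃ f : G.E → Fin 15, (∀ e ∉ innerEdges X, f e = f₀ e) ∧ (∀ u ∈ X, Admissible f u) ∧
      ((boundary X).image f₀ ∈ sylvesterStars → ∀ u ∈ X, Good f u) ∧ (badVerts f X).card ≤ 1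

theorem TriangleStars.isReducible (T : TriangleStars x y z e₁ e₂ e₃ a b c) :
    IsReducible {x, y, z} := by
  intro f₀ hf₀
  by_cases hgood : (boundary {x, y, z}).image f₀ ∈ sylvesterStars
  · obtain ⟨f, hf, hg⟩ := T.exists_good_coloring hgood
    have hbad : badVerts f {x, y, z} = ∅ :=
      Finset.filter_eq_empty_iff.2 fun v hv => not_not.2 (hg v hv)
    exact ⟨f, hf, fun u hu => .inl (hg u hu), fun _ => hg, by simp [hbad]⟩
  · have hverts : ({y, z, x} : Finset G.V) = {x, y, z} := by ext; simp; tauto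
    have hverts' : ({z, x, y} : Finset G.V) = {x, y, z} := by ext; simp; tauto
    have hrepeat : f₀ a = f₀ b ∨ f₀ b = f₀ c ∨ f₀ c = f₀ a := by
      have hnot := hf₀.resolve_left hgood
      rw [T.boundary_eq] at hnot
      contrapose! hnot
      simp only [Finset.coe_insert, Finset.coe_singleton, Set.InjOn, Set.mem_insert_iff,
        Set.mem_singleton_iff]
      grind
    obtain ⟨f, hf, hadm, hbad⟩ : ∃ f : G.E → Fin 15, (∀ e ∉ innerEdges {x, y, z}, f e = f₀ e) ∧
        (∀ u ∈ ({x, y, z} : Finset G.V), Admissible f u) ∧ (badVerts f {x, y, z}).card ≤ 1 := by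
      rcases hrepeat with hab | hbc | hca
      exacts [T.exists_coloring_of_eq hab, hverts ▸ T.rotate.exists_coloring_of_eq hbc,
        hverts' ▸ T.rotate.rotate.exists_coloring_of_eq hca]
    exact ⟨f, hf, hadm, fun h => absurd h hgood, hbad⟩

end Triangle

section Contract

/-- The multigraph obtained by contracting `X` to the single vertex `none`. The edges inside `X`
disappear. -/
noncomputable def contract (X : Finset G.V) : Multigraph where
  V := Option {v // v ∉ X}
  E := {e // e ∉ innerEdges X}
  ends e := (G.ends e).map fun v => if h : v ∈ X then none else some ⟨v, h⟩

/-- The projection of the vertices of `G` onto those of the contraction of `X`. -/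
noncomputable def contractVert (X : Finset G.V) (v : G.V) : (contract X).V :=
  if h : v ∈ X then none else some ⟨v, h⟩

/-- The edges of the contraction of `X` as edges of `G`. -/
def edgeVal (X : Finset G.V) (e : (contract X).E) : G.E := e.1

theorem edgeVal_injective : (edgeVal X).Injective := fun _ _ h => Subtype.ext h

theorem edgeVal_notMem (e : (contract X).E) : edgeVal X e ∉ innerEdges X := e.2

theorem contractVert_surjective (hX : X.Nonempty) : (contractVert X).Surjective := by
  rintro (_ | ⟨v, hv⟩)
  exacts [hX.imp fun _ hx => dif_pos hx, ⟨v, dif_neg hv⟩]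

theorem contractVert_eq_contractVert {u v : G.V} :
    contractVert X u = contractVert X v ↔ u = v ∨ u ∈ X ∧ v ∈ X := by
  unfold contractVert
  split_ifs <;> grind

theorem contract_ends {e : (contract X).E} {u v : G.V} (h : G.ends (edgeVal X e) = s(u, v)) :
    (contract X).ends e = s(contractVert X u, contractVert X v) := by
  change (G.ends (edgeVal X e)).map (contractVert X) = _
  rw [h, Sym2.map_mk]

theorem Loopless.contract (hl : G.Loopless) : (contract X).Loopless := by
  intro e
  obtain ⟨u, v, huv, hends⟩ := hl.exists_ends (edgeVal X e)
  have he := edgeVal_notMem e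
  rw [mem_innerEdges_iff hends] at he
  rw [contract_ends hends, Sym2.mk_isDiag_iff, contractVert_eq_contractVert]
  tauto

theorem Loopless.mem_image_star_contract (hl : G.Loopless) {u : (Multigraph.contract X).V}
    {e : G.E} :
    e ∈ ((Multigraph.contract X).star u).image (edgeVal X) ↔
      e ∉ innerEdges X ∧ ∃ v, contractVert X v = u ∧ e ∈ G.star v := by
  obtain ⟨p, q, -, hends⟩ := hl.exists_ends e
  rw [Finset.mem_image]
  constructor
  · rintro ⟨e, he, rfl⟩
    refine ⟨edgeVal_notMem e, ?_⟩
    rcases (mem_star_iff (contract_ends hends)).1 he with rfl | rfl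
    exacts [⟨p, rfl, (mem_star_iff hends).2 (.inl rfl)⟩,
      ⟨q, rfl, (mem_star_iff hends).2 (.inr rfl)⟩]
  · rintro ⟨he, v, rfl, hv⟩
    refine ⟨⟨e, he⟩, (mem_star_iff (contract_ends (e := ⟨e, he⟩) hends)).2 ?_, rfl⟩
    exact ((mem_star_iff hends).1 hv).imp (congrArg _) (congrArg _)

theorem Loopless.image_star_contract_of_mem (hl : G.Loopless) {v : G.V} (hv : v ∈ X) :
    ((Multigraph.contract X).star (contractVert X v)).image (edgeVal X) = boundary X := by
  ext e
  rw [hl.mem_image_star_contract, hl.boundary_eq_biUnion_star_sdiff, Finset.mem_sdiff,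
    Finset.mem_biUnion, and_comm]
  refine and_congr_left' (exists_congr fun u => and_congr_left' ?_)
  rw [contractVert_eq_contractVert]
  grind

theorem Loopless.image_star_contract_of_notMem (hl : G.Loopless) {v : G.V} (hv : v ∉ X) :
    ((Multigraph.contract X).star (contractVert X v)).image (edgeVal X) = G.star v := by
  ext e
  simp only [hl.mem_image_star_contract, contractVert_eq_contractVert, hv, and_false, or_false,
    exists_eq_left, and_iff_right_iff_imp]
  intro he h
  exact hv ((mem_innerEdges.1 h) v (mem_star.1 he))

theorem Cubic.contract (hG : G.Cubic) (h3 : (boundary X).card = 3) : (contract X).Cubic := by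
  obtain ⟨x, hx⟩ : X.Nonempty := by
    obtain ⟨e, he⟩ := Finset.card_pos.1 (by omega : 0 < (boundary X).card)
    obtain ⟨x, hx, -⟩ := mem_boundary.1 he
    exact ⟨x, hx⟩
  refine hG.1.contract.cubic fun u => ?_
  obtain ⟨v, rfl⟩ := contractVert_surjective ⟨x, hx⟩ u
  rw [← Finset.card_image_of_injective _ edgeVal_injective]
  by_cases hv : v ∈ X
  · rw [hG.1.image_star_contract_of_mem hv, h3]
  · rw [hG.1.image_star_contract_of_notMem hv, hG.card_star]

theorem hasRepeat_iff_not_injOn {f : G.E → Fin 15} {v : G.V} :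
    HasRepeat f v ↔ ¬ Set.InjOn f (G.star v) := by
  simp only [HasRepeat, Set.InjOn, Finset.mem_coe]
  grind

theorem admissible_comp_edgeVal_iff {f : G.E → Fin 15} {u : (contract X).V} :
    Admissible (f ∘ edgeVal X) u ↔
      (((contract X).star u).image (edgeVal X)).image f ∈ sylvesterStars ∨
        ¬ Set.InjOn f (((contract X).star u).image (edgeVal X)) := by
  rw [Admissible, Good, hasRepeat_iff_not_injOn, Finset.image_image, Finset.coe_image,
    edgeVal_injective.injOn.comp_iff]

theorem good_comp_edgeVal_iff {f : G.E → Fin 15} {u : (contract X).V} :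
    Good (f ∘ edgeVal X) u ↔
      (((contract X).star u).image (edgeVal X)).image f ∈ sylvesterStars := by
  rw [Good, Finset.image_image]

theorem Loopless.card_badVerts_le_contract (hl : G.Loopless) {f : G.E → Fin 15}
    (hgood : (boundary X).image f ∈ sylvesterStars → ∀ u ∈ X, Good f u)
    (hone : (badVerts f X).card ≤ 1) :
    (badVerts f Finset.univ).card ≤
      (badVerts (f ∘ edgeVal X) (Finset.univ : Finset (Multigraph.contract X).V)).card := by
  refine Finset.card_le_card_of_injOn (contractVert X) (fun v hv => ?_) fun u hu v hv huv => ?_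
  · simp only [badVerts, Finset.coe_filter, Finset.mem_univ, true_and, Set.mem_ofPred_eq] at hv ⊢
    rw [good_comp_edgeVal_iff]
    by_cases hvX : v ∈ X
    · rw [hl.image_star_contract_of_mem hvX]
      exact fun h => hv (hgood h v hvX)
    · rwa [hl.image_star_contract_of_notMem hvX]
  · simp only [badVerts, Finset.coe_filter, Finset.mem_univ, true_and, Set.mem_ofPred_eq] at hu hv
    rcases contractVert_eq_contractVert.1 huv with h | ⟨huX, hvX⟩
    exacts [h, Finset.card_le_one.1 hone u (Finset.mem_filter.2 ⟨huX, hu⟩) v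
      (Finset.mem_filter.2 ⟨hvX, hv⟩)]

theorem IsReducible.isColorable_univ (hred : IsReducible X) (hl : G.Loopless) (hX : X.Nonempty)
    (hc : IsColorable (Finset.univ : Finset (contract X).V)) :
    IsColorable (Finset.univ : Finset G.V) := by
  obtain ⟨f', hadm', hbad'⟩ := hc
  obtain ⟨f₀, rfl⟩ : ∃ f₀ : G.E → Fin 15, f₀ ∘ edgeVal X = f' :=
    ⟨_, Function.extend_comp edgeVal_injective f' 0⟩
  obtain ⟨x, hx⟩ := id hX
  have hadmX := hadm' (contractVert X x) (Finset.mem_univ _)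
  rw [admissible_comp_edgeVal_iff, hl.image_star_contract_of_mem hx] at hadmX
  obtain ⟨f, hf, hadm, hgood, hone⟩ := hred f₀ hadmX
  have himage : (boundary X).image f = (boundary X).image f₀ := Finset.image_congr fun e he =>
    hf e (Finset.disjoint_right.1 (disjoint_innerEdges_boundary X) he)
  have hcomp : f₀ ∘ edgeVal X = f ∘ edgeVal X :=
    funext fun e => (hf _ (edgeVal_notMem e)).symm
  rw [hcomp] at hadm' hbad'
  refine ⟨f, fun v _ => ?_, ?_⟩
  · by_cases hv : v ∈ X
    · exact hadm v hv
    · have hadmv := hadm' (contractVert X v) (Finset.mem_univ _)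
      rwa [admissible_comp_edgeVal_iff, hl.image_star_contract_of_notMem hv,
        ← hasRepeat_iff_not_injOn] at hadmv
  · have hbad := hl.card_badVerts_le_contract (himage ▸ hgood) hone
    have hcard := Fintype.card_le_of_surjective _ (contractVert_surjective hX)
    rw [Finset.card_univ] at hbad' ⊢
    omega

end Contract

theorem Cubic.isColorable_univ (hG : G.Cubic) : IsColorable (Finset.univ : Finset G.V) := by
  induction hn : Fintype.card G.V using Nat.strong_induction_on generalizing G with
  | _ n ih =>
  by_cases ht : G.NoContractibleTriangle
  · exact hG.isColorable_of_noContractibleTriangle ht boundary_univ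
  rw [NoContractibleTriangle] at ht
  push Not at ht
  obtain ⟨x, y, z, e₁, e₂, e₃, h, h3⟩ := ht
  have hcut := hG.three_mul_card {x, y, z}
  rw [h.card_verts, h3] at hcut
  obtain ⟨a, b, c, T⟩ := h.exists_triangleStars hG h3
  have hX : ({x, y, z} : Finset G.V).Nonempty := Finset.insert_nonempty _ _
  have hlt : Fintype.card (Multigraph.contract ({x, y, z} : Finset G.V)).V < n :=
    hn ▸ Fintype.card_lt_of_surjective_not_injective _ (contractVert_surjective hX)
      fun hinj => h.1 (hinj (contractVert_eq_contractVert.2 (.inr (by simp))))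
  exact T.isReducible.isColorable_univ hG.1 hX (ih _ hlt (hG.contract (by omega)) rfl)

theorem exists_eq_star_of_mem_sylvesterStars :
    ∀ s ∈ sylvesterStars, ∃ y, s = SylvesterS.star y := by
  simp only [sylvesterStars, Finset.mem_insert, Finset.mem_singleton, forall_eq_or_imp, forall_eq]
  exact ⟨⟨(0 : Fin 10), rfl⟩, ⟨(1 : Fin 10), rfl⟩, ⟨(2 : Fin 10), rfl⟩, ⟨(3 : Fin 10), rfl⟩,
    ⟨(4 : Fin 10), rfl⟩, ⟨(5 : Fin 10), rfl⟩, ⟨(6 : Fin 10), rfl⟩, ⟨(7 : Fin 10), rfl⟩,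
    ⟨(8 : Fin 10), rfl⟩, ⟨(9 : Fin 10), rfl⟩⟩

end Contraction

end Multigraph

/-- every cubic graph G has a map f : E(G) → E(S) with
|V(f)| ≥ (4/5)|V(G)|, and every vertex outside V(f) has two distinct incident
edges of the same color. -/
theorem four_fifths_sylvester_coloring (G : Multigraph) (hG : G.Cubic) :
    ∃ f : G.E → SylvesterS.E,
      4 * Fintype.card G.V ≤ 5 * (Multigraph.colVerts G SylvesterS f).ncard ∧
      ∀ v : G.V, v ∉ Multigraph.colVerts G SylvesterS f →
        ∃ e ∈ G.star v, ∃ e' ∈ G.star v, e ≠ e' ∧ f e = f e' := by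
  obtain ⟨f, hadm, hbad⟩ := hG.isColorable_univ
  have hcol : ∀ v, Multigraph.Good f v → v ∈ Multigraph.colVerts G SylvesterS f :=
    fun v => Multigraph.exists_eq_star_of_mem_sylvesterStars _
  refine ⟨f, ?_, fun v hv => (hadm v (Finset.mem_univ v)).resolve_left fun h => hv (hcol v h)⟩
  have hgood : (Finset.univ.filter (Multigraph.Good f)).card ≤
      (Multigraph.colVerts G SylvesterS f).ncard := by
    rw [← Set.ncard_coe_finset]
    exact Set.ncard_le_ncard fun v hv => hcol v (by simpa using hv)
  have hsum := Finset.card_filter_add_card_filter_not (s := Finset.univ) (Multigraph.Good f)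
  rw [Multigraph.badVerts] at hbad
  rw [Finset.card_univ] at hbad hsum
  omega
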